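/- There exist absolute constants c > 0 and C > 0 such that for every integer N ≥ 3 and every set A of prime numbers with A ⊆ {1,…,N}, if A contains no non-trivial three-term arithmetic progression, then |A| ≤ C·π(N)/(log N)^c, where π(N) denotes the number of primes at most N. -/

import Mathlib

/-!
Kelley and Meka's density increment shows that a progression-free `A ⊆ {1, …, N}` has
`|A| ≤ 6 N exp (-c (log N) ^ (1 / 18))`, which is eventually smaller than `N / (log N) ^ B` for
every `B`, whereas `π(N)` is of order at least `N / log N` by Chebyshev.

If `A` is progression-free and has density `α` on a Bohr set `B`, the correlations of `A` with a
dense set of possible midpoints deviate from their mean, so that some moment of order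
`O (log (1 / α))` of the difference convolution of `A` is large on a smaller Bohr set. Sifting turns
this into two sets of density `exp (-O (log (1 / α)) ^ 2)` whose differences are mostly popular.
By Croot–Sisask almost periodicity and Chang's lemma that remains true after averaging over a
Bohr set with `O (log (1 / α)) ^ 8` further frequencies, on a translate of which `A` therefore has
density at least `101 / 100 * α`. This can happen only `O (log (1 / α))` times.
-/

open Finset
open scoped BigOperators Pointwise ComplexConjugate

namespace KelleyMeka

section NormOneSub

variable {G : Type*} [AddCommGroup G] [Finite G]

lemma norm_one_sub_apply_sub (ψ : AddChar G ℂ) (x y : G) : ‖1 - ψ (x - y)‖ = ‖ψ x - ψ y‖ := by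
  have h : ψ x - ψ y = (ψ (x - y) - 1) * ψ y := by
    rw [sub_mul, one_mul, ← AddChar.map_add_eq_mul, sub_add_cancel]
  rw [h, norm_mul, AddChar.norm_apply, mul_one, norm_sub_rev]

lemma norm_one_sub_apply_neg (ψ : AddChar G ℂ) (x : G) : ‖1 - ψ (-x)‖ = ‖1 - ψ x‖ := by
  simpa using norm_one_sub_apply_sub ψ 0 x

lemma norm_one_sub_mul_le {a b : ℂ} (ha : ‖a‖ ≤ 1) : ‖1 - a * b‖ ≤ ‖1 - a‖ + ‖1 - b‖ :=
  calc ‖1 - a * b‖ = ‖(1 - a) + a * (1 - b)‖ := by ring_nf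
    _ ≤ ‖1 - a‖ + ‖a‖ * ‖1 - b‖ := (norm_add_le _ _).trans_eq (by rw [norm_mul])
    _ ≤ ‖1 - a‖ + ‖1 - b‖ := by gcongr; exact mul_le_of_le_one_left (norm_nonneg _) ha

lemma norm_one_sub_apply_le_two (ψ : AddChar G ℂ) (x : G) : ‖1 - ψ x‖ ≤ 2 :=
  (norm_sub_le _ _).trans_eq (by rw [AddChar.norm_apply, norm_one, one_add_one_eq_two])

lemma norm_one_sub_zpow_le (ψ : AddChar G ℂ) {e : ℤ} (he : |e| ≤ 1) (x : G) :
    ‖1 - (ψ ^ e) x‖ ≤ ‖1 - ψ x‖ := by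
  obtain rfl | rfl | rfl : e = -1 ∨ e = 0 ∨ e = 1 := by grind
  · rw [zpow_neg_one, AddChar.inv_apply, norm_one_sub_apply_neg]
  · simp
  · simp

lemma norm_one_sub_prod_zpow_le (Λ : Finset (AddChar G ℂ)) {e : AddChar G ℂ → ℤ}
    (he : ∀ ψ, |e ψ| ≤ 1) (x : G) :
    ‖1 - (∏ ψ ∈ Λ, ψ ^ e ψ) x‖ ≤ ∑ ψ ∈ Λ, ‖1 - ψ x‖ := by
  classical
  induction Λ using Finset.induction_on with
  | empty => simp
  | insert ψ Λ hψ ih =>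
    rw [prod_insert hψ, sum_insert hψ, AddChar.mul_apply]
    calc _ ≤ _ := norm_one_sub_mul_le (AddChar.norm_apply _ _).le
      _ ≤ _ := add_le_add (norm_one_sub_zpow_le ψ (he ψ) x) ih

end NormOneSub

/-! ### Bohr sets -/

section Grid

/-- The cell containing `z` in the square grid of side `2 * ρ / 3`. The side is chosen so that a
cell has diameter less than `ρ`, and `7 ^ 2` cells cover the disc of radius `2 * ρ`. -/
noncomputable def gridCell (ρ : ℝ) (z : ℂ) : ℤ × ℤ :=
  (⌊3 * z.re / (2 * ρ)⌋, ⌊3 * z.im / (2 * ρ)⌋)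

variable {ρ : ℝ}

lemma gridCell_mem_of_norm_le (hρ : 0 < ρ) {z : ℂ} (hz : ‖z‖ ≤ 2 * ρ) :
    gridCell ρ z ∈ Icc (-3 : ℤ) 3 ×ˢ Icc (-3 : ℤ) 3 := by
  have floor_mem {u : ℝ} (hu : |u| ≤ 2 * ρ) : ⌊3 * u / (2 * ρ)⌋ ∈ Icc (-3 : ℤ) 3 := by
    obtain ⟨hl, hr⟩ := abs_le.1 hu
    rw [mem_Icc, Int.le_floor, ← Int.lt_add_one_iff, Int.floor_lt, le_div_iff₀ (by positivity),
      div_lt_iff₀ (by positivity)]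
    constructor <;> push_cast <;> linarith
  exact mem_product.2 ⟨floor_mem ((Complex.abs_re_le_norm z).trans hz),
    floor_mem ((Complex.abs_im_le_norm z).trans hz)⟩

lemma norm_sub_le_of_gridCell_eq (hρ : 0 < ρ) {w z : ℂ} (h : gridCell ρ w = gridCell ρ z) :
    ‖w - z‖ ≤ ρ := by
  have abs_sub_le {u v : ℝ} (huv : ⌊3 * u / (2 * ρ)⌋ = ⌊3 * v / (2 * ρ)⌋) :
      |u - v| ≤ 2 / 3 * ρ := by
    have hlt := Int.abs_sub_lt_one_of_floor_eq_floor huv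
    rw [← sub_div, ← mul_sub, abs_div, abs_mul, abs_of_pos (by positivity : 0 < 2 * ρ),
      div_lt_one (by positivity), abs_of_pos three_pos] at hlt
    linarith
  obtain ⟨hre, him⟩ := Prod.mk.inj h
  calc ‖w - z‖ ≤ √2 * max |(w - z).re| |(w - z).im| := Complex.norm_le_sqrt_two_mul_max _
    _ ≤ 3 / 2 * (2 / 3 * ρ) := by
      gcongr
      · exact Real.sqrt_le_iff.2 (by norm_num)
      · exact max_le (abs_sub_le hre) (abs_sub_le him)
    _ = ρ := by ring

end Grid

section Bohr

variable {G : Type*} [AddCommGroup G] [Fintype G]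

open Classical in
/-- The Bohr set of radius `ρ` with frequency set `Γ`. -/
noncomputable def bohrSet (Γ : Finset (AddChar G ℂ)) (ρ : ℝ) : Finset G :=
  {x | ∀ ψ ∈ Γ, ‖1 - ψ x‖ ≤ ρ}

variable {Γ Δ : Finset (AddChar G ℂ)} {ρ σ τ : ℝ} {x y : G}

lemma mem_bohrSet : x ∈ bohrSet Γ ρ ↔ ∀ ψ ∈ Γ, ‖1 - ψ x‖ ≤ ρ := by simp [bohrSet]

lemma zero_mem_bohrSet (hρ : 0 ≤ ρ) : (0 : G) ∈ bohrSet Γ ρ :=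
  mem_bohrSet.2 fun ψ _ ↦ by simpa using hρ

lemma bohrSet_nonempty (hρ : 0 ≤ ρ) : (bohrSet Γ ρ).Nonempty := ⟨0, zero_mem_bohrSet hρ⟩

lemma card_bohrSet_pos (hρ : 0 ≤ ρ) : (0 : ℝ) < #(bohrSet Γ ρ) :=
  mod_cast (bohrSet_nonempty hρ).card_pos

lemma add_mem_bohrSet (hx : x ∈ bohrSet Γ ρ) (hy : y ∈ bohrSet Γ σ) (h : ρ + σ ≤ τ) :
    x + y ∈ bohrSet Γ τ := by
  rw [mem_bohrSet] at *
  intro ψ hψ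
  rw [AddChar.map_add_eq_mul]
  linarith [norm_one_sub_mul_le (b := ψ y) (AddChar.norm_apply ψ x).le, hx ψ hψ, hy ψ hψ]

lemma neg_mem_bohrSet (hx : x ∈ bohrSet Γ ρ) : -x ∈ bohrSet Γ ρ := by
  simpa only [mem_bohrSet, norm_one_sub_apply_neg] using hx

lemma sub_mem_bohrSet (hx : x ∈ bohrSet Γ ρ) (hy : y ∈ bohrSet Γ σ) (h : ρ + σ ≤ τ) :
    x - y ∈ bohrSet Γ τ := by
  rw [sub_eq_add_neg]
  exact add_mem_bohrSet hx (neg_mem_bohrSet hy) h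

lemma bohrSet_mono (h : ρ ≤ σ) : bohrSet Γ ρ ⊆ bohrSet Γ σ := fun _ hx ↦
  mem_bohrSet.2 fun ψ hψ ↦ (mem_bohrSet.1 hx ψ hψ).trans h

lemma card_bohrSet_mono (h : ρ ≤ σ) : (#(bohrSet Γ ρ) : ℝ) ≤ #(bohrSet Γ σ) :=
  mod_cast card_le_card (bohrSet_mono h)

lemma bohrSet_anti (h : Γ ⊆ Δ) : bohrSet Δ ρ ⊆ bohrSet Γ ρ := fun _ hx ↦
  mem_bohrSet.2 fun ψ hψ ↦ mem_bohrSet.1 hx ψ (h hψ)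

lemma bohrSet_eq_univ (h : 2 ≤ ρ) : bohrSet Γ ρ = univ :=
  eq_univ_of_forall fun x ↦ mem_bohrSet.2 fun ψ _ ↦ (norm_one_sub_apply_le_two ψ x).trans h

lemma card_bohrSet_two_mul_le (hρ : 0 < ρ) :
    #(bohrSet Γ (2 * ρ)) ≤ #(bohrSet Γ ρ) * 64 ^ #Γ := by
  classical
  let cell : G → Γ → ℤ × ℤ := fun x ψ ↦ gridCell ρ (1 - ψ.1 x)
  let cells : Finset (Γ → ℤ × ℤ) := Fintype.piFinset fun _ ↦ Icc (-3) 3 ×ˢ Icc (-3) 3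
  have card_cells : #cells ≤ 64 ^ #Γ := by
    simp only [cells, Fintype.card_piFinset, card_product, Int.card_Icc, prod_const, card_univ,
      Fintype.card_coe]
    exact Nat.pow_le_pow_left (by decide) _
  have cell_mem : ∀ x ∈ bohrSet Γ (2 * ρ), cell x ∈ cells := fun x hx ↦
    Fintype.mem_piFinset.2 fun ψ ↦ gridCell_mem_of_norm_le hρ (mem_bohrSet.1 hx ψ ψ.2)
  have card_fiber : ∀ c ∈ cells, #{x ∈ bohrSet Γ (2 * ρ) | cell x = c} ≤ #(bohrSet Γ ρ) := by
    intro c _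
    obtain h | ⟨y, hy⟩ := {x ∈ bohrSet Γ (2 * ρ) | cell x = c}.eq_empty_or_nonempty
    · simp [h]
    refine card_le_card_of_injOn (· - y) (fun x hx ↦ ?_) (sub_left_injective.injOn)
    refine mem_coe.2 (mem_bohrSet.2 fun ψ hψ ↦ ?_)
    have hcell : cell x = cell y := ((mem_filter.1 hx).2).trans (mem_filter.1 hy).2.symm
    rw [norm_one_sub_apply_sub, norm_sub_rev, ← sub_sub_sub_cancel_left _ _ 1]
    exact norm_sub_le_of_gridCell_eq hρ (congrFun hcell ⟨ψ, hψ⟩)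
  exact (card_le_mul_card_image_of_maps_to cell_mem _ card_fiber).trans
    (Nat.mul_le_mul_left _ card_cells)

lemma card_bohrSet_two_pow_mul_le (hρ : 0 < ρ) (j : ℕ) :
    #(bohrSet Γ (2 ^ j * ρ)) ≤ #(bohrSet Γ ρ) * 64 ^ (#Γ * j) := by
  induction j with
  | zero => simp
  | succ j ih =>
    calc #(bohrSet Γ (2 ^ (j + 1) * ρ)) = #(bohrSet Γ (2 * (2 ^ j * ρ))) := by
          rw [pow_succ', mul_assoc]
      _ ≤ #(bohrSet Γ (2 ^ j * ρ)) * 64 ^ #Γ := card_bohrSet_two_mul_le (by positivity)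
      _ ≤ #(bohrSet Γ ρ) * 64 ^ (#Γ * j) * 64 ^ #Γ := Nat.mul_le_mul_right _ ih
      _ = #(bohrSet Γ ρ) * 64 ^ (#Γ * (j + 1)) := by rw [mul_assoc, ← pow_add, Nat.mul_succ]

lemma card_le_card_bohrSet_mul (hρ : 0 < ρ) {j : ℕ} (hj : 2 ≤ 2 ^ j * ρ) :
    Fintype.card G ≤ #(bohrSet Γ ρ) * 64 ^ (#Γ * j) := by
  simpa [bohrSet_eq_univ hj] using card_bohrSet_two_pow_mul_le (Γ := Γ) hρ j

end Bohr

/-! ### Regular Bohr sets -/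

section Regular

variable {G : Type*} [AddCommGroup G] [Fintype G]

/-- A Bohr set of radius `ρ` is regular at relative scale `κ` if changing its radius by a factor
`1 ± κ` changes its size by a factor at most `1 + 1 / m`. Fixing one scale `κ`, instead of asking
for this at all small scales, makes regular radii easy to find. -/
def IsRegular (κ : ℝ) (m : ℕ) (Γ : Finset (AddChar G ℂ)) (ρ : ℝ) : Prop :=
  (#(bohrSet Γ (ρ + κ * ρ)) : ℝ) ≤ (1 + 1 / m) * #(bohrSet Γ (ρ - κ * ρ))

lemma exists_succ_le_mul_of_lt_pow_mul {v : ℕ → ℝ} {q : ℝ} (hq : 0 ≤ q) {J : ℕ}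
    (h : v J < q ^ J * v 0) : ∃ j < J, v (j + 1) ≤ q * v j := by
  by_contra! hgrow
  refine h.not_ge ?_
  have iterate : ∀ j ≤ J, q ^ j * v 0 ≤ v j := by
    intro j
    induction j with
    | zero => simp
    | succ j ih =>
      intro hj
      calc q ^ (j + 1) * v 0 = q * (q ^ j * v 0) := by ring
        _ ≤ q * v j := by gcongr; exact ih (by lia)
        _ ≤ v (j + 1) := (hgrow j hj).le
  exact iterate J le_rfl

lemma two_le_one_add_inv_pow {m : ℕ} (hm : 0 < m) : (2 : ℝ) ≤ (1 + 1 / m) ^ m := by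
  have hinv : (0 : ℝ) ≤ 1 / m := by positivity
  calc (2 : ℝ) = 1 + m * (1 / m) := by field_simp; norm_num
    _ ≤ (1 + 1 / m) ^ m := one_add_mul_le_pow (by linarith) m

lemma sixtyFour_pow_lt_one_add_inv_pow {m : ℕ} (hm : 0 < m) (d : ℕ) :
    (64 : ℝ) ^ d < (1 + 1 / m) ^ (6 * d * m + 1) :=
  calc (64 : ℝ) ^ d = 2 ^ (6 * d) := by rw [pow_mul]; norm_num
    _ ≤ ((1 + 1 / m) ^ m) ^ (6 * d) := by gcongr; exact two_le_one_add_inv_pow hm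
    _ = (1 + 1 / m) ^ (6 * d * m) := by rw [← pow_mul, mul_comm m]
    _ < (1 + 1 / m) ^ (6 * d * m + 1) :=
      pow_lt_pow_right₀ (lt_add_of_pos_right _ (by positivity)) (Nat.lt_succ_self _)

/-- The radii `ρ / 2 + 2 * j * κ * ρ` with `j ≤ 6 * d * m + 1` stay below `ρ`, so failure of
regularity between all consecutive ones would contradict the doubling bound. -/
lemma exists_isRegular {d m : ℕ} (hm : 0 < m) {κ : ℝ} (hκ : 0 < κ)
    (hκd : 4 * ((6 * d * m + 1 : ℕ) : ℝ) * κ ≤ 1) {Γ : Finset (AddChar G ℂ)} (hΓ : #Γ ≤ d)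
    {ρ : ℝ} (hρ : 0 < ρ) : ∃ ρ', ρ / 2 ≤ ρ' ∧ ρ' ≤ ρ ∧ IsRegular κ m Γ ρ' := by
  set J := 6 * d * m + 1
  have hκρ : 0 < κ * ρ := by positivity
  have hJρ : 4 * (J : ℝ) * (κ * ρ) ≤ ρ := by nlinarith
  let radius : ℕ → ℝ := fun j ↦ ρ / 2 + 2 * j * (κ * ρ)
  have hcard : (#(bohrSet Γ (radius J)) : ℝ) < (1 + 1 / m) ^ J * #(bohrSet Γ (radius 0)) :=
    calc (#(bohrSet Γ (radius J)) : ℝ) ≤ #(bohrSet Γ (2 * (ρ / 2))) :=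
          card_bohrSet_mono (by simp only [radius]; linarith)
      _ ≤ #(bohrSet Γ (ρ / 2)) * 64 ^ #Γ := mod_cast card_bohrSet_two_mul_le (by positivity)
      _ ≤ #(bohrSet Γ (ρ / 2)) * 64 ^ d := by gcongr; norm_num
      _ < #(bohrSet Γ (ρ / 2)) * (1 + 1 / m) ^ J := by
        gcongr
        · exact card_bohrSet_pos (by positivity)
        · exact sixtyFour_pow_lt_one_add_inv_pow hm d
      _ = (1 + 1 / m) ^ J * #(bohrSet Γ (radius 0)) := by simp [radius, mul_comm]
  obtain ⟨j, hj, hstep⟩ := exists_succ_le_mul_of_lt_pow_mul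
    (v := fun j ↦ #(bohrSet Γ (radius j))) (q := 1 + 1 / m) (by positivity) hcard
  have hjJ : (j : ℝ) + 1 ≤ J := mod_cast hj
  have hupper : radius j + κ * ρ ≤ ρ := by simp only [radius]; nlinarith
  have hscale : κ * (radius j + κ * ρ) ≤ κ * ρ := by gcongr
  refine ⟨radius j + κ * ρ, ?_, hupper, ?_⟩
  · simp only [radius]
    linarith [show 0 ≤ 2 * (j : ℝ) * (κ * ρ) by positivity]
  calc _ ≤ (#(bohrSet Γ (radius (j + 1))) : ℝ) := card_bohrSet_mono (by
        simp only [radius] at hscale ⊢; push_cast; linarith)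
    _ ≤ (1 + 1 / m) * #(bohrSet Γ (radius j)) := hstep
    _ ≤ _ := by gcongr; exact bohrSet_mono (by linarith)

variable {κ : ℝ} {m : ℕ} {Γ : Finset (AddChar G ℂ)} {ρ : ℝ}

lemma IsRegular.card_bohrSet_sub_card_le (hκρ : 0 ≤ κ * ρ) (hreg : IsRegular κ m Γ ρ) :
    (#(bohrSet Γ (ρ + κ * ρ)) : ℝ) - #(bohrSet Γ (ρ - κ * ρ)) ≤ #(bohrSet Γ ρ) / m :=
  calc _ ≤ (1 / m : ℝ) * #(bohrSet Γ (ρ - κ * ρ)) := by unfold IsRegular at hreg; linarith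
    _ ≤ 1 / m * #(bohrSet Γ ρ) := by gcongr; exact bohrSet_mono (by linarith)
    _ = _ := by ring

open Classical in
lemma IsRegular.card_sdiff_le (hκρ : 0 ≤ κ * ρ) (hreg : IsRegular κ m Γ ρ) :
    (#(bohrSet Γ ρ \ bohrSet Γ (ρ - κ * ρ)) : ℝ) ≤ #(bohrSet Γ ρ) / m := by
  rw [cast_card_sdiff (bohrSet_mono (by linarith))]
  linarith [hreg.card_bohrSet_sub_card_le hκρ,
    card_bohrSet_mono (Γ := Γ) (by linarith : ρ ≤ ρ + κ * ρ)]

lemma IsRegular.card_bohrSet_add_le_two_mul (hκρ : 0 ≤ κ * ρ) (hm : 1 ≤ m)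
    (hreg : IsRegular κ m Γ ρ) : (#(bohrSet Γ (ρ + κ * ρ)) : ℝ) ≤ 2 * #(bohrSet Γ ρ) := by
  have hinv : (1 / m : ℝ) ≤ 1 := by rw [div_le_one (by positivity)]; exact mod_cast hm
  calc _ ≤ (1 + 1 / m : ℝ) * #(bohrSet Γ (ρ - κ * ρ)) := hreg
    _ ≤ 2 * #(bohrSet Γ ρ) := by
      gcongr
      · linarith
      · exact bohrSet_mono (by linarith)

end Regular

/-! ### Averaging operators -/

section Averaging

variable {G : Type*}

/-- The indicator function of a finite set, with real values. -/
noncomputable abbrev ind (S : Finset G) : G → ℝ := (S : Set G).indicator 1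

lemma ind_nonneg (S : Finset G) (x : G) : 0 ≤ ind S x :=
  Set.indicator_nonneg (fun _ _ ↦ zero_le_one) x

lemma ind_le_one (S : Finset G) (x : G) : ind S x ≤ 1 :=
  Set.indicator_le_self' (fun _ _ ↦ zero_le_one) x

lemma sum_ind [Fintype G] (S : Finset G) : ∑ x, ind S x = #S := by
  classical simp [Set.indicator_apply]

/-- A linear operator is averaging if it does not increase suprema; such operators are
automatically monotone and contract the supremum norm. -/
def IsAveraging (M : Module.End ℝ (G → ℝ)) : Prop :=
  ∀ f c, (∀ x, f x ≤ c) → ∀ x, M f x ≤ c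

namespace IsAveraging

variable {M N : Module.End ℝ (G → ℝ)} {f g : G → ℝ} {c : ℝ}

lemma one : IsAveraging (1 : Module.End ℝ (G → ℝ)) := fun _ _ h ↦ h

lemma mul (hM : IsAveraging M) (hN : IsAveraging N) : IsAveraging (M * N) :=
  fun f c h ↦ hM (N f) c (hN f c h)

lemma pow (hM : IsAveraging M) (r : ℕ) : IsAveraging (M ^ r) := by
  induction r with
  | zero => exact one
  | succ r ih => exact pow_succ M r ▸ ih.mul hM

lemma mono (hM : IsAveraging M) (h : ∀ x, f x ≤ g x) (x : G) : M f x ≤ M g x := by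
  have := hM (f - g) 0 (fun x ↦ sub_nonpos.2 (h x)) x
  rwa [map_sub, Pi.sub_apply, sub_nonpos] at this

lemma abs_le (hM : IsAveraging M) (h : ∀ x, |f x| ≤ c) (x : G) : |M f x| ≤ c := by
  have hneg := hM (-f) c (fun x ↦ (neg_le_abs _).trans (h x)) x
  rw [map_neg, Pi.neg_apply] at hneg
  exact _root_.abs_le.2 ⟨neg_le.1 hneg, hM f c (fun x ↦ (le_abs_self _).trans (h x)) x⟩

lemma abs_pow_apply_sub_le (hM : IsAveraging M) (h : ∀ x, |M f x - f x| ≤ c) (r : ℕ) (x : G) :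
    |(M ^ r) f x - f x| ≤ r * c := by
  induction r with
  | zero => simp
  | succ r ih =>
    have hstep : |(M ^ r) (M f - f) x| ≤ c := (hM.pow r).abs_le h x
    rw [map_sub, Pi.sub_apply] at hstep
    calc |(M ^ (r + 1)) f x - f x|
        = |((M ^ r) (M f) x - (M ^ r) f x) + ((M ^ r) f x - f x)| := by
          rw [sub_add_sub_cancel, pow_succ, Module.End.mul_apply]
      _ ≤ c + r * c := (abs_add_le _ _).trans (add_le_add hstep ih)
      _ = (r + 1 : ℕ) * c := by push_cast; ring

end IsAveraging

variable [AddCommGroup G] {X : Finset G}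

/-- The operator sending `f` to its average over the translates of `X`. -/
noncomputable def avg (X : Finset G) : Module.End ℝ (G → ℝ) where
  toFun f x := 𝔼 t ∈ X, f (x + t)
  map_add' f g := funext fun x ↦ expect_add_distrib X (fun t ↦ f (x + t)) fun t ↦ g (x + t)
  map_smul' a f := funext fun x ↦ (mul_expect X (fun t ↦ f (x + t)) a).symm

lemma avg_apply (X : Finset G) (f : G → ℝ) (x : G) : avg X f x = 𝔼 t ∈ X, f (x + t) := rfl

lemma avg_apply_eq_sum_div (X : Finset G) (f : G → ℝ) (x : G) :
    avg X f x = (∑ t ∈ X, f (x + t)) / #X := expect_eq_sum_div_card _ _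

lemma commute_avg (X Y : Finset G) : Commute (avg X) (avg Y) := by
  refine LinearMap.ext fun f ↦ funext fun x ↦ ?_
  simp only [Module.End.mul_apply, avg_apply]
  rw [expect_comm]
  simp only [add_right_comm]

lemma isAveraging_avg (hX : X.Nonempty) : IsAveraging (avg X) :=
  fun _ _ h _ ↦ expect_le hX fun _ _ ↦ h _

lemma abs_avg_apply_sub_le (hX : X.Nonempty) {f : G → ℝ} {x : G} {a c : ℝ}
    (h : ∀ t ∈ X, |f (x + t) - a| ≤ c) : |avg X f x - a| ≤ c := by
  rw [avg_apply, ← expect_const hX a, ← expect_sub_distrib]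
  exact (abs_expect_le X _).trans (expect_le hX h)

/-- Averaging over differences of two elements of `T`. -/
noncomputable def diffAvg [DecidableEq G] (T : Finset G) : Module.End ℝ (G → ℝ) :=
  avg T * avg (-T)

lemma isAveraging_diffAvg [DecidableEq G] {T : Finset G} (hT : T.Nonempty) :
    IsAveraging (diffAvg T) :=
  (isAveraging_avg hT).mul (isAveraging_avg hT.neg)

lemma commute_avg_diffAvg_pow [DecidableEq G] (X T : Finset G) (r : ℕ) :
    Commute (avg X) (diffAvg T ^ r) :=
  ((commute_avg X T).mul_right (commute_avg X (-T))).pow_right r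

lemma abs_diffAvg_pow_apply_sub_le [DecidableEq G] {T : Finset G} (hT : T.Nonempty) {f : G → ℝ}
    {c : ℝ} (h : ∀ x, ∀ t ∈ T, ∀ s ∈ T, |f (x + (t - s)) - f x| ≤ c) (r : ℕ) (x : G) :
    |(diffAvg T ^ r) f x - f x| ≤ r * c := by
  refine (isAveraging_diffAvg hT).abs_pow_apply_sub_le (fun x ↦ ?_) r x
  refine abs_avg_apply_sub_le hT fun t ht ↦ abs_avg_apply_sub_le hT.neg fun s hs ↦ ?_
  simpa only [sub_neg_eq_add, add_assoc] using h x t ht (-s) (mem_neg'.1 hs)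

end Averaging

/-! ### Fourier multipliers -/

section Fourier

variable {G : Type*} [AddCommGroup G] {M N : Module.End ℝ (G → ℝ)}
  {m n : AddChar G ℂ → ℂ}

/-- The average of the character `ψ` over `X`, which is the Fourier multiplier of `avg X`. -/
noncomputable def fourierMean (X : Finset G) (ψ : AddChar G ℂ) : ℂ := 𝔼 t ∈ X, ψ t

lemma norm_fourierMean (X : Finset G) (ψ : AddChar G ℂ) :
    ‖fourierMean X ψ‖ = ‖∑ x ∈ X, ψ x‖ / #X := by
  rw [fourierMean, expect_eq_sum_div_card, norm_div, Complex.norm_natCast]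

lemma norm_one_sub_fourierMean_le {X : Finset G} (hX : X.Nonempty) {ψ : AddChar G ℂ} {c : ℝ}
    (h : ∀ x ∈ X, ‖1 - ψ x‖ ≤ c) : ‖1 - fourierMean X ψ‖ ≤ c := by
  rw [fourierMean, ← expect_const hX (1 : ℂ), ← expect_sub_distrib, expect_eq_sum_div_card,
    norm_div, Complex.norm_natCast, div_le_iff₀ (by exact_mod_cast hX.card_pos), mul_comm,
    ← nsmul_eq_mul]
  exact (norm_sum_le_of_le X h).trans_eq (sum_const c)

variable [Finite G]

lemma norm_fourierMean_le_one (X : Finset G) (ψ : AddChar G ℂ) : ‖fourierMean X ψ‖ ≤ 1 := by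
  rw [norm_fourierMean]
  refine div_le_one_of_le₀ ((norm_sum_le X ψ).trans_eq ?_) (Nat.cast_nonneg _)
  simp only [AddChar.norm_apply, sum_const, nsmul_eq_mul, mul_one]

lemma norm_fourierMean_neg [DecidableEq G] (X : Finset G) (ψ : AddChar G ℂ) :
    ‖fourierMean (-X) ψ‖ = ‖fourierMean X ψ‖ := by
  rw [norm_fourierMean, norm_fourierMean, card_neg, sum_neg_index]
  simp only [AddChar.map_neg_eq_conj, ← map_sum, Complex.norm_conj]

/-- `f` is the inverse Fourier transform of `c`, for the uniform probability measure on the dual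
group. -/
def HasFourierCoeffs (f : G → ℝ) (c : AddChar G ℂ → ℂ) : Prop :=
  ∀ x, (f x : ℂ) = 𝔼 ψ, c ψ * ψ x

lemma HasFourierCoeffs.abs_apply_le {f : G → ℝ} {c : AddChar G ℂ → ℂ} (h : HasFourierCoeffs f c)
    (x : G) : |f x| ≤ 𝔼 ψ, ‖c ψ‖ := by
  rw [← Real.norm_eq_abs, ← Complex.norm_real, h x]
  refine (RCLike.norm_expect_le (K := ℂ)).trans_eq ?_
  simp only [norm_mul, AddChar.norm_apply, mul_one]

lemma hasFourierCoeffs_ind (S : Finset G) :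
    HasFourierCoeffs (ind S) fun ψ ↦ ∑ s ∈ S, ψ (-s) := by
  classical
  intro x
  have orthogonality (s : G) :
      𝔼 ψ : AddChar G ℂ, ψ (-s) * ψ x = if x = s then 1 else 0 := by
    simp only [← AddChar.map_add_eq_mul, AddChar.expect_apply_eq_ite, neg_add_eq_zero, eq_comm]
  simp only [sum_mul, expect_sum_comm, orthogonality, sum_ite_eq, ind, Set.indicator_apply,
    mem_coe, Pi.one_apply, apply_ite ((↑) : ℝ → ℂ), Complex.ofReal_one, Complex.ofReal_zero]

lemma expect_norm_sum_apply_sq (X : Finset G) :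
    𝔼 ψ : AddChar G ℂ, ‖∑ x ∈ X, ψ x‖ ^ 2 = (#X : ℝ) := by
  classical
  have expand (ψ : AddChar G ℂ) :
      ((‖∑ x ∈ X, ψ x‖ ^ 2 : ℝ) : ℂ) = ∑ x ∈ X, ∑ y ∈ X, ψ (x - y) := by
    push_cast
    rw [← Complex.mul_conj', map_sum, sum_mul_sum]
    simp only [sub_eq_add_neg, AddChar.map_add_eq_mul, AddChar.map_neg_eq_conj]
  apply Complex.ofReal_injective
  rw [← Complex.coe_algebraMap, map_expect]
  simp only [Complex.coe_algebraMap, expand, expect_sum_comm, AddChar.expect_apply_eq_ite,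
    sub_eq_zero, sum_ite_eq]
  simp

/-- The operator `M` multiplies Fourier coefficients by `m`. -/
def HasMultiplier (M : Module.End ℝ (G → ℝ)) (m : AddChar G ℂ → ℂ) : Prop :=
  ∀ f c, HasFourierCoeffs f c → HasFourierCoeffs (M f) (c * m)

lemma hasMultiplier_one : HasMultiplier (1 : Module.End ℝ (G → ℝ)) 1 :=
  fun _ _ h ↦ by simpa only [mul_one, Module.End.one_apply] using h

lemma HasMultiplier.mul (hM : HasMultiplier M m) (hN : HasMultiplier N n) :
    HasMultiplier (M * N) (m * n) :=
  fun f c h ↦ by simpa only [Module.End.mul_apply, mul_assoc, mul_comm m] using hM _ _ (hN f c h)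

lemma HasMultiplier.pow (hM : HasMultiplier M m) (r : ℕ) : HasMultiplier (M ^ r) (m ^ r) := by
  induction r with
  | zero => exact hasMultiplier_one
  | succ r ih => rw [pow_succ, pow_succ]; exact ih.mul hM

lemma HasMultiplier.sub (hM : HasMultiplier M m) (hN : HasMultiplier N n) :
    HasMultiplier (M - N) (m - n) := fun f c h x ↦ by
  simp only [LinearMap.sub_apply, Pi.sub_apply, Complex.ofReal_sub, hM f c h x, hN f c h x,
    mul_sub, sub_mul, Pi.mul_apply, expect_sub_distrib]

lemma hasMultiplier_avg (X : Finset G) : HasMultiplier (avg X) (fourierMean X) := fun f c h x ↦ by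
  have hcoe : ((avg X f x : ℝ) : ℂ) = 𝔼 t ∈ X, (f (x + t) : ℂ) :=
    map_expect (algebraMap ℝ ℂ) _ X
  simp only [hcoe, h _, AddChar.map_add_eq_mul, ← mul_assoc]
  rw [expect_comm]
  simp only [← mul_expect, Pi.mul_apply, fourierMean, mul_right_comm]

lemma hasMultiplier_diffAvg [DecidableEq G] (T : Finset G) :
    HasMultiplier (diffAvg T) (fourierMean T * fourierMean (-T)) :=
  (hasMultiplier_avg T).mul (hasMultiplier_avg (-T))

lemma expect_norm_sum_mul_norm_sum_le (X Y : Finset G) :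
    𝔼 ψ : AddChar G ℂ, ‖∑ x ∈ X, ψ (-x)‖ * ‖∑ y ∈ Y, ψ y‖ ≤ √(#X * #Y) := by
  have reflect (ψ : AddChar G ℂ) : ‖∑ x ∈ X, ψ (-x)‖ = ‖∑ x ∈ X, ψ x‖ := by
    simp only [AddChar.map_neg_eq_conj, ← map_sum, Complex.norm_conj]
  refine Real.le_sqrt_of_sq_le ?_
  simpa only [reflect, expect_norm_sum_apply_sq] using expect_mul_sq_le_sq_mul_sq univ
    (fun ψ : AddChar G ℂ ↦ ‖∑ x ∈ X, ψ x‖) fun ψ ↦ ‖∑ y ∈ Y, ψ y‖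

lemma HasMultiplier.abs_apply_avg_ind_le (hM : HasMultiplier M m) {K : ℝ}
    (hK : ∀ ψ, ‖m ψ‖ ≤ K) (S : Finset G) {A : Finset G} (hA : A.Nonempty) (x : G) :
    |M (avg A (ind S)) x| ≤ K * √(#S / #A) := by
  have hA0 : (0 : ℝ) < #A := by exact_mod_cast hA.card_pos
  have hK0 : 0 ≤ K := (norm_nonneg _).trans (hK 1)
  calc |M (avg A (ind S)) x|
      ≤ 𝔼 ψ : AddChar G ℂ, ‖(∑ s ∈ S, ψ (-s)) * fourierMean A ψ * m ψ‖ :=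
        (hM _ _ (hasMultiplier_avg A _ _ (hasFourierCoeffs_ind S))).abs_apply_le x
    _ ≤ 𝔼 ψ : AddChar G ℂ, K / #A * (‖∑ s ∈ S, ψ (-s)‖ * ‖∑ a ∈ A, ψ a‖) := by
        refine expect_le_expect fun ψ _ ↦ ?_
        rw [norm_mul, norm_mul, norm_fourierMean]
        calc _ ≤ ‖∑ s ∈ S, ψ (-s)‖ * (‖∑ a ∈ A, ψ a‖ / #A) * K := by gcongr; exact hK ψ
          _ = _ := by ring
    _ ≤ K / #A * √(#S * #A) := by
        rw [← mul_expect]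
        gcongr
        exact expect_norm_sum_mul_norm_sum_le S A
    _ = K * √(#S / #A) := by
        rw [show (#S * #A : ℝ) = #S / #A * #A ^ 2 by field_simp, Real.sqrt_mul (by positivity),
          Real.sqrt_sq hA0.le]
        field_simp

end Fourier

/-! ### Chang's lemma relative to a set -/

section Expect

variable {ι : Type*} {s : Finset ι}

lemma re_expect (s : Finset ι) (f : ι → ℂ) : (𝔼 i ∈ s, f i).re = 𝔼 i ∈ s, (f i).re := by
  rw [expect_eq_sum_div_card, expect_eq_sum_div_card, Complex.div_natCast_re, Complex.re_sum]

lemma exp_expect_le (hs : s.Nonempty) (f : ι → ℝ) :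
    Real.exp (𝔼 i ∈ s, f i) ≤ 𝔼 i ∈ s, Real.exp (f i) := by
  have tangent (i : ι) :
      Real.exp (𝔼 i ∈ s, f i) * (1 + (f i - 𝔼 i ∈ s, f i)) ≤ Real.exp (f i) := by
    calc _ ≤ Real.exp (𝔼 i ∈ s, f i) * Real.exp (f i - 𝔼 i ∈ s, f i) := by
          gcongr; linarith [Real.add_one_le_exp (f i - 𝔼 i ∈ s, f i)]
      _ = Real.exp (f i) := by rw [← Real.exp_add, add_sub_cancel]
  refine le_trans (le_of_eq ?_) (expect_le_expect fun i _ ↦ tangent i)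
  rw [← mul_expect, expect_add_distrib, expect_sub_distrib, expect_const hs, expect_const hs]
  ring

lemma exp_sub_le_one_add {y : ℝ} (hy : |y| ≤ 1 / 8) : Real.exp (y - 1 / 32) ≤ 1 + y := by
  obtain ⟨hl, hu⟩ := abs_le.1 hy
  have hpos : 0 < 1 + y := by linarith
  rw [← Real.le_log_iff_exp_le hpos]
  refine le_trans ?_ (Real.one_sub_inv_le_log_of_pos hpos)
  rw [show 1 - (1 + y)⁻¹ = y / (1 + y) by field_simp; ring, le_div_iff₀ hpos]
  nlinarith

end Expect

section Chang

variable {G : Type*} [AddCommGroup G] {B T : Finset G} {Λ : Finset (AddChar G ℂ)}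
  {c : AddChar G ℂ → ℂ} {θ : ℝ}

/-- The set `Λ` of characters is dissociated relative to `B` at level `θ`: on average over `B`,
every nontrivial product of elements of `Λ` and their inverses is at most `θ` in absolute value. -/
def IsDissociated (B : Finset G) (θ : ℝ) (Λ : Finset (AddChar G ℂ)) : Prop :=
  ∀ e : AddChar G ℂ → ℤ, (∀ ψ, |e ψ| ≤ 1) → (∃ ψ ∈ Λ, e ψ ≠ 0) →
    ‖fourierMean B (∏ ψ ∈ Λ, ψ ^ e ψ)‖ ≤ θ

lemma IsDissociated.subset {Λ' : Finset (AddChar G ℂ)} (hd : IsDissociated B θ Λ) (h : Λ' ⊆ Λ) :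
    IsDissociated B θ Λ' := by
  classical
  rintro e he ⟨ψ, hψ, hne⟩
  have hprod : ∏ φ ∈ Λ, φ ^ (if φ ∈ Λ' then e φ else 0) = ∏ φ ∈ Λ', φ ^ e φ := by
    rw [← prod_subset h fun φ _ hφ ↦ by rw [if_neg hφ, zpow_zero]]
    exact prod_congr rfl fun φ hφ ↦ by rw [if_pos hφ]
  rw [← hprod]
  refine hd _ (fun φ ↦ ?_) ⟨ψ, h hψ, by rwa [if_pos hψ]⟩
  split_ifs
  exacts [he φ, by simp]

lemma prod_insert_zpow_update [DecidableEq (AddChar G ℂ)] {ψ : AddChar G ℂ} (hψ : ψ ∉ Λ)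
    (e : AddChar G ℂ → ℤ) (d : ℤ) :
    ∏ φ ∈ insert ψ Λ, φ ^ Function.update e ψ d φ = ψ ^ d * ∏ φ ∈ Λ, φ ^ e φ := by
  rw [prod_insert hψ, Function.update_self]
  congr 1
  exact prod_congr rfl fun φ hφ ↦ by rw [Function.update_of_ne (ne_of_mem_of_not_mem hφ hψ)]

/-- The unimodular coefficients `c ψ` for which `c ψ * ψ` has positive average over `T`
(and `c ψ = 0` if the average of `ψ` vanishes). -/
noncomputable def phase (T : Finset G) (ψ : AddChar G ℂ) : ℂ :=
  conj (fourierMean T ψ) / ‖fourierMean T ψ‖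

lemma norm_phase_le_one (T : Finset G) (ψ : AddChar G ℂ) : ‖phase T ψ‖ ≤ 1 := by
  rw [phase, norm_div, Complex.norm_conj, Complex.norm_real, norm_norm]
  exact div_self_le_one _

lemma expect_re_phase_mul (T : Finset G) (ψ : AddChar G ℂ) :
    𝔼 x ∈ T, (phase T ψ * ψ x).re = ‖fourierMean T ψ‖ := by
  rw [← re_expect, ← mul_expect, ← fourierMean, phase, div_mul_eq_mul_div, Complex.conj_mul', sq,
    mul_self_div_self, Complex.ofReal_re]

variable [Finite G]

/-- The Riesz product of `Λ` with coefficients `c`. -/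
noncomputable def rieszProduct (c : AddChar G ℂ → ℂ) (Λ : Finset (AddChar G ℂ)) (x : G) : ℝ :=
  ∏ ψ ∈ Λ, (1 + (c ψ * ψ x).re / 8)

lemma rieszProduct_insert [DecidableEq (AddChar G ℂ)] (c : AddChar G ℂ → ℂ) {ψ : AddChar G ℂ}
    (hψ : ψ ∉ Λ) (x : G) :
    (rieszProduct c (insert ψ Λ) x : ℂ) = rieszProduct c Λ x +
      c ψ / 16 * (ψ x * rieszProduct c Λ x) + conj (c ψ) / 16 * (ψ⁻¹ x * rieszProduct c Λ x) := by
  rw [rieszProduct, prod_insert hψ, ← rieszProduct, AddChar.inv_apply, AddChar.map_neg_eq_conj]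
  push_cast
  rw [Complex.re_eq_add_conj, map_mul]
  ring

lemma norm_expect_mul_rieszProduct_le (hc : ∀ ψ, ‖c ψ‖ ≤ 1) (χ : AddChar G ℂ)
    (h : ∀ e : AddChar G ℂ → ℤ, (∀ ψ, |e ψ| ≤ 1) →
      ‖fourierMean B (χ * ∏ ψ ∈ Λ, ψ ^ e ψ)‖ ≤ θ) :
    ‖𝔼 x ∈ B, χ x * rieszProduct c Λ x‖ ≤ (9 / 8) ^ #Λ * θ := by
  classical
  induction Λ using Finset.induction_on generalizing χ with
  | empty => simpa [rieszProduct, fourierMean] using h 0 (by simp)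
  | insert ψ Λ hψ ih =>
    have shift {d : ℤ} (hd : |d| ≤ 1) :
        ‖𝔼 x ∈ B, (χ * ψ ^ d) x * rieszProduct c Λ x‖ ≤ (9 / 8) ^ #Λ * θ := by
      refine ih _ fun e he ↦ ?_
      have := h (Function.update e ψ d) <|
        (Function.forall_update_iff e fun _ n ↦ |n| ≤ 1).2 ⟨hd, fun φ _ ↦ he φ⟩
      rwa [prod_insert_zpow_update hψ, ← mul_assoc] at this
    have split : 𝔼 x ∈ B, χ x * rieszProduct c (insert ψ Λ) x =
        𝔼 x ∈ B, (χ * ψ ^ (0 : ℤ)) x * rieszProduct c Λ x +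
        c ψ / 16 * 𝔼 x ∈ B, (χ * ψ ^ (1 : ℤ)) x * rieszProduct c Λ x +
        conj (c ψ) / 16 * 𝔼 x ∈ B, (χ * ψ ^ (-1 : ℤ)) x * rieszProduct c Λ x := by
      simp only [mul_expect, ← expect_add_distrib, rieszProduct_insert c hψ, zpow_zero, zpow_one,
        zpow_neg_one, mul_one, AddChar.mul_apply]
      exact expect_congr rfl fun x _ ↦ by ring
    have hcoeff : ‖c ψ / 16‖ ≤ 1 / 16 := by
      rw [norm_div, Complex.norm_ofNat]; gcongr; exact hc ψ
    have hcoeff' : ‖conj (c ψ) / 16‖ ≤ 1 / 16 := by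
      rwa [norm_div, Complex.norm_conj, ← norm_div]
    rw [split, card_insert_of_notMem hψ]
    calc _ ≤ _ := norm_add₃_le
      _ ≤ (9 / 8) ^ #Λ * θ + 1 / 16 * ((9 / 8) ^ #Λ * θ) + 1 / 16 * ((9 / 8) ^ #Λ * θ) := by
        rw [norm_mul, norm_mul]
        gcongr
        exacts [shift (by simp), shift (by simp), shift (by simp)]
      _ = _ := by ring

lemma IsDissociated.expect_rieszProduct_le (hd : IsDissociated B θ Λ) (hB : B.Nonempty)
    (hc : ∀ ψ, ‖c ψ‖ ≤ 1) :
    𝔼 x ∈ B, rieszProduct c Λ x ≤ 1 + ((9 / 8) ^ #Λ - 1) * θ := by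
  classical
  induction Λ using Finset.induction_on with
  | empty => simp [rieszProduct, hB]
  | insert ψ Λ hψ ih =>
    have hmain : ‖𝔼 x ∈ B, ψ x * rieszProduct c Λ x‖ ≤ (9 / 8) ^ #Λ * θ := by
      refine norm_expect_mul_rieszProduct_le hc ψ fun e he ↦ ?_
      have := hd (Function.update e ψ 1)
        ((Function.forall_update_iff e fun _ n ↦ |n| ≤ 1).2 ⟨by simp, fun φ _ ↦ he φ⟩)
        ⟨ψ, mem_insert_self ψ Λ, by simp⟩
      rwa [prod_insert_zpow_update hψ, zpow_one] at this
    have split : 𝔼 x ∈ B, rieszProduct c (insert ψ Λ) x =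
        𝔼 x ∈ B, rieszProduct c Λ x + (c ψ * 𝔼 x ∈ B, ψ x * rieszProduct c Λ x).re / 8 := by
      rw [mul_expect, re_expect, expect_div, ← expect_add_distrib]
      refine expect_congr rfl fun x _ ↦ ?_
      rw [rieszProduct, prod_insert hψ, ← rieszProduct, ← mul_assoc, Complex.re_mul_ofReal]
      ring
    have hre : (c ψ * 𝔼 x ∈ B, ψ x * rieszProduct c Λ x).re ≤ (9 / 8) ^ #Λ * θ :=
      (Complex.re_le_norm _).trans <| (norm_mul_le _ _).trans <|
        (mul_le_of_le_one_left (norm_nonneg _) (hc ψ)).trans hmain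
    rw [split, card_insert_of_notMem hψ, pow_succ]
    linarith [ih (hd.subset (subset_insert ψ Λ))]

lemma abs_re_mul_apply_div_eight_le (hc : ∀ ψ, ‖c ψ‖ ≤ 1) (ψ : AddChar G ℂ) (x : G) :
    |(c ψ * ψ x).re / 8| ≤ 1 / 8 := by
  rw [abs_div, abs_of_pos (by norm_num : (0 : ℝ) < 8)]
  gcongr
  refine (Complex.abs_re_le_norm _).trans ?_
  rw [norm_mul, AddChar.norm_apply, mul_one]
  exact hc ψ

lemma exp_sum_le_rieszProduct (hc : ∀ ψ, ‖c ψ‖ ≤ 1) (Λ : Finset (AddChar G ℂ)) (x : G) :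
    Real.exp (∑ ψ ∈ Λ, ((c ψ * ψ x).re / 8 - 1 / 32)) ≤ rieszProduct c Λ x := by
  rw [Real.exp_sum]
  exact prod_le_prod (fun _ _ ↦ (Real.exp_pos _).le) fun ψ _ ↦
    exp_sub_le_one_add (abs_re_mul_apply_div_eight_le hc ψ x)

lemma exp_le_expect_rieszProduct_phase (hT : T.Nonempty)
    (hspec : ∀ ψ ∈ Λ, 1 / 2 ≤ ‖fourierMean T ψ‖) :
    Real.exp (#Λ / 32) ≤ 𝔼 x ∈ T, rieszProduct (phase T) Λ x := by
  have hmean : #Λ / 32 ≤ 𝔼 x ∈ T, ∑ ψ ∈ Λ, ((phase T ψ * ψ x).re / 8 - 1 / 32) := by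
    rw [expect_sum_comm, div_eq_mul_inv, ← nsmul_eq_mul]
    refine card_nsmul_le_sum _ _ _ fun ψ hψ ↦ ?_
    rw [expect_sub_distrib, expect_const hT, ← expect_div, expect_re_phase_mul]
    linarith [hspec ψ hψ]
  exact (Real.exp_le_exp.2 hmean).trans <| (exp_expect_le hT _).trans <|
    expect_le_expect fun x _ ↦ exp_sum_le_rieszProduct (norm_phase_le_one T) Λ x

lemma IsDissociated.card_mul_exp_le (hd : IsDissociated B ((1 / 2) ^ #Λ) Λ) (hTB : T ⊆ B)
    (hT : T.Nonempty) (hspec : ∀ ψ ∈ Λ, 1 / 2 ≤ ‖fourierMean T ψ‖) :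
    #T * Real.exp (#Λ / 32) ≤ 2 * #B := by
  have hnonneg (x : G) : 0 ≤ rieszProduct (phase T) Λ x :=
    (Real.exp_pos _).le.trans (exp_sum_le_rieszProduct (norm_phase_le_one T) Λ x)
  have hmean : 𝔼 x ∈ B, rieszProduct (phase T) Λ x ≤ 2 := by
    have hpow : (9 / 8 : ℝ) ^ #Λ * (1 / 2) ^ #Λ ≤ 1 := by
      rw [← mul_pow]; exact pow_le_one₀ (by norm_num) (by norm_num)
    have hpos : (0 : ℝ) < (1 / 2) ^ #Λ := by positivity
    linarith [hd.expect_rieszProduct_le (hT.mono hTB) (norm_phase_le_one T)]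
  calc #T * Real.exp (#Λ / 32) ≤ #T * 𝔼 x ∈ T, rieszProduct (phase T) Λ x := by
        gcongr; exact exp_le_expect_rieszProduct_phase hT hspec
    _ ≤ #B * 𝔼 x ∈ B, rieszProduct (phase T) Λ x := by
        rw [card_mul_expect, card_mul_expect]
        exact sum_le_sum_of_subset_of_nonneg hTB fun x _ _ ↦ hnonneg x
    _ ≤ 2 * #B := by rw [mul_comm]; gcongr

lemma norm_fourierMean_inv (X : Finset G) (ψ : AddChar G ℂ) :
    ‖fourierMean X ψ⁻¹‖ = ‖fourierMean X ψ‖ := by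
  simp only [norm_fourierMean, AddChar.inv_apply, AddChar.map_neg_eq_conj, ← map_sum,
    Complex.norm_conj]

lemma IsDissociated.exists_lt_norm_fourierMean_mul_prod [DecidableEq (AddChar G ℂ)]
    {ψ : AddChar G ℂ} (hψ : ψ ∉ Λ) (hd : IsDissociated B θ Λ)
    (hnd : ¬ IsDissociated B θ (insert ψ Λ)) :
    ∃ e : AddChar G ℂ → ℤ, (∀ φ, |e φ| ≤ 1) ∧ θ < ‖fourierMean B (ψ * ∏ φ ∈ Λ, φ ^ e φ)‖ := by
  unfold IsDissociated at hnd
  push Not at hnd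
  obtain ⟨e, he, ⟨φ, hφ, hφe⟩, hlt⟩ := hnd
  rw [prod_insert hψ] at hlt
  have heψ : e ψ ≠ 0 := fun h0 ↦ by
    rw [h0, zpow_zero, one_mul] at hlt
    have hφΛ : φ ∈ Λ := mem_of_mem_insert_of_ne hφ fun h ↦ hφe (h ▸ h0)
    exact hlt.not_ge (hd e he ⟨φ, hφΛ, hφe⟩)
  obtain h | h : e ψ = 1 ∨ e ψ = -1 := by have := abs_le.1 (he ψ); lia
  · exact ⟨e, he, by rwa [h, zpow_one] at hlt⟩
  · refine ⟨-e, fun φ ↦ (abs_neg (e φ)).trans_le (he φ), ?_⟩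
    rw [h, zpow_neg_one, ← norm_fourierMean_inv, mul_inv, inv_inv, ← prod_inv_distrib] at hlt
    simpa only [Pi.neg_apply, zpow_neg] using hlt

lemma exists_isDissociated_subset (hB : B.Nonempty) (hθ : θ < 1) (Δ : Finset (AddChar G ℂ)) :
    ∃ Λ ⊆ Δ, IsDissociated B θ Λ ∧ ∀ ψ ∈ Δ, ∃ e : AddChar G ℂ → ℤ, (∀ φ, |e φ| ≤ 1) ∧
      θ < ‖fourierMean B (ψ * ∏ φ ∈ Λ, φ ^ e φ)‖ := by
  classical
  obtain ⟨Λ, hΛ⟩ := (Δ.powerset.filter (IsDissociated B θ)).exists_maximal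
    ⟨∅, by simp [IsDissociated]⟩
  obtain ⟨hΛΔ, hd⟩ := by simpa only [mem_filter, mem_powerset] using hΛ.prop
  refine ⟨Λ, hΛΔ, hd, fun ψ hψ ↦ ?_⟩
  by_cases hψΛ : ψ ∈ Λ
  · refine ⟨Pi.single ψ (-1), fun φ ↦ ?_, ?_⟩
    · obtain rfl | hne := eq_or_ne φ ψ
      · simp
      · simp [Pi.single_eq_of_ne hne]
    · rw [prod_eq_single_of_mem ψ hψΛ fun φ _ hne ↦ by rw [Pi.single_eq_of_ne hne, zpow_zero],
        Pi.single_eq_same, zpow_neg_one, mul_inv_cancel]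
      simpa [fourierMean, hB] using hθ
  · refine hd.exists_lt_norm_fourierMean_mul_prod hψΛ fun hins ↦ hψΛ ?_
    exact hΛ.le_of_ge (mem_filter.2 ⟨mem_powerset.2 (insert_subset hψ hΛΔ), hins⟩)
      (subset_insert ψ Λ) (mem_insert_self ψ Λ)

theorem exists_card_le_forall_half_le_norm_fourierMean (hTB : T ⊆ B) (hT : T.Nonempty) {n : ℕ}
    (hn : 2 * #B < #T * Real.exp (n / 32)) :
    ∃ Λ : Finset (AddChar G ℂ), #Λ ≤ n ∧ ∀ ψ : AddChar G ℂ, 1 / 2 ≤ ‖fourierMean T ψ‖ →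
      ∃ e : AddChar G ℂ → ℤ, (∀ φ, |e φ| ≤ 1) ∧
        (1 / 2) ^ n < ‖fourierMean B (ψ * ∏ φ ∈ Λ, φ ^ e φ)‖ := by
  classical
  have hn0 : n ≠ 0 := by
    rintro rfl
    have : (#T : ℝ) ≤ #B := mod_cast card_le_card hTB
    simp only [Nat.cast_zero, zero_div, Real.exp_zero, mul_one] at hn
    linarith [Nat.cast_nonneg (α := ℝ) #B]
  obtain ⟨Λ, hΛ, hd, hcover⟩ := exists_isDissociated_subset (hT.mono hTB)
    (pow_lt_one₀ (by norm_num) (by norm_num : (1 / 2 : ℝ) < 1) hn0)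
    (univ.filter fun ψ ↦ 1 / 2 ≤ ‖fourierMean T ψ‖)
  refine ⟨Λ, ?_, fun ψ hψ ↦ hcover ψ (by simpa using hψ)⟩
  by_contra! hlt
  obtain ⟨Λ', hΛ', rfl⟩ := exists_subset_card_eq hlt.le
  exact hn.not_ge <| (hd.subset hΛ').card_mul_exp_le hTB hT fun ψ hψ ↦
    (mem_filter.1 (hΛ (hΛ' hψ))).2

end Chang

section RegularFourier

variable {G : Type*} [AddCommGroup G]

lemma norm_sum_sub_sum_le_of_subset [Finite G] {s t : Finset G} (h : s ⊆ t) (ψ : AddChar G ℂ) :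
    ‖∑ x ∈ t, ψ x - ∑ x ∈ s, ψ x‖ ≤ #t - #s := by
  classical
  rw [← sum_sdiff h, add_sub_cancel_right, ← cast_card_sdiff h]
  exact (norm_sum_le _ _).trans_eq (by simp [AddChar.norm_apply])

lemma IsRegular.norm_fourierMean_mul_norm_one_sub_le [Fintype G] {κ ρ : ℝ} {m : ℕ}
    {Γ : Finset (AddChar G ℂ)} (hκ : 0 ≤ κ) (hρ : 0 ≤ ρ) (hreg : IsRegular κ m Γ ρ)
    (ψ : AddChar G ℂ) {x : G} (hx : x ∈ bohrSet Γ (κ * ρ)) :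
    ‖fourierMean (bohrSet Γ ρ) ψ‖ * ‖1 - ψ x‖ ≤ 2 / m := by
  have hκρ : 0 ≤ κ * ρ := by positivity
  have hshell : (#(bohrSet Γ ρ) : ℝ) - #(bohrSet Γ (ρ - κ * ρ)) ≤ #(bohrSet Γ ρ) / m := by
    linarith [hreg.card_bohrSet_sub_card_le hκρ,
      card_bohrSet_mono (Γ := Γ) (by linarith : ρ ≤ ρ + κ * ρ)]
  have hinner : bohrSet Γ (ρ - κ * ρ) ⊆ (bohrSet Γ ρ).map (addRightEmbedding x) := fun y hy ↦
    mem_map.2 ⟨y - x, sub_mem_bohrSet hy hx (by linarith), sub_add_cancel y x⟩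
  have hself := norm_sum_sub_sum_le_of_subset
    (bohrSet_mono (Γ := Γ) (by linarith : ρ - κ * ρ ≤ ρ)) ψ
  have hshift := norm_sum_sub_sum_le_of_subset hinner ψ
  simp only [sum_map, addRightEmbedding_apply, AddChar.map_add_eq_mul, ← sum_mul, card_map]
    at hshift
  have htriangle := norm_sub_le_norm_sub_add_norm_sub (∑ y ∈ bohrSet Γ ρ, ψ y)
    (∑ y ∈ bohrSet Γ (ρ - κ * ρ), ψ y) ((∑ y ∈ bohrSet Γ ρ, ψ y) * ψ x)
  rw [norm_sub_rev (∑ y ∈ bohrSet Γ (ρ - κ * ρ), ψ y), ← mul_one_sub, norm_mul] at htriangle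
  rw [norm_fourierMean, div_mul_eq_mul_div, div_le_iff₀ (card_bohrSet_pos hρ)]
  calc _ ≤ (#(bohrSet Γ ρ) : ℝ) / m + #(bohrSet Γ ρ) / m := by linarith
    _ = _ := by ring

end RegularFourier

/-! ### Moments of correlations and sifting -/

section Moments

variable {G : Type*} [AddCommGroup G] [Fintype G]

/-- The unnormalised convolution square `f ∗ f`. -/
def conv (f : G → ℝ) (x : G) : ℝ := ∑ y, f y * f (x - y)

/-- The unnormalised autocorrelation `f ∘ f`, in the convention `(f ∘ f) x = ∑ y, f (x + y) f y`. -/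
def corr (f : G → ℝ) (x : G) : ℝ := ∑ y, f (x + y) * f y

lemma sum_sum_mul_sum_pow {α β γ : Type*} [Fintype β] (D : Finset α) (E : Finset γ)
    (F : α → γ → ℝ) (f : β → α → ℝ) (g : β → γ → ℝ) (k : ℕ) :
    ∑ d ∈ D, ∑ e ∈ E, F d e * (∑ b, f b d * g b e) ^ k =
      ∑ b : Fin k → β, ∑ d ∈ D, ∑ e ∈ E, F d e * ((∏ i, f (b i) d) * ∏ i, g (b i) e) := by
  simp only [Fintype.sum_pow, prod_mul_distrib, mul_sum]
  rw [sum_congr rfl fun d _ ↦ sum_comm, sum_comm]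

lemma corr_sub (f : G → ℝ) (d e : G) : corr f (d - e) = ∑ b, f (b + d) * f (b + e) := by
  rw [corr, ← Equiv.sum_comp (Equiv.addRight e)]
  refine sum_congr rfl fun b _ ↦ ?_
  rw [Equiv.coe_addRight, show d - e + (b + e) = b + d by abel]

lemma corr_sub_reflected (f : G → ℝ) (s d e : G) :
    corr f (d - e) = ∑ b, f (s - e - b) * f (s - d - b) := by
  rw [corr, ← Equiv.sum_comp (Equiv.subLeft (s - d))]
  refine sum_congr rfl fun b _ ↦ ?_
  rw [Equiv.subLeft_apply, show d - e + (s - d - b) = s - e - b by abel]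

lemma conv_add_sub (f : G → ℝ) (s d e : G) :
    conv f (s + (d - e)) = ∑ b, f (b + d) * f (s - e - b) := by
  rw [conv, ← Equiv.sum_comp (Equiv.addRight d)]
  refine sum_congr rfl fun b _ ↦ ?_
  rw [Equiv.coe_addRight, show s + (d - e) - (b + d) = s - e - b by abel]

lemma sum_corr_pow (f : G → ℝ) (D : Finset G) (k : ℕ) :
    ∑ d ∈ D, ∑ e ∈ D, corr f (d - e) ^ k =
      ∑ b : Fin k → G, (∑ d ∈ D, ∏ i, f (b i + d)) ^ 2 := by
  simpa only [corr_sub, one_mul, sq, sum_mul_sum] using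
    sum_sum_mul_sum_pow D D (fun _ _ ↦ 1) (fun b d ↦ f (b + d)) (fun b e ↦ f (b + e)) k

lemma sum_corr_pow_reflected (f : G → ℝ) (D : Finset G) (s : G) (k : ℕ) :
    ∑ d ∈ D, ∑ e ∈ D, corr f (d - e) ^ k =
      ∑ b : Fin k → G, (∑ d ∈ D, ∏ i, f (s - d - b i)) ^ 2 := by
  rw [sum_comm]
  simpa only [corr_sub_reflected f s, one_mul, sq, sum_mul_sum] using
    sum_sum_mul_sum_pow D D (fun _ _ ↦ 1) (fun b d ↦ f (s - d - b)) (fun b e ↦ f (s - e - b)) k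

lemma sum_corr_pow_nonneg (f : G → ℝ) (D : Finset G) (k : ℕ) :
    0 ≤ ∑ d ∈ D, ∑ e ∈ D, corr f (d - e) ^ k := by
  rw [sum_corr_pow]
  positivity

lemma sum_conv_pow_le_sum_corr_pow (f : G → ℝ) (D : Finset G) (s : G) (k : ℕ) :
    ∑ d ∈ D, ∑ e ∈ D, conv f (s + (d - e)) ^ k ≤ ∑ d ∈ D, ∑ e ∈ D, corr f (d - e) ^ k := by
  let u : (Fin k → G) → ℝ := fun b ↦ ∑ d ∈ D, ∏ i, f (b i + d)
  let v : (Fin k → G) → ℝ := fun b ↦ ∑ d ∈ D, ∏ i, f (s - d - b i)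
  have sum_conv_pow : ∑ d ∈ D, ∑ e ∈ D, conv f (s + (d - e)) ^ k = ∑ b, u b * v b := by
    simpa only [u, v, conv_add_sub, one_mul, sum_mul_sum] using
      sum_sum_mul_sum_pow D D (fun _ _ ↦ 1) (fun b d ↦ f (b + d)) (fun b e ↦ f (s - e - b)) k
  have am_gm : ∑ b, u b * v b ≤ ∑ b, (u b ^ 2 + v b ^ 2) / 2 :=
    sum_le_sum fun b _ ↦ by linarith [two_mul_le_add_sq (u b) (v b)]
  rw [← sum_div, sum_add_distrib, ← sum_corr_pow, ← sum_corr_pow_reflected] at am_gm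
  linarith

end Moments

section Unbalancing

lemma three_pow_le_choose (p : ℕ) : 3 ^ p ≤ (3 * p).choose p := by
  induction p with
  | zero => simp
  | succ p ih =>
    calc 3 ^ (p + 1) ≤ (3 * p).choose p * (3).choose 1 := by
          rw [pow_succ, Nat.choose_one_right]; gcongr
      _ ≤ (3 * p + 3).choose (p + 1) := by
          rw [Nat.add_choose_eq]
          exact single_le_sum (f := fun ij ↦ (3 * p).choose ij.1 * (3).choose ij.2)
            (fun _ _ ↦ Nat.zero_le _) (mem_antidiagonal.2 (rfl : (p, 1).1 + (p, 1).2 = p + 1))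

variable {ι : Type*} {P : Finset ι} {g h : ι → ℝ} {p : ℕ}

lemma mul_pow_mul_card_le_sum_one_add_pow {c : ℝ} (hg : ∀ k, 0 ≤ ∑ i ∈ P, g i ^ k)
    (hgp : c ^ p * #P ≤ ∑ i ∈ P, g i ^ p) :
    (3 * c) ^ p * #P ≤ ∑ i ∈ P, (1 + g i) ^ (3 * p) := by
  have expand : ∑ i ∈ P, (1 + g i) ^ (3 * p) =
      ∑ k ∈ range (3 * p + 1), (∑ i ∈ P, g i ^ k) * (3 * p).choose k := by
    simp only [add_comm (1 : ℝ), add_pow, one_pow, mul_one, sum_mul]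
    rw [sum_comm]
  calc (3 * c) ^ p * #P = c ^ p * #P * 3 ^ p := by rw [mul_pow]; ring
    _ ≤ (∑ i ∈ P, g i ^ p) * (3 * p).choose p := by
        gcongr
        · exact hg p
        · exact_mod_cast three_pow_le_choose p
    _ ≤ ∑ k ∈ range (3 * p + 1), (∑ i ∈ P, g i ^ k) * (3 * p).choose k :=
        single_le_sum (f := fun k ↦ (∑ i ∈ P, g i ^ k) * ((3 * p).choose k : ℝ))
          (fun k _ ↦ mul_nonneg (hg k) (Nat.cast_nonneg _)) (mem_range.2 (by lia))
    _ = _ := expand.symm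

lemma pow_le_mul_pow_add_pow {q : ℕ} {x y : ℝ} (hq : Even q) (hy : 0 ≤ y)
    (hxy : |y - x| ≤ 1 / 60) : x ^ q ≤ (76 / 75) ^ q * (y ^ q + (5 / 4) ^ q) := by
  obtain ⟨hl, hu⟩ := abs_le.1 hxy
  have hx : |x| ≤ 76 / 75 * max y (5 / 4) := by
    rw [abs_le]
    constructor <;> linarith [le_max_left y (5 / 4), le_max_right y (5 / 4)]
  calc x ^ q = |x| ^ q := (hq.pow_abs x).symm
    _ ≤ (76 / 75 * max y (5 / 4)) ^ q := by gcongr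
    _ = (76 / 75) ^ q * max y (5 / 4) ^ q := mul_pow _ _ _
    _ ≤ (76 / 75) ^ q * (y ^ q + (5 / 4) ^ q) := by
        gcongr
        rcases max_choice y (5 / 4) with hmax | hmax <;> rw [hmax]
        · exact le_add_of_nonneg_right (by positivity)
        · exact le_add_of_nonneg_left (by positivity)

/-- The Kelley–Meka unbalancing step. -/
lemma pow_mul_card_le_sum_pow_of_unbalanced (hp : Even p) (hp6 : 6 ≤ p)
    (hg : ∀ k, 0 ≤ ∑ i ∈ P, g i ^ k) (hgp : (4 / 5 : ℝ) ^ p * #P ≤ ∑ i ∈ P, g i ^ p)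
    (hh : ∀ i ∈ P, 0 ≤ h i) (hhg : ∀ i ∈ P, |h i - (1 + g i)| ≤ 1 / 60) :
    (5 / 4 : ℝ) ^ (3 * p) * #P ≤ ∑ i ∈ P, h i ^ (3 * p) := by
  have upper : ((76 / 75) ^ 3 * (13 / 10) ^ 3) ^ p * #P ≤
      (76 / 75) ^ (3 * p) * (∑ i ∈ P, h i ^ (3 * p) + #P * (5 / 4 : ℝ) ^ (3 * p)) := by
    calc ((76 / 75) ^ 3 * (13 / 10) ^ 3 : ℝ) ^ p * #P ≤ (3 * (4 / 5)) ^ p * #P := by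
          gcongr ?_ ^ p * _; norm_num
      _ ≤ ∑ i ∈ P, (1 + g i) ^ (3 * p) := mul_pow_mul_card_le_sum_one_add_pow hg hgp
      _ ≤ ∑ i ∈ P, (76 / 75) ^ (3 * p) * (h i ^ (3 * p) + (5 / 4) ^ (3 * p)) :=
          sum_le_sum fun i hi ↦ pow_le_mul_pow_add_pow (hp.mul_left 3) (hh i hi) (hhg i hi)
      _ = _ := by rw [← mul_sum, sum_add_distrib, sum_const, nsmul_eq_mul]
  rw [mul_pow, ← pow_mul, ← pow_mul, mul_assoc] at upper
  have growth : 2 * (5 / 4 : ℝ) ^ (3 * p) ≤ (13 / 10) ^ (3 * p) := by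
    calc 2 * (5 / 4 : ℝ) ^ (3 * p) ≤ (26 / 25) ^ 18 * (5 / 4) ^ (3 * p) := by gcongr; norm_num
      _ ≤ (26 / 25) ^ (3 * p) * (5 / 4) ^ (3 * p) := by
          gcongr ?_ * _; exact pow_le_pow_right₀ (by norm_num) (by lia)
      _ = (13 / 10) ^ (3 * p) := by rw [← mul_pow]; norm_num
  linarith [le_of_mul_le_mul_left upper (by positivity),
    mul_le_mul_of_nonneg_right growth (Nat.cast_nonneg (α := ℝ) #P)]

end Unbalancing

section Sifting

variable {G : Type*} [AddCommGroup G] {A D : Finset G} {q : ℕ} {v : G → ℝ} {M τ η : ℝ}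

open Classical in
/-- The `d ∈ D` with `b i + d ∈ A` for all `i`: the part of `D` kept when sifting by `b`. -/
noncomputable def sift (A D : Finset G) (b : Fin q → G) : Finset G := {d ∈ D | ∀ i, b i + d ∈ A}

lemma sift_subset (A D : Finset G) (b : Fin q → G) : sift A D b ⊆ D := by
  classical exact filter_subset _ _

lemma prod_ind (A : Finset G) (b : Fin q → G) (d : G) [Decidable (∀ i, b i + d ∈ A)] :
    ∏ i, ind A (b i + d) = if ∀ i, b i + d ∈ A then 1 else 0 := by
  split_ifs with hall
  · exact prod_eq_one fun i _ ↦ by simp [hall i]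
  · obtain ⟨i, hi⟩ := not_forall.1 hall
    exact prod_eq_zero (mem_univ i) (by simp [hi])

lemma sum_sift (A D : Finset G) (b : Fin q → G) (u : G → ℝ) :
    ∑ d ∈ sift A D b, u d = ∑ d ∈ D, u d * ∏ i, ind A (b i + d) := by
  classical
  rw [sift, sum_filter]
  exact sum_congr rfl fun d _ ↦ by rw [prod_ind, mul_ite, mul_one, mul_zero]

variable [Fintype G]

lemma sum_card_sift (A D : Finset G) (q : ℕ) :
    ∑ b : Fin q → G, (#(sift A D b) : ℝ) = #D * (#A : ℝ) ^ q := by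
  have card_translates (d : G) : ∑ b : Fin q → G, ∏ i, ind A (b i + d) = (#A : ℝ) ^ q := by
    rw [← Fintype.sum_pow fun a ↦ ind A (a + d)]
    congr 1
    exact (Equiv.sum_comp (Equiv.addRight d) (ind A)).trans (sum_ind A)
  calc ∑ b : Fin q → G, (#(sift A D b) : ℝ)
      = ∑ b : Fin q → G, ∑ d ∈ D, ∏ i, ind A (b i + d) := by
        refine sum_congr rfl fun b _ ↦ ?_
        simpa using sum_sift A D b fun _ ↦ 1
    _ = #D * (#A : ℝ) ^ q := by
        rw [sum_comm, sum_congr rfl fun d _ ↦ card_translates d, sum_const, nsmul_eq_mul]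

lemma sum_sum_sift (A D : Finset G) (q : ℕ) (v : G → ℝ) :
    ∑ b : Fin q → G, ∑ d ∈ sift A D b, ∑ e ∈ sift A D b, v (d - e) =
      ∑ d ∈ D, ∑ e ∈ D, v (d - e) * corr (ind A) (d - e) ^ q := by
  simp only [corr_sub]
  rw [sum_sum_mul_sum_pow D D (fun d e ↦ v (d - e)) (fun b d ↦ ind A (b + d))
    (fun b e ↦ ind A (b + e))]
  refine sum_congr rfl fun b _ ↦ ?_
  simp only [sum_sift, sum_mul]
  exact sum_congr rfl fun d _ ↦ sum_congr rfl fun e _ ↦ by ring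

lemma exists_sift (hD : D.Nonempty) (hM : 0 < M) (hτ : 0 ≤ τ) (hη : 0 < η) (hv : ∀ x, 0 ≤ v x)
    (hlarge : M * (#D : ℝ) ^ 2 ≤ ∑ d ∈ D, ∑ e ∈ D, corr (ind A) (d - e) ^ q)
    (hτM : τ * (#A : ℝ) ^ q ≤ M / 4) (hsmall : ∀ x, v x * corr (ind A) x ^ q ≤ η * M / 2) :
    ∃ A' ⊆ D, A'.Nonempty ∧ τ * #D ≤ #A' ∧
      ∑ d ∈ A', ∑ e ∈ A', v (d - e) ≤ η * (#A' : ℝ) ^ 2 := by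
  set bad : (Fin q → G) → ℝ := fun b ↦ ∑ d ∈ sift A D b, ∑ e ∈ sift A D b, v (d - e)
  have bad_nonneg (b) : 0 ≤ bad b := sum_nonneg fun _ _ ↦ sum_nonneg fun _ _ ↦ hv _
  have sum_bad : ∑ b, bad b ≤ η * (M / 2 * (#D : ℝ) ^ 2) := by
    calc ∑ b, bad b = ∑ d ∈ D, ∑ e ∈ D, v (d - e) * corr (ind A) (d - e) ^ q :=
          sum_sum_sift A D q v
      _ ≤ ∑ d ∈ D, ∑ e ∈ D, η * M / 2 := by gcongr; exact hsmall _
      _ = η * (M / 2 * (#D : ℝ) ^ 2) := by simp only [sum_const, nsmul_eq_mul]; ring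
  have sum_card_sq : ∑ b : Fin q → G, (#(sift A D b) : ℝ) ^ 2 =
      ∑ d ∈ D, ∑ e ∈ D, corr (ind A) (d - e) ^ q := by
    simpa [sq] using sum_sum_sift A D q fun _ ↦ 1
  have hDpos : (0 : ℝ) < #D := by exact_mod_cast hD.card_pos
  obtain ⟨b, -, hb⟩ : ∃ b ∈ (univ : Finset (Fin q → G)),
      τ * #D * #(sift A D b) + bad b / η < (#(sift A D b) : ℝ) ^ 2 := by
    refine exists_lt_of_sum_lt ?_
    rw [sum_add_distrib, ← mul_sum, ← sum_div, sum_card_sift, sum_card_sq]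
    refine lt_of_lt_of_le ?_ hlarge
    have : (∑ b, bad b) / η ≤ M / 2 * (#D : ℝ) ^ 2 := (div_le_iff₀' hη).2 sum_bad
    nlinarith [mul_le_mul_of_nonneg_right hτM (sq_nonneg (#D : ℝ)), mul_pos hM (pow_pos hDpos 2)]
  have bad_div_nonneg : 0 ≤ bad b / η := div_nonneg (bad_nonneg b) hη.le
  have hne : (sift A D b).Nonempty := by
    by_contra! hempty
    rw [hempty] at hb
    simp only [card_empty, Nat.cast_zero] at hb
    linarith
  have hpos : (0 : ℝ) < #(sift A D b) := by exact_mod_cast hne.card_pos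
  refine ⟨sift A D b, sift_subset A D b, hne, ?_, ?_⟩
  · exact le_of_mul_le_mul_right (by linarith) hpos
  · rw [← div_le_iff₀' hη]
    have : 0 ≤ τ * #D * #(sift A D b) := by positivity
    linarith

end Sifting

section Localisation

variable {G : Type*} [AddCommGroup G] {A B C : Finset G}

lemma card_filter_sub_mem {a : G} (hC : ∀ b ∈ B, a - b ∈ C)
    [DecidablePred fun y ↦ a - y ∈ B] : #{y ∈ C | a - y ∈ B} = #B :=
  card_bij' (fun y _ ↦ a - y) (fun b _ ↦ a - b) (fun y hy ↦ (mem_filter.1 hy).2)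
    (fun b hb ↦ mem_filter.2 ⟨hC b hb, by rwa [sub_sub_cancel]⟩) (by simp) (by simp)

lemma sum_sum_filter_sub_mem (hC : ∀ a ∈ A, ∀ b ∈ B, a - b ∈ C)
    [∀ a y : G, Decidable (a - y ∈ B)] (u : G → ℝ) :
    ∑ y ∈ C, ∑ a ∈ A with a - y ∈ B, u a = #B * ∑ a ∈ A, u a := by
  simp only [sum_filter]
  rw [sum_comm, mul_sum]
  refine sum_congr rfl fun a ha ↦ ?_
  rw [← sum_filter, sum_const, card_filter_sub_mem (hC a ha), nsmul_eq_mul]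

lemma exists_localised_subset {A' D : Finset G} {v : G → ℝ} {τ η : ℝ} (hA' : A'.Nonempty)
    (hB : B.Nonempty) (hC : ∀ a ∈ A', ∀ b ∈ B, a - b ∈ C) (hCD : (#C : ℝ) ≤ 2 * #D)
    (hτ : 0 ≤ τ) (hη : 0 < η) (hτA' : τ * #D ≤ #A') (hv : ∀ x, 0 ≤ v x)
    (hvη : ∑ d ∈ A', ∑ e ∈ A', v (d - e) ≤ η * (#A' : ℝ) ^ 2) :
    ∃ y, ∃ A₂ ⊆ A', (∀ a ∈ A₂, a - y ∈ B) ∧ τ / 8 * #B ≤ #A₂ ∧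
      ∑ d ∈ A', ∑ e ∈ A₂, v (d - e) ≤ 2 * η * (#A' * #A₂) := by
  classical
  let part (y : G) : Finset G := {a ∈ A' | a - y ∈ B}
  let bad (e : G) : ℝ := ∑ d ∈ A', v (d - e)
  have hA'pos : (0 : ℝ) < #A' := by exact_mod_cast hA'.card_pos
  have hBpos : (0 : ℝ) < #B := by exact_mod_cast hB.card_pos
  have sum_bad : (∑ y ∈ C, ∑ e ∈ part y, bad e) / (2 * η * #A') ≤ #B * #A' / 2 := by
    rw [sum_sum_filter_sub_mem hC, div_le_iff₀ (by positivity), sum_comm]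
    nlinarith [mul_le_mul_of_nonneg_left hvη hBpos.le]
  have sum_card_part : ∑ y ∈ C, (#(part y) : ℝ) = #B * #A' := by
    simpa [part] using sum_sum_filter_sub_mem hC fun _ ↦ 1
  obtain ⟨y, -, hy⟩ : ∃ y ∈ C,
      τ / 8 * #B + (∑ e ∈ part y, bad e) / (2 * η * #A') < #(part y) := by
    refine exists_lt_of_sum_lt ?_
    rw [sum_add_distrib, ← sum_div, sum_const, nsmul_eq_mul, sum_card_part]
    have : #C * (τ / 8 * #B) ≤ #B * #A' / 4 := by
      calc #C * (τ / 8 * #B) ≤ 2 * #D * (τ / 8 * #B) := by gcongr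
        _ = τ * #D * (#B / 4) := by ring
        _ ≤ #A' * (#B / 4) := by gcongr
        _ = #B * #A' / 4 := by ring
    linarith [mul_pos hBpos hA'pos]
  have bad_nonneg : 0 ≤ (∑ e ∈ part y, bad e) / (2 * η * #A') :=
    div_nonneg (sum_nonneg fun _ _ ↦ sum_nonneg fun _ _ ↦ hv _) (by positivity)
  refine ⟨y, part y, filter_subset _ _, fun a ha ↦ (mem_filter.1 ha).2, by linarith, ?_⟩
  rw [sum_comm, ← mul_assoc, ← div_le_iff₀' (by positivity)]
  have : 0 ≤ τ / 8 * #B := by positivity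
  linarith

end Localisation

/-! ### Croot–Sisask almost periodicity -/

section Sampling

variable {α : Type*} {A : Finset α} {k : ℕ} {u v : α → ℝ} {t ε : ℝ}

/-- The tuples of length `k` with entries in `A`. -/
abbrev tuples (A : Finset α) (k : ℕ) : Finset (Fin k → α) := Fintype.piFinset fun _ ↦ A

lemma sum_exp_mul_le (hu : ∀ a ∈ A, |u a| ≤ 1) (hsum : ∑ a ∈ A, u a = 0) (ht : |t| ≤ 1) :
    ∑ a ∈ A, Real.exp (t * u a) ≤ #A * Real.exp (t ^ 2) := by
  have quadratic (a) (ha : a ∈ A) : Real.exp (t * u a) ≤ 1 + t * u a + t ^ 2 := by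
    have htu : |t * u a| ≤ |t| := by
      rw [abs_mul]
      exact mul_le_of_le_one_right (abs_nonneg t) (hu a ha)
    linarith [(abs_le.1 (Real.abs_exp_sub_one_sub_id_le (htu.trans ht))).2, sq_le_sq.2 htu]
  calc ∑ a ∈ A, Real.exp (t * u a) ≤ ∑ a ∈ A, (1 + t * u a + t ^ 2) := sum_le_sum quadratic
    _ = #A * (t ^ 2 + 1) := by
        simp only [sum_add_distrib, ← mul_sum, hsum, sum_const, nsmul_eq_mul]
        ring
    _ ≤ #A * Real.exp (t ^ 2) := by gcongr; exact Real.add_one_le_exp _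

lemma card_filter_lt_sum_le (hu : ∀ a ∈ A, |u a| ≤ 1) (hsum : ∑ a ∈ A, u a = 0) (hε : 0 ≤ ε)
    (hε1 : ε ≤ 1) :
    (#{c ∈ tuples A k | ε * k < ∑ i, u (c i)} : ℝ) ≤
      Real.exp (-(k * ε ^ 2 / 4)) * (#A : ℝ) ^ k := by
  set tail : Finset (Fin k → α) := {c ∈ tuples A k | ε * k < ∑ i, u (c i)}
  have hε2 : |ε / 2| ≤ 1 := by rw [abs_of_nonneg (by linarith)]; linarith
  have exponential_moment :
      ∑ c ∈ tuples A k, Real.exp (ε / 2 * ∑ i, u (c i)) ≤ (#A * Real.exp ((ε / 2) ^ 2)) ^ k := by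
    simp only [mul_sum, Real.exp_sum]
    rw [tuples, ← sum_pow' A fun a ↦ Real.exp (ε / 2 * u a)]
    gcongr
    exact sum_exp_mul_le hu hsum hε2
  have markov : #tail * Real.exp (k * ε ^ 2 / 2) ≤
      ∑ c ∈ tuples A k, Real.exp (ε / 2 * ∑ i, u (c i)) := by
    calc #tail * Real.exp (k * ε ^ 2 / 2) = ∑ c ∈ tail, Real.exp (k * ε ^ 2 / 2) := by
          rw [sum_const, nsmul_eq_mul]
      _ ≤ ∑ c ∈ tail, Real.exp (ε / 2 * ∑ i, u (c i)) := by
          gcongr with c hc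
          nlinarith [(mem_filter.1 hc).2]
      _ ≤ ∑ c ∈ tuples A k, Real.exp (ε / 2 * ∑ i, u (c i)) :=
          sum_le_sum_of_subset_of_nonneg (filter_subset _ _) fun _ _ _ ↦ (Real.exp_pos _).le
  rw [← le_div_iff₀ (Real.exp_pos _)] at markov
  calc (#tail : ℝ) ≤ (#A * Real.exp ((ε / 2) ^ 2)) ^ k / Real.exp (k * ε ^ 2 / 2) :=
        markov.trans (by gcongr)
    _ = Real.exp (k * (ε / 2) ^ 2 - k * ε ^ 2 / 2) * (#A : ℝ) ^ k := by
        rw [mul_pow, ← Real.exp_nat_mul, Real.exp_sub]; ring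
    _ = Real.exp (-(k * ε ^ 2 / 4)) * (#A : ℝ) ^ k := by congr 2; ring

lemma card_filter_lt_abs_expect_sub_le (hA : A.Nonempty) (hv₀ : ∀ a, 0 ≤ v a)
    (hv₁ : ∀ a, v a ≤ 1) (hk : 0 < k) (hε : 0 ≤ ε) (hε1 : ε ≤ 1) :
    (#{c ∈ tuples A k | ε < |(𝔼 i, v (c i)) - 𝔼 a ∈ A, v a|} : ℝ) ≤
      2 * Real.exp (-(k * ε ^ 2 / 4)) * (#A : ℝ) ^ k := by
  classical
  have : (0 : ℝ) < k := by exact_mod_cast hk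
  set μ := 𝔼 a ∈ A, v a with hμ
  have centred : ∑ a ∈ A, (v a - μ) = 0 := by
    rw [sum_sub_distrib, sum_const, nsmul_eq_mul, hμ, card_mul_expect, sub_self]
  have bounded (a) (_ : a ∈ A) : |v a - μ| ≤ 1 :=
    abs_sub_le_of_nonneg_of_le (hv₀ a) (hv₁ a) (expect_nonneg fun a _ ↦ hv₀ a)
      (expect_le hA fun a _ ↦ hv₁ a)
  have upper_tail := card_filter_lt_sum_le (k := k) bounded centred hε hε1
  have lower_tail := card_filter_lt_sum_le (k := k) (u := fun a ↦ -(v a - μ))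
    (fun a ha ↦ (abs_neg _).trans_le (bounded a ha)) (by rw [sum_neg_distrib, centred, neg_zero])
    hε hε1
  have rescale (c : Fin k → α) : ∑ i, (v (c i) - μ) = ((𝔼 i, v (c i)) - μ) * k := by
    rw [sum_sub_distrib, sum_const, card_univ, Fintype.card_fin, nsmul_eq_mul,
      Fintype.expect_eq_sum_div_card, Fintype.card_fin]
    field_simp
  have cover : {c ∈ tuples A k | ε < |(𝔼 i, v (c i)) - μ|} ⊆
      {c ∈ tuples A k | ε * k < ∑ i, (v (c i) - μ)} ∪
        {c ∈ tuples A k | ε * k < ∑ i, -(v (c i) - μ)} := by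
    intro c hc
    simp only [mem_union, mem_filter, sum_neg_distrib, rescale, ← neg_mul] at hc ⊢
    exact (lt_abs.1 hc.2).imp (fun h ↦ ⟨hc.1, by gcongr⟩) fun h ↦ ⟨hc.1, by gcongr⟩
  have := (card_le_card cover).trans (card_union_le _ _)
  rify at this
  linarith

lemma half_card_le_card_filter_le {ι : Type*} {s : Finset ι} {f : ι → ℝ} {c : ℝ} (hc : 0 ≤ c)
    (hf : ∀ i ∈ s, 0 ≤ f i) (hsum : ∑ i ∈ s, f i ≤ #s * c) :
    (#s : ℝ) / 2 ≤ #{i ∈ s | f i ≤ 2 * c} := by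
  by_contra! hfew
  have split : (#{i ∈ s | f i ≤ 2 * c} : ℝ) + #{i ∈ s | ¬ f i ≤ 2 * c} = #s := by
    exact_mod_cast card_filter_add_card_filter_not (s := s) _
  have many : (#s : ℝ) / 2 < #{i ∈ s | ¬ f i ≤ 2 * c} := by linarith
  have hne : ({i ∈ s | ¬ f i ≤ 2 * c} : Finset ι).Nonempty := by
    rw [← card_pos, ← Nat.cast_pos (α := ℝ)]
    exact lt_of_le_of_lt (by positivity) many
  have : #{i ∈ s | ¬ f i ≤ 2 * c} * (2 * c) < ∑ i ∈ s, f i := by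
    calc #{i ∈ s | ¬ f i ≤ 2 * c} * (2 * c) = ∑ i ∈ s with ¬ f i ≤ 2 * c, 2 * c := by
          rw [sum_const, nsmul_eq_mul]
      _ < ∑ i ∈ s with ¬ f i ≤ 2 * c, f i :=
          sum_lt_sum_of_nonempty hne fun i hi ↦ not_le.1 (mem_filter.1 hi).2
      _ ≤ ∑ i ∈ s, f i := sum_le_sum_of_subset_of_nonneg (filter_subset _ _) fun i hi _ ↦ hf i hi
  nlinarith

lemma card_filter_sub_mem_eq_card {H : Type*} [AddGroup H] {P Q : Finset H} {s : H}
    [DecidablePred fun u ↦ u - s ∈ P] (hQ : ∀ c ∈ P, c + s ∈ Q) : #{u ∈ Q | u - s ∈ P} = #P :=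
  card_bij' (fun u _ ↦ u - s) (fun c _ ↦ c + s) (fun u hu ↦ (mem_filter.1 hu).2)
    (fun c hc ↦ mem_filter.2 ⟨hQ c hc, by rwa [add_sub_cancel_right]⟩) (by simp) (by simp)

lemma exists_card_mul_card_le_card_mul_card_filter {H ι : Type*} [AddGroup H] {P Q : Finset H}
    {B : Finset ι} {σ : ι → H} [∀ u t, Decidable (u - σ t ∈ P)] (hne : Q.Nonempty)
    (hQ : ∀ c ∈ P, ∀ t ∈ B, c + σ t ∈ Q) :
    ∃ u, #P * #B ≤ #Q * #{t ∈ B | u - σ t ∈ P} := by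
  have double_count : ∑ u ∈ Q, #{t ∈ B | u - σ t ∈ P} = #P * #B := by
    calc ∑ u ∈ Q, #{t ∈ B | u - σ t ∈ P} = ∑ t ∈ B, #{u ∈ Q | u - σ t ∈ P} :=
          sum_card_bipartiteAbove_eq_sum_card_bipartiteBelow fun u t ↦ u - σ t ∈ P
      _ = ∑ _t ∈ B, #P :=
          sum_congr rfl fun t ht ↦ card_filter_sub_mem_eq_card fun c hc ↦ hQ c hc t ht
      _ = #P * #B := by rw [sum_const, smul_eq_mul, mul_comm]
  by_contra! hlt
  have := sum_lt_sum_of_nonempty hne fun u _ ↦ hlt u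
  rw [← mul_sum, double_count, sum_const, smul_eq_mul] at this
  exact lt_irrefl _ this

end Sampling

section AlmostPeriods

variable {G : Type*} [AddCommGroup G] {A B S X Y : Finset G} {k : ℕ} {ε : ℝ}

lemma abs_avg_apply_add_sub_le {E : Finset G} {F : G → ℝ} {w : G} {c : ℝ} (hA : A.Nonempty)
    (hc : 0 ≤ c) (hF₀ : ∀ x, 0 ≤ F x) (hF₁ : ∀ x, F x ≤ 1)
    (h : ∀ x ∉ E, |F (x + w) - F x| ≤ c) (x : G) :
    |avg A F (x + w) - avg A F x| ≤ c + #E / #A := by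
  classical
  have pointwise (a) (_ : a ∈ A) : |F (x + w + a) - F (x + a)| ≤ c + ind E (x + a) := by
    rw [add_right_comm x w a]
    by_cases hE : x + a ∈ E
    · rw [ind, Set.indicator_of_mem (mem_coe.2 hE), Pi.one_apply]
      linarith [abs_sub_le_of_nonneg_of_le (hF₀ (x + a + w)) (hF₁ (x + a + w)) (hF₀ (x + a))
        (hF₁ (x + a))]
    · rw [ind, Set.indicator_of_notMem (mem_coe.not.2 hE), add_zero]
      exact h _ hE
  have card_shift : ∑ a ∈ A, ind E (x + a) ≤ #E := by
    simp only [Set.indicator_apply, mem_coe, Pi.one_apply, sum_boole, Nat.cast_le]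
    exact card_le_card_of_injOn (x + ·) (fun a ha ↦ (mem_filter.1 ha).2)
      (add_right_injective x).injOn
  calc |avg A F (x + w) - avg A F x| = |𝔼 a ∈ A, (F (x + w + a) - F (x + a))| := by
        rw [avg_apply, avg_apply, expect_sub_distrib]
    _ ≤ 𝔼 a ∈ A, (c + ind E (x + a)) := (abs_expect_le A _).trans (expect_le_expect pointwise)
    _ = c + (∑ a ∈ A, ind E (x + a)) / #A := by
        rw [expect_add_distrib, expect_const hA, expect_eq_sum_div_card]
    _ ≤ c + #E / #A := by gcongr

variable [DecidableEq G]

lemma avg_neg_apply (A : Finset G) (f : G → ℝ) (x : G) :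
    avg (-A) f x = 𝔼 a ∈ A, f (x - a) := by
  simp only [avg_apply_eq_sum_div, card_neg, sum_neg_index, ← sub_eq_add_neg,
    expect_eq_sum_div_card]

variable [Fintype G]

/-- The points at which the average of `ind S` over the shifts by the entries of `c` differs from
its average over all shifts by `A` by more than `ε`. -/
noncomputable def badSet (S A : Finset G) (ε : ℝ) (c : Fin k → G) : Finset G :=
  {x | ε < |(𝔼 i, ind S (x - c i)) - avg (-A) (ind S) x|}

lemma mem_badSet {c : Fin k → G} {x : G} :
    x ∈ badSet S A ε c ↔ ε < |(𝔼 i, ind S (x - c i)) - avg (-A) (ind S) x| := by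
  simp [badSet]

lemma badSet_subset (hX : ∀ x ∈ S, ∀ a ∈ A, x + a ∈ X) (hε : 0 ≤ ε) {c : Fin k → G}
    (hc : c ∈ tuples A k) : badSet S A ε c ⊆ X := by
  intro x hx
  by_contra hxX
  have ind_eq_zero (a) (ha : a ∈ A) : ind S (x - a) = 0 :=
    Set.indicator_of_notMem (fun hS ↦ hxX (by simpa using hX _ hS a ha)) _
  rw [mem_badSet, avg_neg_apply, expect_congr rfl ind_eq_zero,
    expect_congr rfl fun i _ ↦ ind_eq_zero _ (Fintype.mem_piFinset.1 hc i)] at hx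
  simp only [expect_const_zero, sub_zero, abs_zero] at hx
  linarith

lemma sum_card_badSet_le (hX : ∀ x ∈ S, ∀ a ∈ A, x + a ∈ X) (hA : A.Nonempty) (hk : 0 < k)
    (hε : 0 ≤ ε) (hε1 : ε ≤ 1) :
    ∑ c ∈ tuples A k, (#(badSet S A ε c) : ℝ) ≤
      #(tuples A k) * (2 * Real.exp (-(k * ε ^ 2 / 4)) * #X) := by
  have badSet_eq (c) (hc : c ∈ tuples A k) : badSet S A ε c = {x ∈ X | x ∈ badSet S A ε c} := by
    rw [filter_mem_eq_inter, inter_eq_right.2 (badSet_subset hX hε hc)]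
  have card_bad_tuples (x : G) : (#{c ∈ tuples A k | x ∈ badSet S A ε c} : ℝ) ≤
      2 * Real.exp (-(k * ε ^ 2 / 4)) * (#A : ℝ) ^ k := by
    simp only [mem_badSet, avg_neg_apply]
    convert card_filter_lt_abs_expect_sub_le (v := fun a ↦ ind S (x - a)) hA
      (fun a ↦ ind_nonneg S (x - a)) (fun a ↦ ind_le_one S (x - a)) hk hε hε1
  calc ∑ c ∈ tuples A k, (#(badSet S A ε c) : ℝ)
      = ∑ x ∈ X, (#{c ∈ tuples A k | x ∈ badSet S A ε c} : ℝ) := by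
        rw [sum_congr rfl fun c hc ↦ congr_arg (fun s ↦ (#s : ℝ)) (badSet_eq c hc)]
        exact_mod_cast sum_card_bipartiteAbove_eq_sum_card_bipartiteBelow
          fun c x ↦ x ∈ badSet S A ε c
    _ ≤ #X * (2 * Real.exp (-(k * ε ^ 2 / 4)) * (#A : ℝ) ^ k) := by
        rw [← nsmul_eq_mul]
        exact sum_le_card_nsmul _ _ _ fun x _ ↦ card_bad_tuples x
    _ = #(tuples A k) * (2 * Real.exp (-(k * ε ^ 2 / 4)) * #X) := by
        rw [Fintype.card_piFinset_const]
        push_cast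
        ring

/-- If both `u - s` and `u - t` sample `A` well, then `t - s` is an almost period of
`avg (-A) (ind S)`, because sampling along `u - s` at `x + (t - s)` is sampling along `u - t`
at `x`. -/
lemma abs_avg_sub_le_of_notMem_badSet {u : Fin k → G} {s t x : G}
    (hs : x + (t - s) ∉ badSet S A ε fun i ↦ u i - s) (ht : x ∉ badSet S A ε fun i ↦ u i - t) :
    |avg (-A) (ind S) (x + (t - s)) - avg (-A) (ind S) x| ≤ 2 * ε := by
  rw [mem_badSet, not_lt] at hs ht
  simp only [show ∀ i, x + (t - s) - (u i - s) = x - (u i - t) by intro i; abel] at hs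
  rw [abs_sub_comm] at hs
  linarith [abs_sub_le (avg (-A) (ind S) (x + (t - s))) (𝔼 i, ind S (x - (u i - t)))
    (avg (-A) (ind S) x)]

lemma exists_card_le_forall_notMem_abs_avg_sub_le {u : Fin k → G} {s t : G} {δ : ℝ}
    (hs : #(badSet S A ε fun i ↦ u i - s) ≤ δ) (ht : #(badSet S A ε fun i ↦ u i - t) ≤ δ) :
    ∃ E : Finset G, (#E : ℝ) ≤ 2 * δ ∧
      ∀ x ∉ E, |avg (-A) (ind S) (x + (t - s)) - avg (-A) (ind S) x| ≤ 2 * ε := by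
  refine ⟨(badSet S A ε fun i ↦ u i - s).image (· - (t - s)) ∪ badSet S A ε fun i ↦ u i - t,
    ?_, fun x hx ↦ ?_⟩
  · have := (card_union_le _ _).trans (Nat.add_le_add_right (card_image_le (f := (· - (t - s)))
      (s := badSet S A ε fun i ↦ u i - s)) #(badSet S A ε fun i ↦ u i - t))
    rify at this
    linarith
  · rw [mem_union, not_or] at hx
    exact abs_avg_sub_le_of_notMem_badSet
      (fun h ↦ hx.1 (mem_image.2 ⟨_, h, add_sub_cancel_right _ _⟩)) hx.2

end AlmostPeriods

section CrootSisask

variable {G : Type*} [AddCommGroup G] [DecidableEq G] [Finite G] {A B S X Y : Finset G} {k : ℕ}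
  {ε ν : ℝ}

lemma exists_almostPeriods_avg_neg (hX : ∀ x ∈ S, ∀ a ∈ A, x + a ∈ X)
    (hY : ∀ a ∈ A, ∀ t ∈ B, a + t ∈ Y) (hA : A.Nonempty) (hB : B.Nonempty) (hk : 0 < k)
    (hε : 0 ≤ ε) (hε1 : ε ≤ 1) (hν : 0 ≤ ν) (hνY : ν * #Y ≤ #A) :
    ∃ T ⊆ B, 1 / 2 * ν ^ k * #B ≤ #T ∧ ∀ t ∈ T, ∀ s ∈ T, ∃ E : Finset G,
      (#E : ℝ) ≤ 8 * Real.exp (-(k * ε ^ 2 / 4)) * #X ∧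
        ∀ x ∉ E, |avg (-A) (ind S) (x + (t - s)) - avg (-A) (ind S) x| ≤ 2 * ε := by
  cases nonempty_fintype G
  set δ := 2 * Real.exp (-(k * ε ^ 2 / 4)) * #X with hδ
  set good : Finset (Fin k → G) := {c ∈ tuples A k | (#(badSet S A ε c) : ℝ) ≤ 2 * δ}
  have card_good : (#A : ℝ) ^ k / 2 ≤ #good := by
    have := half_card_le_card_filter_le (by positivity) (fun _ _ ↦ Nat.cast_nonneg _)
      (sum_card_badSet_le hX hA hk hε hε1)
    rwa [Fintype.card_piFinset_const, Nat.cast_pow] at this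
  have hYne : Y.Nonempty := hA.elim fun a ha ↦ hB.elim fun t ht ↦ ⟨_, hY a ha t ht⟩
  obtain ⟨u, hu⟩ := exists_card_mul_card_le_card_mul_card_filter (P := good) (Q := tuples Y k)
    (B := B) (σ := fun t _ ↦ t) (Fintype.piFinset_nonempty.2 fun _ ↦ hYne) fun c hc t ht ↦
      Fintype.mem_piFinset.2 fun i ↦ hY _ (Fintype.mem_piFinset.1 (mem_filter.1 hc).1 i) t ht
  set T : Finset G := {t ∈ B | (u - fun _ ↦ t) ∈ good}
  refine ⟨T, filter_subset _ _, ?_, fun t ht s hs ↦ ?_⟩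
  · have hYpos : (0 : ℝ) < (#Y : ℝ) ^ k := by have := hYne.card_pos; positivity
    rw [Fintype.card_piFinset_const] at hu
    rify at hu
    refine le_of_mul_le_mul_left ?_ hYpos
    calc (#Y : ℝ) ^ k * (1 / 2 * ν ^ k * #B) = (ν * #Y) ^ k / 2 * #B := by rw [mul_pow]; ring
      _ ≤ (#A : ℝ) ^ k / 2 * #B := by gcongr
      _ ≤ #good * #B := by gcongr
      _ ≤ (#Y : ℝ) ^ k * #T := hu
  · obtain ⟨E, hE, hper⟩ := exists_card_le_forall_notMem_abs_avg_sub_le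
      (mem_filter.1 (mem_filter.1 hs).2).2 (mem_filter.1 (mem_filter.1 ht).2).2
    exact ⟨E, hE.trans_eq (by rw [hδ]; ring), hper⟩

theorem exists_almostPeriods {A' : Finset G} (hX : ∀ x ∈ S, ∀ a ∈ A, x + a ∈ X)
    (hY : ∀ a ∈ A, ∀ t ∈ B, a + t ∈ Y) (hA' : A'.Nonempty) (hA : A.Nonempty) (hB : B.Nonempty)
    (hk : 0 < k) (hε : 0 ≤ ε) (hε1 : ε ≤ 1) (hν : 0 ≤ ν) (hνY : ν * #Y ≤ #A) :
    ∃ T ⊆ B, 1 / 2 * ν ^ k * #B ≤ #T ∧ ∀ x, ∀ t ∈ T, ∀ s ∈ T,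
      |avg A' (avg (-A) (ind S)) (x + (t - s)) - avg A' (avg (-A) (ind S)) x| ≤
        2 * ε + 8 * Real.exp (-(k * ε ^ 2 / 4)) * #X / #A' := by
  obtain ⟨T, hTB, hT, hper⟩ := exists_almostPeriods_avg_neg hX hY hA hB hk hε hε1 hν hνY
  refine ⟨T, hTB, hT, fun x t ht s hs ↦ ?_⟩
  obtain ⟨E, hE, hEper⟩ := hper t ht s hs
  have F_nonneg (z) : 0 ≤ avg (-A) (ind S) z := expect_nonneg fun _ _ ↦ ind_nonneg _ _
  have F_le_one : ∀ z, avg (-A) (ind S) z ≤ 1 := isAveraging_avg hA.neg _ 1 (ind_le_one S)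
  refine (abs_avg_apply_add_sub_le hA' (by positivity) F_nonneg F_le_one hEper x).trans ?_
  gcongr

end CrootSisask

/-! ### Moments of the balanced function of a progression-free set -/

section Halving
variable {G : Type*} [AddCommGroup G] [Fintype G] {Γ : Finset (AddChar G ℂ)} {ρ σ : ℝ} {x y : G}

lemma half_nsmul_add_self (hodd : Odd (Fintype.card G)) (x : G) :
    ((Fintype.card G + 1) / 2) • (x + x) = x := by
  have h : (Fintype.card G + 1) / 2 * 2 = Fintype.card G + 1 := by grind
  rw [← two_nsmul, ← mul_nsmul', h, add_nsmul, card_nsmul_eq_zero, one_nsmul, zero_add]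

lemma add_self_injective (hodd : Odd (Fintype.card G)) :
    Function.Injective fun x : G ↦ x + x :=
  Function.LeftInverse.injective (half_nsmul_add_self hodd)

open Classical in
/-- The characters `x ↦ ψ (x / 2)` for `ψ ∈ Γ`, in a group of odd order. The Bohr set of `halves Γ`
is the image of the Bohr set of `Γ` under doubling. -/
noncomputable def halves (Γ : Finset (AddChar G ℂ)) : Finset (AddChar G ℂ) :=
  Γ.image (· ^ ((Fintype.card G + 1) / 2))

lemma card_halves_le : #(halves Γ) ≤ #Γ := card_image_le

lemma add_self_mem_bohrSet_halves (hodd : Odd (Fintype.card G)) :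
    x + x ∈ bohrSet (halves Γ) ρ ↔ x ∈ bohrSet Γ ρ := by
  have half_apply (ψ : AddChar G ℂ) : (ψ ^ ((Fintype.card G + 1) / 2)) (x + x) = ψ x := by
    rw [AddChar.pow_apply, ← AddChar.map_nsmul_eq_pow, half_nsmul_add_self hodd]
  simp only [mem_bohrSet, halves, forall_mem_image, half_apply]

lemma bohrSet_halves_subset (hodd : Odd (Fintype.card G)) (h : 2 * ρ ≤ σ) :
    bohrSet (halves Γ) ρ ⊆ bohrSet Γ σ := fun _ hz ↦
  (add_self_mem_bohrSet_halves hodd).1 (add_mem_bohrSet hz hz (by linarith))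

lemma card_bohrSet_halves_le (hodd : Odd (Fintype.card G)) :
    #(bohrSet (halves Γ) ρ) ≤ #(bohrSet Γ ρ) := by
  classical
  have half_add_half (z : G) :
      ((Fintype.card G + 1) / 2) • z + ((Fintype.card G + 1) / 2) • z = z := by
    rw [← nsmul_add, half_nsmul_add_self hodd]
  refine card_le_card_of_surjOn (fun x ↦ x + x) fun z hz ↦
    ⟨((Fintype.card G + 1) / 2) • z, ?_, half_add_half z⟩
  rwa [mem_coe, ← add_self_mem_bohrSet_halves hodd, half_add_half]

end Halving

lemma le_one_of_card_eq_mul {G : Type*} {A B : Finset G} {α : ℝ} (hA : A ⊆ B) (hB : B.Nonempty)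
    (hαA : #A = α * #B) : α ≤ 1 := by
  have hcard : (#A : ℝ) ≤ #B := by exact_mod_cast card_le_card hA
  have hpos : (0 : ℝ) < #B := by exact_mod_cast hB.card_pos
  nlinarith

section Balanced
variable {G : Type*} [AddCommGroup G] [Fintype G] {Γ : Finset (AddChar G ℂ)} {A : Finset G}
  {κ ρ α δ : ℝ} {m : ℕ} {x : G}

open Classical in
lemma sum_ind_mul_ind_add (A B : Finset G) (x : G) :
    ∑ y, ind A y * ind B (x + y) = #{y ∈ A | x + y ∈ B} := by
  rw [← sum_ind]
  refine sum_congr rfl fun y _ ↦ ?_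
  by_cases hA : y ∈ A <;> by_cases hB : x + y ∈ B <;> simp [hA, hB]

open Classical in
lemma IsRegular.card_sub_le_card_filter_add_mem (hκρ : 0 ≤ κ * ρ) (hreg : IsRegular κ m Γ ρ)
    (hA : A ⊆ bohrSet Γ ρ) (hx : x ∈ bohrSet Γ (κ * ρ)) :
    (#A : ℝ) - #(bohrSet Γ ρ) / m ≤ #{y ∈ A | x + y ∈ bohrSet Γ ρ} := by
  have hcover : A ⊆ {y ∈ A | x + y ∈ bohrSet Γ ρ} ∪
      (bohrSet Γ ρ \ bohrSet Γ (ρ - κ * ρ)) := fun y hy ↦ by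
    by_cases h : y ∈ bohrSet Γ (ρ - κ * ρ)
    · exact mem_union_left _ (mem_filter.2 ⟨hy, add_mem_bohrSet hx h (by linarith)⟩)
    · exact mem_union_right _ (mem_sdiff.2 ⟨hA hy, h⟩)
  have hcard := (card_le_card hcover).trans (card_union_le _ _)
  rify at hcard
  linarith [hreg.card_sdiff_le hκρ]

lemma IsRegular.sum_ind_mul_ind_div_mem_Icc (hκρ : 0 ≤ κ * ρ) (hreg : IsRegular κ m Γ ρ)
    (hA : A ⊆ bohrSet Γ ρ) (hα : 0 < α) (hαA : #A = α * #(bohrSet Γ ρ)) (hδ : 1 ≤ δ * (m * α))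
    (hx : x ∈ bohrSet Γ (κ * ρ)) :
    (∑ y, ind A y * ind (bohrSet Γ ρ) (x + y)) / α ∈
      Set.Icc ((1 - δ) * #(bohrSet Γ ρ)) #(bohrSet Γ ρ) := by
  classical
  rw [sum_ind_mul_ind_add, Set.mem_Icc, le_div_iff₀ hα, div_le_iff₀ hα]
  have hm : (0 : ℝ) < m := by
    rcases Nat.eq_zero_or_pos m with rfl | hm
    · norm_num at hδ
    · exact_mod_cast hm
  have hedge : (#(bohrSet Γ ρ) : ℝ) / m ≤ δ * α * #(bohrSet Γ ρ) := by
    rw [div_le_iff₀ hm]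
    nlinarith [(#(bohrSet Γ ρ)).cast_nonneg (α := ℝ)]
  have hlower := hreg.card_sub_le_card_filter_add_mem hκρ hA hx
  have hupper : (#{y ∈ A | x + y ∈ bohrSet Γ ρ} : ℝ) ≤ #A := by
    exact_mod_cast card_filter_le _ _
  constructor <;> linarith

/-- The balanced function of a set `A` of density `α` in `B`, normalised by `α`: its sum vanishes
and it equals `-1` on `B \ A`. -/
noncomputable def balanced (α : ℝ) (A B : Finset G) (x : G) : ℝ := ind A x / α - ind B x

lemma conv_balanced (hα : α ≠ 0) {B : Finset G} (hB : ∀ y, ind B (-y) = ind B y) (x : G) :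
    conv (balanced α A B) x = conv (ind A) x / α ^ 2
      - 2 * ((∑ y, ind A y * ind B (-x + y)) / α) + ∑ y, ind B y * ind B (-x + y) := by
  have reflect (y) : ind B (-x + y) = ind B (x - y) := by rw [← hB]; congr 1; abel
  have hswap : ∑ y, ind B y * ind A (x - y) = ∑ y, ind A y * ind B (x - y) := by
    rw [← Equiv.sum_comp (Equiv.subLeft x)]
    simp only [Equiv.subLeft_apply, sub_sub_cancel, mul_comm]
  have hexpand : conv (balanced α A B) x = conv (ind A) x / α ^ 2
      - (∑ y, ind A y * ind B (x - y)) / α - (∑ y, ind B y * ind A (x - y)) / α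
      + ∑ y, ind B y * ind B (x - y) := by
    simp only [conv, balanced, sum_div, ← sum_sub_distrib, ← sum_add_distrib]
    refine sum_congr rfl fun y _ ↦ ?_
    field_simp
    ring
  simp only [reflect]
  rw [hexpand, hswap]
  ring

lemma corr_balanced (hα : α ≠ 0) (B : Finset G) (x : G) :
    corr (balanced α A B) x = corr (ind A) x / α ^ 2 - (∑ y, ind A y * ind B (-x + y)) / α
      - (∑ y, ind A y * ind B (x + y)) / α + ∑ y, ind B y * ind B (x + y) := by
  have hshift : ∑ y, ind A y * ind B (-x + y) = ∑ y, ind A (x + y) * ind B y := by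
    rw [← Equiv.sum_comp (Equiv.addLeft x)]
    simp only [Equiv.coe_addLeft, neg_add_cancel_left]
  rw [hshift]
  simp only [corr, balanced, sum_div, ← sum_sub_distrib, ← sum_add_distrib]
  refine sum_congr rfl fun y _ ↦ ?_
  field_simp
  ring

lemma IsRegular.sum_ind_bohrSet_mem_Icc (hκρ : 0 ≤ κ * ρ) (hreg : IsRegular κ m Γ ρ)
    (hα : 0 < α) (hα1 : α ≤ 1) (hδ : 1 ≤ δ * (m * α)) (hx : x ∈ bohrSet Γ (κ * ρ)) :
    ∑ y, ind (bohrSet Γ ρ) y * ind (bohrSet Γ ρ) (x + y) ∈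
      Set.Icc ((1 - δ) * #(bohrSet Γ ρ)) #(bohrSet Γ ρ) := by
  have hδ1 : 1 ≤ δ * (m * 1) := by nlinarith
  simpa only [div_one] using
    hreg.sum_ind_mul_ind_div_mem_Icc hκρ subset_rfl one_pos (one_mul _).symm hδ1 hx

lemma IsRegular.conv_balanced_le (hκ : 0 ≤ κ) (hρ : 0 ≤ ρ) (hreg : IsRegular κ m Γ ρ)
    (hA : A ⊆ bohrSet Γ ρ) (hα : 0 < α) (hαA : #A = α * #(bohrSet Γ ρ)) (hδ : 1 ≤ δ * (m * α))
    (hx : x ∈ bohrSet Γ (κ * ρ)) :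
    conv (balanced α A (bohrSet Γ ρ)) x ≤
      conv (ind A) x / α ^ 2 - (1 - 2 * δ) * #(bohrSet Γ ρ) := by
  have hκρ : 0 ≤ κ * ρ := mul_nonneg hκ hρ
  have hsymm (y) : ind (bohrSet Γ ρ) (-y) = ind (bohrSet Γ ρ) y := by
    have : -y ∈ bohrSet Γ ρ ↔ y ∈ bohrSet Γ ρ :=
      ⟨fun h ↦ neg_neg y ▸ neg_mem_bohrSet h, neg_mem_bohrSet⟩
    classical simp only [Set.indicator_apply, mem_coe, this, Pi.one_apply]
  have hα1 := le_one_of_card_eq_mul hA (bohrSet_nonempty hρ) hαA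
  have hcross := hreg.sum_ind_mul_ind_div_mem_Icc hκρ hA hα hαA hδ (neg_mem_bohrSet hx)
  have hself := hreg.sum_ind_bohrSet_mem_Icc hκρ hα hα1 hδ (neg_mem_bohrSet hx)
  rw [conv_balanced hα.ne' hsymm]
  linarith [hcross.1, hself.2]

lemma IsRegular.abs_corr_sub_le (hκ : 0 ≤ κ) (hρ : 0 ≤ ρ) (hreg : IsRegular κ m Γ ρ)
    (hA : A ⊆ bohrSet Γ ρ) (hα : 0 < α) (hαA : #A = α * #(bohrSet Γ ρ)) (hδ : 1 ≤ δ * (m * α))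
    (hx : x ∈ bohrSet Γ (κ * ρ)) :
    |corr (ind A) x / α ^ 2 - (#(bohrSet Γ ρ) + corr (balanced α A (bohrSet Γ ρ)) x)| ≤
      2 * δ * #(bohrSet Γ ρ) := by
  have hκρ : 0 ≤ κ * ρ := mul_nonneg hκ hρ
  have hα1 := le_one_of_card_eq_mul hA (bohrSet_nonempty hρ) hαA
  have hcross := hreg.sum_ind_mul_ind_div_mem_Icc hκρ hA hα hαA hδ hx
  have hcross' := hreg.sum_ind_mul_ind_div_mem_Icc hκρ hA hα hαA hδ (neg_mem_bohrSet hx)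
  have hself := hreg.sum_ind_bohrSet_mem_Icc hκρ hα hα1 hδ hx
  rw [corr_balanced hα.ne', abs_le]
  constructor <;> linarith [hcross.1, hcross.2, hcross'.1, hcross'.2, hself.1, hself.2]

end Balanced

lemma exists_mul_card_sq_le_sum_sum {G : Type*} [AddCommGroup G] {C D E : Finset G} {F : G → ℝ}
    {b c : ℝ} (hF : ∀ x, 0 ≤ F x)
    (hE : E.Nonempty) (hCE : ∀ z ∈ C, ∀ d ∈ D, ∀ d' ∈ D, z - (d - d') ∈ E)
    (hFC : ∀ z ∈ C, c ≤ F z) (hbc : b * #E ≤ c * #C) :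
    ∃ s ∈ E, b * (#D : ℝ) ^ 2 ≤ ∑ d ∈ D, ∑ d' ∈ D, F (s + (d - d')) := by
  classical
  have hshift : ∀ d ∈ D, ∀ d' ∈ D, c * #C ≤ ∑ s ∈ E, F (s + (d - d')) := fun d hd d' hd' ↦ by
    calc c * #C ≤ ∑ z ∈ C, F z := by
          rw [mul_comm, ← nsmul_eq_mul]
          exact card_nsmul_le_sum _ _ _ hFC
      _ = ∑ s ∈ C.image (· - (d - d')), F (s + (d - d')) := by
          rw [sum_image sub_left_injective.injOn]
          simp only [sub_add_cancel]
      _ ≤ ∑ s ∈ E, F (s + (d - d')) :=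
          sum_le_sum_of_subset_of_nonneg (image_subset_iff.2 fun z hz ↦ hCE z hz d hd d' hd')
            fun _ _ _ ↦ hF _
  refine exists_le_of_sum_le hE ?_
  calc ∑ _s ∈ E, b * (#D : ℝ) ^ 2 = (#D : ℝ) ^ 2 * (b * #E) := by
        rw [sum_const, nsmul_eq_mul]; ring
    _ ≤ (#D : ℝ) ^ 2 * (c * #C) := by gcongr
    _ = ∑ _d ∈ D, ∑ _d' ∈ D, c * #C := by simp only [sum_const, nsmul_eq_mul]; ring
    _ ≤ ∑ d ∈ D, ∑ d' ∈ D, ∑ s ∈ E, F (s + (d - d')) :=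
        sum_le_sum fun d hd ↦ sum_le_sum fun d' hd' ↦ hshift d hd d' hd'
    _ = ∑ s ∈ E, ∑ d ∈ D, ∑ d' ∈ D, F (s + (d - d')) := by
        rw [sum_congr rfl fun d _ ↦ sum_comm, sum_comm]

section MomentOfProgressionFree
variable {G : Type*} [AddCommGroup G] [Fintype G] {Γ : Finset (AddChar G ℂ)} {A C : Finset G}
  {κ ρ₁ ρ₂ ρ₃ α γ : ℝ} {m p : ℕ}

lemma corr_ind_nonneg (A : Finset G) (x : G) : 0 ≤ corr (ind A) x :=
  sum_nonneg fun _ _ ↦ mul_nonneg (ind_nonneg _ _) (ind_nonneg _ _)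

lemma conv_ind_add_self_le_one (hodd : Odd (Fintype.card G)) {z : G}
    (hAP : ∀ y ∈ A, ∀ y' ∈ A, y + y' = z + z → y = y') : conv (ind A) (z + z) ≤ 1 := by
  classical
  have hterm (y : G) : ind A y * ind A (z + z - y) ≤ if y = z then 1 else 0 := by
    by_cases hy : y ∈ A
    · by_cases hy' : z + z - y ∈ A
      · have heq := hAP y hy _ hy' (by abel)
        have : y = z := add_self_injective hodd (show y + y = z + z by
          nth_rewrite 2 [heq]; abel)
        rw [if_pos this]
        exact mul_le_one₀ (ind_le_one _ _) (ind_nonneg _ _) (ind_le_one _ _)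
      · simp only [Set.indicator_of_notMem (mem_coe.not.2 hy'), mul_zero]
        split_ifs <;> norm_num
    · simp only [Set.indicator_of_notMem (mem_coe.not.2 hy), zero_mul]
      split_ifs <;> norm_num
  exact (sum_le_sum fun y _ ↦ hterm y).trans_eq (by simp)

lemma IsRegular.pow_le_conv_balanced_add_self_pow (hodd : Odd (Fintype.card G)) (hκ : 0 ≤ κ)
    (hρ : 0 ≤ ρ₁) (hreg : IsRegular κ m Γ ρ₁) (hA : A ⊆ bohrSet Γ ρ₁) (hα : 0 < α)
    (hαA : #A = α * #(bohrSet Γ ρ₁)) (hmα : 120 ≤ m * α) (hsize : 120 ≤ α ^ 2 * #(bohrSet Γ ρ₁))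
    {z : G} (hz : z + z ∈ bohrSet Γ (κ * ρ₁))
    (hAP : ∀ y ∈ A, ∀ y' ∈ A, y + y' = z + z → y = y') (hp : Even p) :
    (9 / 10 : ℝ) ^ p ≤
      (conv (balanced α A (bohrSet Γ ρ₁)) (z + z) / #(bohrSet Γ ρ₁)) ^ p := by
  have hB : (0 : ℝ) < #(bohrSet Γ ρ₁) := by exact_mod_cast card_bohrSet_pos hρ
  have hconv := hreg.conv_balanced_le (δ := 1 / 120) hκ hρ hA hα hαA (by linarith) hz
  have hself : conv (ind A) (z + z) / α ^ 2 ≤ #(bohrSet Γ ρ₁) / 120 := by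
    rw [div_le_iff₀ (by positivity)]
    linarith [conv_ind_add_self_le_one hodd hAP]
  have hlarge : 9 / 10 ≤ -(conv (balanced α A (bohrSet Γ ρ₁)) (z + z) / #(bohrSet Γ ρ₁)) := by
    rw [← neg_div, le_div_iff₀ hB]
    linarith
  rw [← hp.neg_pow (conv _ _ / _)]
  gcongr

lemma IsRegular.pow_mul_le_sum_corr_balanced_pow (hodd : Odd (Fintype.card G)) (hκ : 0 ≤ κ)
    (hρ₁ : 0 ≤ ρ₁) (hρ₂ : 0 ≤ ρ₂) (hreg : IsRegular κ m Γ ρ₁)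
    (hreg₂ : (#(bohrSet Γ (ρ₂ + κ * ρ₂)) : ℝ) ≤ 2 * #(bohrSet Γ ρ₂))
    (h₂₁ : 2 * ρ₂ ≤ κ * ρ₁) (h₃₂ : 2 * ρ₃ ≤ κ * ρ₂)
    (hA : A ⊆ bohrSet Γ ρ₁) (hC : C ⊆ bohrSet Γ ρ₂)
    (hAP : ∀ y ∈ A, ∀ y' ∈ A, ∀ z ∈ C, y + y' = z + z → y = y') (hα : 0 < α)
    (hαA : #A = α * #(bohrSet Γ ρ₁)) (hmα : 120 ≤ m * α) (hsize : 120 ≤ α ^ 2 * #(bohrSet Γ ρ₁))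
    (hγC : γ * #(bohrSet Γ ρ₂) ≤ #C) (hp : Even p)
    (hpγ : (4 / 5 : ℝ) ^ p ≤ (9 / 10) ^ p * (γ / 2)) :
    (4 / 5 : ℝ) ^ p * (#(bohrSet (halves Γ) ρ₃) : ℝ) ^ 2 ≤
      ∑ d ∈ bohrSet (halves Γ) ρ₃, ∑ d' ∈ bohrSet (halves Γ) ρ₃,
        (corr (balanced α A (bohrSet Γ ρ₁)) (d - d') / #(bohrSet Γ ρ₁)) ^ p := by
  classical
  set f := balanced α A (bohrSet Γ ρ₁)
  set E := bohrSet (halves Γ) (ρ₂ + κ * ρ₂)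
  have hE : (#E : ℝ) ≤ 2 * #(bohrSet Γ ρ₂) :=
    (Nat.cast_le.2 (card_bohrSet_halves_le hodd)).trans hreg₂
  have hdensity : (4 / 5 : ℝ) ^ p * #E ≤ (9 / 10) ^ p * #(C.image fun z ↦ z + z) := by
    rw [card_image_of_injective _ (add_self_injective hodd)]
    calc (4 / 5 : ℝ) ^ p * #E ≤ (4 / 5 : ℝ) ^ p * (2 * #(bohrSet Γ ρ₂)) := by gcongr
      _ ≤ (9 / 10) ^ p * (γ / 2) * (2 * #(bohrSet Γ ρ₂)) := by gcongr
      _ = (9 / 10) ^ p * (γ * #(bohrSet Γ ρ₂)) := by ring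
      _ ≤ (9 / 10) ^ p * #C := by gcongr
  obtain ⟨s, -, hs⟩ := exists_mul_card_sq_le_sum_sum (D := bohrSet (halves Γ) ρ₃)
    (F := fun x ↦ (conv f x / #(bohrSet Γ ρ₁)) ^ p) (fun _ ↦ hp.pow_nonneg _)
    (bohrSet_nonempty (by positivity))
    (forall_mem_image.2 fun z hz d hd d' hd' ↦ sub_mem_bohrSet
      ((add_self_mem_bohrSet_halves hodd).2 (hC hz)) (sub_mem_bohrSet hd hd' le_rfl)
      (by linarith))
    (forall_mem_image.2 fun z hz ↦ hreg.pow_le_conv_balanced_add_self_pow hodd hκ hρ₁ hA hα hαA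
      hmα hsize (add_mem_bohrSet (hC hz) (hC hz) (by linarith))
      (fun y hy y' hy' ↦ hAP y hy y' hy' z hz) hp) hdensity
  refine hs.trans ?_
  simp only [div_pow, ← sum_div]
  exact div_le_div_of_nonneg_right (sum_conv_pow_le_sum_corr_pow f _ s p) (by positivity)

theorem IsRegular.pow_mul_le_sum_corr_ind_pow (hodd : Odd (Fintype.card G)) (hκ : 0 ≤ κ)
    (hρ₁ : 0 ≤ ρ₁) (hρ₂ : 0 ≤ ρ₂) (hreg : IsRegular κ m Γ ρ₁)
    (hreg₂ : (#(bohrSet Γ (ρ₂ + κ * ρ₂)) : ℝ) ≤ 2 * #(bohrSet Γ ρ₂))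
    (h₂₁ : 2 * ρ₂ ≤ κ * ρ₁) (h₃₂ : 2 * ρ₃ ≤ κ * ρ₂) (h₃₁ : 4 * ρ₃ ≤ κ * ρ₁)
    (hA : A ⊆ bohrSet Γ ρ₁) (hC : C ⊆ bohrSet Γ ρ₂)
    (hAP : ∀ y ∈ A, ∀ y' ∈ A, ∀ z ∈ C, y + y' = z + z → y = y') (hα : 0 < α)
    (hαA : #A = α * #(bohrSet Γ ρ₁)) (hmα : 120 ≤ m * α) (hsize : 120 ≤ α ^ 2 * #(bohrSet Γ ρ₁))
    (hγC : γ * #(bohrSet Γ ρ₂) ≤ #C) (hp : Even p) (hp6 : 6 ≤ p)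
    (hpγ : (4 / 5 : ℝ) ^ p ≤ (9 / 10) ^ p * (γ / 2)) :
    (5 / 4 * (α * #A)) ^ (3 * p) * (#(bohrSet (halves Γ) ρ₃) : ℝ) ^ 2 ≤
      ∑ d ∈ bohrSet (halves Γ) ρ₃, ∑ d' ∈ bohrSet (halves Γ) ρ₃,
        corr (ind A) (d - d') ^ (3 * p) := by
  set B := bohrSet Γ ρ₁
  set D := bohrSet (halves Γ) ρ₃
  set f := balanced α A B
  have hB : (0 : ℝ) < #B := by exact_mod_cast card_bohrSet_pos hρ₁
  have hαApos : 0 < α * #A := by rw [hαA]; positivity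
  have hmoment := hreg.pow_mul_le_sum_corr_balanced_pow hodd hκ hρ₁ hρ₂ hreg₂ h₂₁ h₃₂ hA hC hAP
    hα hαA hmα hsize hγC hp hpγ
  have happrox : ∀ i ∈ D ×ˢ D,
      |corr (ind A) (i.1 - i.2) / (α * #A) - (1 + corr f (i.1 - i.2) / #B)| ≤ 1 / 60 := by
    intro i hi
    obtain ⟨hd, hd'⟩ := mem_product.1 hi
    have hmem : i.1 - i.2 ∈ bohrSet Γ (κ * ρ₁) :=
      bohrSet_halves_subset hodd (by linarith) (sub_mem_bohrSet hd hd' le_rfl)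
    have hnormalise : corr (ind A) (i.1 - i.2) / (α * #A) - (1 + corr f (i.1 - i.2) / #B) =
        (corr (ind A) (i.1 - i.2) / α ^ 2 - (#B + corr f (i.1 - i.2))) / #B := by
      rw [hαA]; field_simp
    rw [hnormalise, abs_div, abs_of_pos hB, div_le_iff₀ hB]
    linarith [hreg.abs_corr_sub_le (δ := 1 / 120) hκ hρ₁ hA hα hαA (by linarith) hmem]
  have hunbalanced := pow_mul_card_le_sum_pow_of_unbalanced hp hp6 (P := D ×ˢ D)
    (g := fun i ↦ corr f (i.1 - i.2) / #B) (h := fun i ↦ corr (ind A) (i.1 - i.2) / (α * #A))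
    (fun k ↦ by
      simp only [div_pow, ← sum_div, sum_product]
      exact div_nonneg (sum_corr_pow_nonneg f D k) (by positivity))
    (by simpa only [card_product, sum_product, Nat.cast_pow, ← sq] using hmoment)
    (fun _ _ ↦ div_nonneg (corr_ind_nonneg _ _) hαApos.le) happrox
  simp only [div_pow, ← sum_div, sum_product, card_product, Nat.cast_pow, ← sq] at hunbalanced
  rw [le_div_iff₀ (by positivity)] at hunbalanced
  refine hunbalanced.trans' (le_of_eq ?_)
  rw [mul_pow, div_pow]
  ring

end MomentOfProgressionFree

/-! ### Popular differences -/

section PopularPair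
variable {G : Type*} [AddCommGroup G] {A A' A₂ S : Finset G}

lemma avg_avg_neg_apply_zero [DecidableEq G] (A' A₂ : Finset G) (f : G → ℝ) :
    avg A' (avg (-A₂) f) 0 = (∑ d ∈ A', ∑ e ∈ A₂, f (d - e)) / (#A' * #A₂) := by
  simp only [avg_apply_eq_sum_div A', avg_neg_apply, expect_eq_sum_div_card, zero_add, ← sum_div]
  rw [div_div, mul_comm (#A₂ : ℝ)]

lemma corr_ind_eq_card_mul_avg [Fintype G] (hA : A.Nonempty) (x : G) :
    corr (ind A) x = #A * avg A (ind A) x := by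
  classical
  have hA0 : (#A : ℝ) ≠ 0 := by exact_mod_cast hA.card_pos.ne'
  rw [avg_apply_eq_sum_div, mul_div_cancel₀ _ hA0, corr]
  simp [Set.indicator_apply]

lemma one_sub_le_avg_avg_neg_ind_sdiff [DecidableEq G] {U : Finset G} {η : ℝ} (hA' : A'.Nonempty)
    (hA₂ : A₂.Nonempty) (hU : ∑ d ∈ A', ∑ e ∈ A₂, ind U (d - e) ≤ η * (#A' * #A₂)) :
    1 - η ≤ avg A' (avg (-A₂) (ind ((A' - A₂) \ U))) 0 := by
  have hpos : (0 : ℝ) < #A' * #A₂ := by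
    have := hA'.card_pos
    have := hA₂.card_pos
    positivity
  have hcompl : ∀ d ∈ A', ∀ e ∈ A₂, ind ((A' - A₂) \ U) (d - e) = 1 - ind U (d - e) :=
    fun d hd e he ↦ by
      simp only [Set.indicator_apply, mem_coe, mem_sdiff, sub_mem_sub hd he, true_and, ite_not,
        Pi.one_apply]
      split_ifs <;> norm_num
  rw [avg_avg_neg_apply_zero, le_div_iff₀ hpos,
    sum_congr rfl fun d hd ↦ sum_congr rfl fun e he ↦ hcompl d hd e he]
  simp only [sum_sub_distrib, sum_const, nsmul_eq_mul, mul_one]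
  linarith

variable [Fintype G] {Γ : Finset (AddChar G ℂ)} {κ ρ₃ ρ₄ ρ₅ α τ ε : ℝ} {m q k n : ℕ}

/-- `A'` and `A₂` are relatively dense in `B(ρ)` and in a translate of `B(σ)`, and nearly all
differences between them lie in `S`. -/
structure IsPopularPair [DecidableEq G] (Γ : Finset (AddChar G ℂ)) (κ ρ σ τ : ℝ)
    (A' A₂ S : Finset G) : Prop where
  nonempty_left : A'.Nonempty
  nonempty_right : A₂.Nonempty
  density_left : τ * #(bohrSet Γ ρ) ≤ #A'
  density_right : τ / 8 * #(bohrSet Γ σ) ≤ #A₂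
  exists_translate : ∃ y, ∀ a ∈ A₂, a - y ∈ bohrSet Γ σ
  add_mem : ∀ x ∈ S, ∀ a ∈ A₂, x + a ∈ bohrSet Γ (ρ + κ * ρ)
  le_avg : 98 / 100 ≤ avg A' (avg (-A₂) (ind S)) 0

lemma exists_sift_of_large_moment (hρ₃ : 0 ≤ ρ₃) (hα : 0 < α) (hA : A.Nonempty) (hq : 130 ≤ q)
    (hτ0 : 0 ≤ τ) (hτ : τ ≤ α ^ q / 4)
    (hmoment : (5 / 4 * (α * #A)) ^ q * (#(bohrSet Γ ρ₃) : ℝ) ^ 2 ≤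
      ∑ d ∈ bohrSet Γ ρ₃, ∑ d' ∈ bohrSet Γ ρ₃, corr (ind A) (d - d') ^ q) :
    ∃ A' ⊆ bohrSet Γ ρ₃, A'.Nonempty ∧ τ * #(bohrSet Γ ρ₃) ≤ #A' ∧
      ∑ d ∈ A', ∑ e ∈ A', ind {x | corr (ind A) x < 6 / 5 * (α * #A)} (d - e) ≤
        1 / 100 * (#A' : ℝ) ^ 2 := by
  have hαA : 0 < α * #A := by
    have := hA.card_pos
    positivity
  refine exists_sift (bohrSet_nonempty hρ₃) (by positivity) hτ0 (by norm_num) (ind_nonneg _)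
    hmoment ?_ fun x ↦ ?_
  · calc τ * (#A : ℝ) ^ q ≤ α ^ q / 4 * (#A : ℝ) ^ q := by gcongr
      _ = (α * #A) ^ q / 4 := by ring
      _ ≤ (5 / 4 * (α * #A)) ^ q / 4 :=
          div_le_div_of_nonneg_right (pow_le_pow_left₀ hαA.le (by linarith) q) (by norm_num)
  · by_cases hx : corr (ind A) x < 6 / 5 * (α * #A)
    · calc ind {x | corr (ind A) x < 6 / 5 * (α * #A)} x * corr (ind A) x ^ q
          ≤ 1 * (24 / 25 * (5 / 4 * (α * #A))) ^ q :=
            mul_le_mul (ind_le_one _ x) (pow_le_pow_left₀ (corr_ind_nonneg A x) (by linarith) q)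
              (pow_nonneg (corr_ind_nonneg A x) q) zero_le_one
        _ = (24 / 25) ^ q * (5 / 4 * (α * #A)) ^ q := by rw [one_mul, mul_pow]
        _ ≤ 1 / 200 * (5 / 4 * (α * #A)) ^ q := by
            gcongr
            exact (pow_le_pow_of_le_one (by norm_num) (by norm_num) hq).trans (by norm_num)
        _ = 1 / 100 * (5 / 4 * (α * #A)) ^ q / 2 := by ring
    · rw [ind, Set.indicator_of_notMem (by simpa using hx), zero_mul]
      positivity

lemma exists_isPopularPair [DecidableEq G] (hρ₃ : 0 ≤ ρ₃) (hρ₄ : 0 ≤ ρ₄)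
    (h₄₃ : 2 * ρ₄ ≤ κ * ρ₃)
    (hD : (#(bohrSet Γ (ρ₃ + κ * ρ₃)) : ℝ) ≤ 2 * #(bohrSet Γ ρ₃)) (hA : A.Nonempty) (hα : 0 < α)
    (hq : 130 ≤ q) (hτ0 : 0 < τ) (hτ : τ ≤ α ^ q / 4)
    (hmoment : (5 / 4 * (α * #A)) ^ q * (#(bohrSet Γ ρ₃) : ℝ) ^ 2 ≤
      ∑ d ∈ bohrSet Γ ρ₃, ∑ d' ∈ bohrSet Γ ρ₃, corr (ind A) (d - d') ^ q) :
    ∃ A' A₂ S : Finset G, IsPopularPair Γ κ ρ₃ ρ₄ τ A' A₂ S ∧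
      ∀ x ∈ S, 6 / 5 * (α * #A) ≤ corr (ind A) x := by
  obtain ⟨A', hA'D, hA', hA'card, hbad⟩ :=
    exists_sift_of_large_moment hρ₃ hα hA hq hτ0.le hτ hmoment
  set U : Finset G := {x | corr (ind A) x < 6 / 5 * (α * #A)}
  obtain ⟨y, A₂, -, hA₂B, hA₂card, hbad₂⟩ := exists_localised_subset hA'
    (bohrSet_nonempty hρ₄) (fun a ha b hb ↦ sub_mem_bohrSet (hA'D ha) hb (by linarith)) hD hτ0.le
    (by norm_num) hA'card (ind_nonneg _) hbad
  have hA₂ : A₂.Nonempty := by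
    have hpos : (0 : ℝ) < τ / 8 * #(bohrSet Γ ρ₄) := by
      have := card_bohrSet_pos (Γ := Γ) hρ₄
      positivity
    exact card_pos.1 (by exact_mod_cast hpos.trans_le hA₂card)
  refine ⟨A', A₂, (A' - A₂) \ U, ⟨hA', hA₂, hA'card, hA₂card, ⟨y, hA₂B⟩, fun x hx a ha ↦ ?_,
    le_trans (by norm_num) (one_sub_le_avg_avg_neg_ind_sdiff hA' hA₂ hbad₂)⟩, fun x hx ↦ ?_⟩
  · obtain ⟨d, hd, e, he, rfl⟩ := mem_sub.1 (mem_sdiff.1 hx).1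
    rw [show d - e + a = d - ((e - y) - (a - y)) by abel]
    exact sub_mem_bohrSet (hA'D hd) (sub_mem_bohrSet (hA₂B e he) (hA₂B a ha) le_rfl) (by linarith)
  · simpa [U] using (mem_sdiff.1 hx).2

namespace IsPopularPair
variable [DecidableEq G]

lemma card_div_card_le (h : IsPopularPair Γ κ ρ₃ ρ₄ τ A' A₂ S) (hτ : 0 < τ)
    (hD : (#(bohrSet Γ (ρ₃ + κ * ρ₃)) : ℝ) ≤ 2 * #(bohrSet Γ ρ₃)) : (#S : ℝ) / #A' ≤ 2 / τ := by
  obtain ⟨a, ha⟩ := h.nonempty_right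
  have hS : #S ≤ #(bohrSet Γ (ρ₃ + κ * ρ₃)) :=
    card_le_card_of_injOn (· + a) (fun x hx ↦ h.add_mem x hx a ha) (add_left_injective a).injOn
  have hA' : (0 : ℝ) < #A' := by exact_mod_cast h.nonempty_left.card_pos
  rify at hS
  rw [div_le_div_iff₀ hA' hτ]
  nlinarith [h.density_left]

lemma exists_almostPeriods (h : IsPopularPair Γ κ ρ₃ ρ₄ τ A' A₂ S) (hρ₅ : 0 ≤ ρ₅)
    (h₅₄ : ρ₅ ≤ κ * ρ₄) (hD : (#(bohrSet Γ (ρ₃ + κ * ρ₃)) : ℝ) ≤ 2 * #(bohrSet Γ ρ₃))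
    (hD₄ : (#(bohrSet Γ (ρ₄ + κ * ρ₄)) : ℝ) ≤ 2 * #(bohrSet Γ ρ₄)) (hτ : 0 < τ) (hε : 0 ≤ ε)
    (hε1 : ε ≤ 1) (hk : 0 < k) (hkε : 16 * Real.exp (-(k * ε ^ 2 / 4)) ≤ ε * τ) :
    ∃ T ⊆ bohrSet Γ ρ₅, T.Nonempty ∧ 1 / 2 * (τ / 16) ^ k * #(bohrSet Γ ρ₅) ≤ #T ∧
      ∀ x, ∀ t ∈ T, ∀ s ∈ T, |avg A' (avg (-A₂) (ind S)) (x + (t - s)) -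
        avg A' (avg (-A₂) (ind S)) x| ≤ 3 * ε := by
  obtain ⟨y, hy⟩ := h.exists_translate
  have hA' : (0 : ℝ) < #A' := by exact_mod_cast h.nonempty_left.card_pos
  set Y := (bohrSet Γ (ρ₄ + κ * ρ₄)).image (· + y)
  have hY : τ / 16 * #Y ≤ #A₂ := by
    have hcard : (#Y : ℝ) ≤ #(bohrSet Γ (ρ₄ + κ * ρ₄)) := by exact_mod_cast card_image_le
    nlinarith [h.density_right]
  obtain ⟨T, hTB, hT, hper⟩ := KelleyMeka.exists_almostPeriods h.add_mem
    (fun a ha t ht ↦ mem_image.2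
      ⟨a - y + t, add_mem_bohrSet (hy a ha) ht (by linarith), by abel⟩)
    h.nonempty_left h.nonempty_right (bohrSet_nonempty hρ₅) hk hε hε1 (by positivity) hY
  have hT0 : T.Nonempty := by
    have := card_bohrSet_pos (Γ := Γ) hρ₅
    exact card_pos.1 (Nat.cast_pos.1 (lt_of_lt_of_le (by positivity) hT))
  refine ⟨T, hTB, hT0, hT, fun x t ht s hs ↦ (hper x t ht s hs).trans ?_⟩
  have hexceptional : 8 * Real.exp (-(k * ε ^ 2 / 4)) * #(bohrSet Γ (ρ₃ + κ * ρ₃)) / #A' ≤ ε := by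
    rw [div_le_iff₀ hA']
    calc 8 * Real.exp (-(k * ε ^ 2 / 4)) * #(bohrSet Γ (ρ₃ + κ * ρ₃))
        ≤ 8 * Real.exp (-(k * ε ^ 2 / 4)) * (2 * #(bohrSet Γ ρ₃)) := by gcongr
      _ = 16 * Real.exp (-(k * ε ^ 2 / 4)) * #(bohrSet Γ ρ₃) := by ring
      _ ≤ ε * τ * #(bohrSet Γ ρ₃) := by gcongr
      _ = ε * (τ * #(bohrSet Γ ρ₃)) := by ring
      _ ≤ ε * #A' := by gcongr; exact h.density_left
  linarith

end IsPopularPair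

end PopularPair

section Smoothing
variable {G : Type*} [AddCommGroup G]

lemma abs_smoothed_sub_avg_apply_le [DecidableEq G] [Finite G] {A' T B S X : Finset G} {δ : ℝ}
    {r : ℕ} (hA' : A'.Nonempty)
    (hspec : ∀ ψ, 1 / 2 ≤ ‖fourierMean T ψ‖ → ‖1 - fourierMean B ψ‖ ≤ δ)
    (hr : (1 / 2 : ℝ) ^ (2 * r) * 2 ≤ δ) (x : G) :
    |((1 - avg B) * (diffAvg T ^ r * avg X)) (avg A' (ind S)) x| ≤ δ * √(#S / #A') := by
  refine ((hasMultiplier_one.sub (hasMultiplier_avg B)).mul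
    (((hasMultiplier_diffAvg T).pow r).mul (hasMultiplier_avg X))).abs_apply_avg_ind_le
      (fun ψ ↦ ?_) S hA' x
  have hB : ‖1 - fourierMean B ψ‖ ≤ 2 :=
    (norm_sub_le _ _).trans (by rw [norm_one]; linarith [norm_fourierMean_le_one B ψ])
  simp only [Pi.mul_apply, Pi.sub_apply, Pi.one_apply, Pi.pow_apply, norm_mul, norm_pow,
    norm_fourierMean_neg]
  rw [← sq, ← pow_mul]
  calc ‖1 - fourierMean B ψ‖ * (‖fourierMean T ψ‖ ^ (2 * r) * ‖fourierMean X ψ‖)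
      ≤ ‖1 - fourierMean B ψ‖ * (‖fourierMean T ψ‖ ^ (2 * r) * 1) := by
        gcongr
        exact norm_fourierMean_le_one X ψ
    _ ≤ δ := by
        rw [mul_one]
        rcases le_or_gt (1 / 2) ‖fourierMean T ψ‖ with hψ | hψ
        · exact (mul_le_of_le_one_right (norm_nonneg _)
            (pow_le_one₀ (norm_nonneg _) (norm_fourierMean_le_one T ψ))).trans (hspec ψ hψ)
        · calc ‖1 - fourierMean B ψ‖ * ‖fourierMean T ψ‖ ^ (2 * r)
              ≤ 2 * (1 / 2) ^ (2 * r) := by gcongr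
            _ ≤ δ := by linarith

lemma norm_one_sub_fourierMean_bohrSet_union_le [Fintype G] [DecidableEq (AddChar G ℂ)]
    {Γ Λ : Finset (AddChar G ℂ)} {κ σ ρ : ℝ} {m n : ℕ} (hκ : 0 ≤ κ) (hσ : 0 ≤ σ)
    (hreg : IsRegular κ m Γ σ) (hΛ : #Λ ≤ n) {ψ : AddChar G ℂ} {e : AddChar G ℂ → ℤ}
    (he : ∀ φ, |e φ| ≤ 1)
    (hψ : (1 / 2) ^ n < ‖fourierMean (bohrSet Γ σ) (ψ * ∏ φ ∈ Λ, φ ^ e φ)‖) (hρ : 0 ≤ ρ)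
    (hρσ : ρ ≤ κ * σ) :
    ‖1 - fourierMean (bohrSet (Γ ∪ Λ) ρ) ψ‖ ≤ 2 / m * 2 ^ n + n * ρ := by
  refine norm_one_sub_fourierMean_le (bohrSet_nonempty hρ) fun x hx ↦ ?_
  set ζ := ψ * ∏ φ ∈ Λ, φ ^ e φ with hζ
  have hxΓ : x ∈ bohrSet Γ (κ * σ) := bohrSet_mono hρσ (bohrSet_anti subset_union_left hx)
  have hζx : ‖1 - ζ x‖ ≤ 2 / m * 2 ^ n := by
    have hdecay : (1 / 2 : ℝ) ^ n * ‖1 - ζ x‖ ≤ 2 / m :=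
      (mul_le_mul_of_nonneg_right hψ.le (norm_nonneg _)).trans
        (hreg.norm_fourierMean_mul_norm_one_sub_le hκ hσ ζ hxΓ)
    rwa [one_div, inv_pow, inv_mul_le_iff₀ (by positivity), mul_comm] at hdecay
  have hprod : ‖1 - (∏ φ ∈ Λ, φ ^ e φ) (-x)‖ ≤ n * ρ :=
    calc ‖1 - (∏ φ ∈ Λ, φ ^ e φ) (-x)‖ = ‖1 - (∏ φ ∈ Λ, φ ^ e φ) x‖ :=
          norm_one_sub_apply_neg _ x
      _ ≤ ∑ φ ∈ Λ, ‖1 - φ x‖ := norm_one_sub_prod_zpow_le Λ he x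
      _ ≤ #Λ * ρ := by
          rw [← nsmul_eq_mul]
          exact sum_le_card_nsmul _ _ _ fun φ hφ ↦ mem_bohrSet.1 hx φ (mem_union_right _ hφ)
      _ ≤ n * ρ := by gcongr
  have hψx : ψ x = ζ x * (∏ φ ∈ Λ, φ ^ e φ) (-x) := by
    rw [hζ, AddChar.mul_apply, mul_assoc, ← AddChar.map_add_eq_mul, add_neg_cancel,
      AddChar.map_zero_eq_one, mul_one]
  rw [hψx]
  exact (norm_one_sub_mul_le (AddChar.norm_apply _ _).le).trans (add_le_add hζx hprod)

lemma exists_mul_apply_le_avg_ind [Finite G] {M : Module.End ℝ (G → ℝ)} {A B S : Finset G}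
    {c : ℝ} (hM : IsAveraging M) (hcomm : Commute (avg B) M) (hA : A.Nonempty) (hB : B.Nonempty)
    (hS : ∀ z, c * ind S z ≤ avg A (ind A) z) (x₀ : G) :
    ∃ x, c * avg B (M (ind S)) x₀ ≤ avg B (ind A) x := by
  obtain ⟨x, hx⟩ := Finite.exists_max (avg B (ind A))
  refine ⟨x, ?_⟩
  calc c * avg B (M (ind S)) x₀ = avg B (M (c • ind S)) x₀ := by
        simp only [map_smul, Pi.smul_apply, smul_eq_mul]
    _ ≤ avg B (M (avg A (ind A))) x₀ :=
        (isAveraging_avg hB).mono (hM.mono hS) x₀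
    _ = M (avg A (avg B (ind A))) x₀ := by
        have h := congrArg (fun N : Module.End ℝ (G → ℝ) ↦ N (ind A) x₀)
          (hcomm.mul_right (commute_avg B A)).eq
        simpa only [Module.End.mul_apply] using h
    _ ≤ avg B (ind A) x := hM _ _ (isAveraging_avg hA _ _ hx) x₀

end Smoothing

/-! ### The density increment -/

section Translate
variable {G : Type*} [AddCommGroup G] {A B : Finset G}

lemma avg_ind_mul_card [DecidableEq G] (A B : Finset G) (t : G) :
    avg B (ind A) t * #B = #{u ∈ B | t + u ∈ A} := by
  rcases B.eq_empty_or_nonempty with rfl | hB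
  · simp
  have hB0 : (#B : ℝ) ≠ 0 := by exact_mod_cast hB.card_pos.ne'
  rw [avg_apply_eq_sum_div, div_mul_cancel₀ _ hB0, card_filter]
  push_cast
  simp only [Set.indicator_apply, mem_coe, Pi.one_apply]

lemma eq_of_threeAPFree_of_add_mem {t y y' z : G} (hA : ThreeAPFree (A : Set G))
    (hy : t + y ∈ A) (hy' : t + y' ∈ A) (hz : t + z ∈ A) (h : y + y' = z + z) : y = y' := by
  have hyz : y = z := add_left_cancel <| hA hy hz hy' <| by
    rw [add_add_add_comm, h, add_add_add_comm]
  rw [hyz] at h ⊢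
  exact (add_left_cancel h).symm

lemma avg_ind_le_one (hB : B.Nonempty) (x : G) : avg B (ind A) x ≤ 1 :=
  isAveraging_avg hB _ _ (ind_le_one A) x

lemma avg_ind_filter_add_mem_le [DecidableEq G] (hB : B.Nonempty) (X : Finset G) (t x : G) :
    avg B (ind {u ∈ X | t + u ∈ A}) x ≤ avg B (ind A) (t + x) := by
  have hshift : avg B (ind A) (t + x) = avg B (fun u ↦ ind A (t + u)) x := by
    simp only [avg_apply, add_assoc]
  rw [hshift]
  refine (isAveraging_avg hB).mono (fun u ↦ ?_) x
  by_cases hu : u ∈ ({u ∈ X | t + u ∈ A} : Finset G)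
  · rw [ind, Set.indicator_of_mem (mem_coe.2 hu), ind,
      Set.indicator_of_mem (mem_coe.2 (mem_filter.1 hu).2), Pi.one_apply, Pi.one_apply]
  · rw [ind, Set.indicator_of_notMem (by simpa using hu)]
    exact ind_nonneg A _

variable [Fintype G] {Γ : Finset (AddChar G ℂ)} {κ ρ ρ₁ ρ₂ α β : ℝ} {m : ℕ}

lemma IsRegular.avg_ind_sub_le (hκρ : 0 ≤ κ * ρ) (hρ : 0 ≤ ρ) (hreg : IsRegular κ m Γ ρ) (x : G)
    {v : G} (hv : v ∈ bohrSet Γ (κ * ρ)) :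
    avg (bohrSet Γ ρ) (ind A) x - 1 / m ≤ avg (bohrSet Γ ρ) (ind A) (x + v) := by
  classical
  set B := bohrSet Γ ρ
  have hB : (0 : ℝ) < #B := by exact_mod_cast card_bohrSet_pos (Γ := Γ) hρ
  have hinj : #{y ∈ ({u ∈ B | x + u ∈ A} : Finset G) | -v + y ∈ B} ≤ #{u ∈ B | x + v + u ∈ A} :=
    card_le_card_of_injOn (-v + ·)
      (fun y hy ↦ by
        simp only [coe_filter, mem_filter, Set.mem_ofPred_eq] at hy ⊢
        exact ⟨hy.2, by rw [add_assoc, add_neg_cancel_left]; exact hy.1.2⟩)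
      (add_right_injective _).injOn
  rify at hinj
  have hedge := hreg.card_sub_le_card_filter_add_mem hκρ (filter_subset (fun u ↦ x + u ∈ A) B)
    (neg_mem_bohrSet hv)
  refine le_of_mul_le_mul_right ?_ hB
  rw [sub_mul, avg_ind_mul_card, avg_ind_mul_card, one_div_mul_eq_div]
  exact hedge.trans hinj

lemma IsRegular.exists_le_avg_and_le_avg (hκρ : 0 ≤ κ * ρ) (hρ : 0 ≤ ρ) (hρ₁ : 0 ≤ ρ₁)
    (hρ₂ : 0 ≤ ρ₂) (hreg : IsRegular κ m Γ ρ) (h₁ : ρ₁ ≤ κ * ρ) (h₂ : ρ₂ ≤ κ * ρ) {x₀ : G}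
    (hα : α ≤ avg (bohrSet Γ ρ) (ind A) x₀) (hβ₁ : ∀ x, avg (bohrSet Γ ρ₁) (ind A) x ≤ β)
    (hβ₂ : ∀ x, avg (bohrSet Γ ρ₂) (ind A) x ≤ β) :
    ∃ t, 2 * (α - 1 / m) - β ≤ avg (bohrSet Γ ρ₁) (ind A) t ∧
      2 * (α - 1 / m) - β ≤ avg (bohrSet Γ ρ₂) (ind A) t := by
  have hmean {σ : ℝ} (hσ0 : 0 ≤ σ) (hσ : σ ≤ κ * ρ) :
      α - 1 / m ≤ avg (bohrSet Γ ρ) (avg (bohrSet Γ σ) (ind A)) x₀ := by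
    rw [← Module.End.mul_apply, (commute_avg _ _).eq, Module.End.mul_apply, avg_apply]
    exact le_expect (bohrSet_nonempty hσ0) fun t ht ↦
      (sub_le_sub_right hα _).trans (hreg.avg_ind_sub_le hκρ hρ x₀ (bohrSet_mono hσ ht))
  set f := avg (bohrSet Γ ρ₁) (ind A) + avg (bohrSet Γ ρ₂) (ind A) with hf
  obtain ⟨t, ht⟩ := Finite.exists_max f
  have hft : 2 * (α - 1 / m) ≤ f t := by
    refine le_trans ?_ (isAveraging_avg (bohrSet_nonempty (Γ := Γ) hρ) f _ ht x₀)
    rw [hf, map_add, Pi.add_apply]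
    linarith [hmean hρ₁ h₁, hmean hρ₂ h₂]
  rw [hf, Pi.add_apply] at hft
  exact ⟨t, by linarith [hβ₂ t], by linarith [hβ₁ t]⟩

end Translate

/-- A consistent choice of parameters for the density increment. It applies to sets of density at
least `α` on Bohr sets of rank at most `d` which are regular at scale `κ` with loss `1 / m`:
`3 * p` is the order of the moments, `τ` the density of the sifted sets, `ε` and `k` are the
precision and the number of samples in the Croot–Sisask lemma, `r` is the number of smoothing steps
and `n` the number of new characters. -/
structure IncrementParams where
  (α τ ε κ : ℝ)
  (d p k r n m : ℕ)
  α_pos : 0 < α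
  τ_pos : 0 < τ
  ε_pos : 0 < ε
  κ_pos : 0 < κ
  k_pos : 0 < k
  m_pos : 0 < m
  τ_le_one : τ ≤ 1
  ε_le_one : ε ≤ 1
  even_p : Even p
  le_p : 44 ≤ p
  pow_p_le : (4 / 5 : ℝ) ^ p ≤ (9 / 10) ^ p * (98 / 100 * α / 2)
  τ_le : τ ≤ (98 / 100 * α) ^ (3 * p) / 4
  exp_k_le : 16 * Real.exp (-(k * ε ^ 2 / 4)) ≤ ε * τ
  r_mul_ε_le : 300 * r * ε ≤ 1
  half_pow_r_le : (1 / 2 : ℝ) ^ (2 * r) * 2 ≤ τ / 100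
  lt_exp_n : 2 < 1 / 2 * (τ / 16) ^ k * Real.exp (n / 32)
  two_pow_n_le : 2 / (m : ℝ) * 2 ^ n ≤ τ / 200
  n_mul_κ_le : n * κ ≤ τ / 200
  le_m_mul_α : 200 ≤ m * α
  d_mul_κ_le : 4 * ((6 * d * m + 1 : ℕ) : ℝ) * κ ≤ 1

namespace IncrementParams
variable (P : IncrementParams)

lemma κ_le : P.κ ≤ 1 / 4 := by
  have hd : (1 : ℝ) ≤ ((6 * P.d * P.m + 1 : ℕ) : ℝ) := by exact_mod_cast Nat.le_add_left 1 _
  nlinarith [P.d_mul_κ_le, P.κ_pos]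

section Increment
variable {G : Type*} [AddCommGroup G] [Fintype G] {Γ : Finset (AddChar G ℂ)}
  {A A' A₂ S T : Finset G} {α ρ ρ₁ ρ₂ ρ₃ ρ₄ ρ₅ : ℝ}

lemma exists_isRegular (hΓ : #Γ ≤ P.d) (hρ : 0 < ρ) :
    ∃ ρ', ρ / 2 ≤ ρ' ∧ ρ' ≤ ρ ∧ IsRegular P.κ P.m Γ ρ' :=
  KelleyMeka.exists_isRegular P.m_pos P.κ_pos P.d_mul_κ_le hΓ hρ

lemma card_bohrSet_add_le (hρ : 0 ≤ ρ) (hreg : IsRegular P.κ P.m Γ ρ) :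
    (#(bohrSet Γ (ρ + P.κ * ρ)) : ℝ) ≤ 2 * #(bohrSet Γ ρ) :=
  hreg.card_bohrSet_add_le_two_mul (mul_nonneg P.κ_pos.le hρ) P.m_pos

lemma exists_spectrum_annihilated (hρ₅ : 0 ≤ ρ₅) (hreg : IsRegular P.κ P.m Γ ρ₅)
    (hTB : T ⊆ bohrSet Γ ρ₅) (hT : T.Nonempty)
    (hTcard : 1 / 2 * (P.τ / 16) ^ P.k * #(bohrSet Γ ρ₅) ≤ #T) :
    ∃ Γ' : Finset (AddChar G ℂ), #Γ' ≤ #Γ + P.n ∧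
      ∀ ρ, 0 ≤ ρ → ρ ≤ P.κ → ρ ≤ P.κ * ρ₅ → ∀ ψ, 1 / 2 ≤ ‖fourierMean T ψ‖ →
        ‖1 - fourierMean (bohrSet Γ' ρ) ψ‖ ≤ P.τ / 100 := by
  classical
  have hn : 2 * #(bohrSet Γ ρ₅) < #T * Real.exp (P.n / 32) :=
    calc 2 * (#(bohrSet Γ ρ₅) : ℝ)
        < 1 / 2 * (P.τ / 16) ^ P.k * Real.exp (P.n / 32) * #(bohrSet Γ ρ₅) := by
          have := card_bohrSet_pos (Γ := Γ) hρ₅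
          gcongr
          exact P.lt_exp_n
      _ = 1 / 2 * (P.τ / 16) ^ P.k * #(bohrSet Γ ρ₅) * Real.exp (P.n / 32) := by ring
      _ ≤ #T * Real.exp (P.n / 32) := by gcongr
  obtain ⟨Λ, hΛ, hspec⟩ := exists_card_le_forall_half_le_norm_fourierMean hTB hT hn
  refine ⟨Γ ∪ Λ, (card_union_le _ _).trans (by lia), fun ρ hρ hρκ hρ₅' ψ hψ ↦ ?_⟩
  obtain ⟨e, he, hψe⟩ := hspec ψ hψ
  calc ‖1 - fourierMean (bohrSet (Γ ∪ Λ) ρ) ψ‖ ≤ 2 / P.m * 2 ^ P.n + P.n * ρ :=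
        norm_one_sub_fourierMean_bohrSet_union_le P.κ_pos.le hρ₅ hreg hΛ he hψe hρ hρ₅'
    _ ≤ P.τ / 200 + P.τ / 200 := by
        have hnρ : P.n * ρ ≤ P.n * P.κ := by gcongr
        linarith [P.two_pow_n_le, P.n_mul_κ_le]
    _ = P.τ / 100 := by ring

lemma le_avg_diffAvg_pow [DecidableEq G] {B : Finset G}
    (h : IsPopularPair Γ P.κ ρ₃ ρ₄ P.τ A' A₂ S)
    (hD : (#(bohrSet Γ (ρ₃ + P.κ * ρ₃)) : ℝ) ≤ 2 * #(bohrSet Γ ρ₃)) (hT : T.Nonempty)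
    (hper : ∀ x, ∀ t ∈ T, ∀ s ∈ T, |avg A' (avg (-A₂) (ind S)) (x + (t - s)) -
      avg A' (avg (-A₂) (ind S)) x| ≤ 3 * P.ε)
    (hspec : ∀ ψ, 1 / 2 ≤ ‖fourierMean T ψ‖ → ‖1 - fourierMean B ψ‖ ≤ P.τ / 100) :
    95 / 100 ≤ avg B ((diffAvg T ^ P.r * (avg A' * avg (-A₂))) (ind S)) 0 := by
  set f := avg A' (avg (-A₂) (ind S)) with hf
  have hτ := P.τ_pos
  have hsmooth : |(diffAvg T ^ P.r) f 0 - f 0| ≤ 1 / 100 :=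
    (abs_diffAvg_pow_apply_sub_le hT hper P.r 0).trans (by linarith [P.r_mul_ε_le])
  have hsqrt : √(#S / #A') ≤ 2 / P.τ :=
    calc √(#S / #A') ≤ √((2 / P.τ) ^ 2) := Real.sqrt_le_sqrt <| by
          have : 1 ≤ 2 / P.τ := by rw [le_div_iff₀ hτ]; linarith [P.τ_le_one]
          exact (h.card_div_card_le hτ hD).trans (le_self_pow₀ this two_ne_zero)
      _ = 2 / P.τ := Real.sqrt_sq (by positivity)
  have hbohr : |(diffAvg T ^ P.r) f 0 - avg B ((diffAvg T ^ P.r) f) 0| ≤ 2 / 100 := by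
    have hfourier := abs_smoothed_sub_avg_apply_le (S := S) (X := -A₂) h.nonempty_left hspec
      P.half_pow_r_le 0
    have hcomm : avg (-A₂) (avg A' (ind S)) = f := by
      rw [hf, ← Module.End.mul_apply, (commute_avg (-A₂) A').eq, Module.End.mul_apply]
    simp only [Module.End.mul_apply, LinearMap.sub_apply, Module.End.one_apply, Pi.sub_apply,
      hcomm] at hfourier
    calc _ ≤ P.τ / 100 * √(#S / #A') := hfourier
      _ ≤ P.τ / 100 * (2 / P.τ) := by gcongr
      _ = 2 / 100 := by field_simp
  have hsum : 98 / 100 ≤ f 0 := h.le_avg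
  simp only [Module.End.mul_apply, ← hf]
  linarith [(abs_le.1 hsmooth).1, (abs_le.1 hbohr).2]

theorem exists_increment_of_large_moment (hρ₃ : 0 ≤ ρ₃) (hρ₄ : 0 ≤ ρ₄) (hρ₅ : 0 ≤ ρ₅)
    (hreg₃ : IsRegular P.κ P.m Γ ρ₃) (hreg₄ : IsRegular P.κ P.m Γ ρ₄)
    (hreg₅ : IsRegular P.κ P.m Γ ρ₅) (h₄₃ : 2 * ρ₄ ≤ P.κ * ρ₃) (h₅₄ : ρ₅ ≤ P.κ * ρ₄)
    (hA : A.Nonempty) (hα : 98 / 100 * P.α ≤ α)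
    (hmoment : (5 / 4 * (α * #A)) ^ (3 * P.p) * (#(bohrSet Γ ρ₃) : ℝ) ^ 2 ≤
      ∑ d ∈ bohrSet Γ ρ₃, ∑ d' ∈ bohrSet Γ ρ₃, corr (ind A) (d - d') ^ (3 * P.p)) :
    ∃ Γ' : Finset (AddChar G ℂ), #Γ' ≤ #Γ + P.n ∧
      ∀ ρ, 0 ≤ ρ → ρ ≤ P.κ → ρ ≤ P.κ * ρ₅ →
        ∃ x, 114 / 100 * α ≤ avg (bohrSet Γ' ρ) (ind A) x := by
  classical
  have hα0 : 0 < α := lt_of_lt_of_le (mul_pos (by norm_num) P.α_pos) hα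
  have hA0 : (0 : ℝ) < #A := by exact_mod_cast hA.card_pos
  have hτ : P.τ ≤ α ^ (3 * P.p) / 4 := P.τ_le.trans <| by
    have := P.α_pos
    gcongr
  have hD₃ := P.card_bohrSet_add_le hρ₃ hreg₃
  obtain ⟨A', A₂, S, hpair, hS⟩ := exists_isPopularPair hρ₃ hρ₄ h₄₃ hD₃ hA hα0
    (by linarith [P.le_p]) P.τ_pos hτ hmoment
  obtain ⟨T, hTB, hT, hTcard, hper⟩ := hpair.exists_almostPeriods hρ₅ h₅₄ hD₃
    (P.card_bohrSet_add_le hρ₄ hreg₄) P.τ_pos P.ε_pos.le P.ε_le_one P.k_pos P.exp_k_le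
  obtain ⟨Γ', hΓ', hspec⟩ := P.exists_spectrum_annihilated hρ₅ hreg₅ hTB hT hTcard
  refine ⟨Γ', hΓ', fun ρ hρ hρκ hρ₅' ↦ ?_⟩
  have hpopular (z : G) : 6 / 5 * α * ind S z ≤ avg A (ind A) z := by
    have hcorr := corr_ind_eq_card_mul_avg hA z
    by_cases hz : z ∈ S
    · rw [ind, Set.indicator_of_mem (mem_coe.2 hz), Pi.one_apply, mul_one]
      exact le_of_mul_le_mul_left (by linarith [hS z hz]) hA0
    · rw [ind, Set.indicator_of_notMem (by simpa using hz), mul_zero]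
      exact nonneg_of_mul_nonneg_right (hcorr ▸ corr_ind_nonneg A z) hA0
  obtain ⟨x, hx⟩ := exists_mul_apply_le_avg_ind
    (((isAveraging_diffAvg hT).pow P.r).mul
      ((isAveraging_avg hpair.nonempty_left).mul (isAveraging_avg hpair.nonempty_right.neg)))
    ((commute_avg_diffAvg_pow _ T P.r).mul_right ((commute_avg _ A').mul_right (commute_avg _ _)))
    hA (bohrSet_nonempty hρ) hpopular 0
  refine ⟨x, le_trans ?_ hx⟩
  have hlarge := P.le_avg_diffAvg_pow hpair hD₃ hT hper (hspec ρ hρ hρκ hρ₅')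
  calc 114 / 100 * α = 6 / 5 * α * (95 / 100) := by ring
    _ ≤ _ := by gcongr

lemma exists_isRegular_next (hΓ : #Γ ≤ P.d) (hρ : 0 < ρ) :
    ∃ ρ', 0 < ρ' ∧ P.κ / 4 * ρ ≤ ρ' ∧ 2 * ρ' ≤ P.κ * ρ ∧ IsRegular P.κ P.m Γ ρ' := by
  have hκρ := mul_pos P.κ_pos hρ
  obtain ⟨ρ', hlower, hupper, hreg⟩ := P.exists_isRegular hΓ (half_pos hκρ)
  exact ⟨ρ', by linarith, by linarith, by linarith, hreg⟩

lemma exists_increment_of_dense_pair (hodd : Odd (Fintype.card G)) {C : Finset G} (hρ₁ : 0 ≤ ρ₁)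
    (hρ₂ : 0 < ρ₂) (hρ₂1 : ρ₂ ≤ 1) (hreg₁ : IsRegular P.κ P.m Γ ρ₁)
    (hreg₂ : IsRegular P.κ P.m Γ ρ₂) (h₂₁ : 2 * ρ₂ ≤ P.κ * ρ₁) (hΓ : #Γ + P.n ≤ P.d)
    (hA : A ⊆ bohrSet Γ ρ₁) (hC : C ⊆ bohrSet Γ ρ₂)
    (hAP : ∀ y ∈ A, ∀ y' ∈ A, ∀ z ∈ C, y + y' = z + z → y = y') (hα : 98 / 100 * P.α ≤ α)
    (hαA : #A = α * #(bohrSet Γ ρ₁)) (hsize : 120 ≤ α ^ 2 * #(bohrSet Γ ρ₁))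
    (hCcard : 98 / 100 * P.α * #(bohrSet Γ ρ₂) ≤ #C) :
    ∃ (Γ' : Finset (AddChar G ℂ)) (ρ' : ℝ) (x : G), #Γ' ≤ #Γ + P.n ∧
      (P.κ / 4) ^ 4 * ρ₂ ≤ ρ' ∧ ρ' ≤ ρ₂ ∧ IsRegular P.κ P.m Γ' ρ' ∧
      114 / 100 * α ≤ avg (bohrSet Γ' ρ') (ind A) x := by
  have hκ := P.κ_pos
  have hα0 : 0 < α := lt_of_lt_of_le (mul_pos (by norm_num) P.α_pos) hα
  have hA0 : A.Nonempty := by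
    have := card_bohrSet_pos (Γ := Γ) hρ₁
    exact card_pos.1 (Nat.cast_pos.1 (by rw [hαA]; positivity))
  have hhalves : #(halves Γ) ≤ #Γ := card_halves_le
  obtain ⟨ρ₃, hρ₃, hκ₃, h₃₂, hreg₃⟩ := P.exists_isRegular_next (hhalves.trans (by lia)) hρ₂
  obtain ⟨ρ₄, hρ₄, hκ₄, h₄₃, hreg₄⟩ := P.exists_isRegular_next (hhalves.trans (by lia)) hρ₃
  obtain ⟨ρ₅, hρ₅, hκ₅, h₅₄, hreg₅⟩ := P.exists_isRegular_next (hhalves.trans (by lia)) hρ₄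
  have hshrink {σ : ℝ} (hσ : 0 ≤ σ) : P.κ * σ ≤ σ := by nlinarith [P.κ_le]
  have hmoment := hreg₁.pow_mul_le_sum_corr_ind_pow hodd hκ.le hρ₁ hρ₂.le
    (P.card_bohrSet_add_le hρ₂.le hreg₂) h₂₁ h₃₂ (by linarith [hshrink hρ₂.le]) hA hC hAP hα0 hαA
    (by nlinarith [P.le_m_mul_α, P.m_pos]) hsize hCcard P.even_p (by linarith [P.le_p]) P.pow_p_le
  obtain ⟨Γ', hΓ', hinc⟩ := P.exists_increment_of_large_moment hρ₃.le hρ₄.le hρ₅.le hreg₃ hreg₄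
    hreg₅ h₄₃ (by linarith) hA0 hα hmoment
  obtain ⟨ρ', hρ', hκ', h₆₅, hreg'⟩ := P.exists_isRegular_next (by lia : #Γ' ≤ P.d) hρ₅
  have hρ₅₂ : ρ₅ ≤ ρ₂ := by linarith [hshrink hρ₂.le, hshrink hρ₃.le, hshrink hρ₄.le]
  obtain ⟨x, hx⟩ := hinc ρ' hρ'.le (by nlinarith) (by linarith)
  refine ⟨Γ', ρ', x, by lia, ?_, by linarith [hshrink hρ₅.le], hreg', hx⟩
  calc (P.κ / 4) ^ 4 * ρ₂ = P.κ / 4 * (P.κ / 4 * (P.κ / 4 * (P.κ / 4 * ρ₂))) := by ring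
    _ ≤ P.κ / 4 * (P.κ / 4 * (P.κ / 4 * ρ₃)) := by gcongr
    _ ≤ P.κ / 4 * (P.κ / 4 * ρ₄) := by gcongr
    _ ≤ P.κ / 4 * ρ₅ := by gcongr
    _ ≤ ρ' := hκ'

lemma exists_increment_of_dense_translates (hodd : Odd (Fintype.card G))
    (hA : ThreeAPFree (A : Set G)) (hρ₁ : 0 ≤ ρ₁) (hρ₂ : 0 < ρ₂) (hρ₂1 : ρ₂ ≤ 1)
    (hreg₁ : IsRegular P.κ P.m Γ ρ₁) (hreg₂ : IsRegular P.κ P.m Γ ρ₂) (h₂₁ : 2 * ρ₂ ≤ P.κ * ρ₁)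
    (hΓ : #Γ + P.n ≤ P.d) {t : G} (ht₁ : 98 / 100 * P.α ≤ avg (bohrSet Γ ρ₁) (ind A) t)
    (ht₂ : 98 / 100 * P.α ≤ avg (bohrSet Γ ρ₂) (ind A) t)
    (hsize : 130 ≤ P.α ^ 2 * #(bohrSet Γ ρ₁)) :
    ∃ (Γ' : Finset (AddChar G ℂ)) (ρ' : ℝ) (x : G), #Γ' ≤ #Γ + P.n ∧
      (P.κ / 4) ^ 4 * ρ₂ ≤ ρ' ∧ ρ' ≤ ρ₂ ∧ IsRegular P.κ P.m Γ' ρ' ∧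
      114 / 100 * avg (bohrSet Γ ρ₁) (ind A) t ≤ avg (bohrSet Γ' ρ') (ind A) x := by
  classical
  have hα := P.α_pos
  have hsize' : 120 ≤ avg (bohrSet Γ ρ₁) (ind A) t ^ 2 * #(bohrSet Γ ρ₁) :=
    calc (120 : ℝ) ≤ (98 / 100) ^ 2 * (P.α ^ 2 * #(bohrSet Γ ρ₁)) := by linarith
      _ = (98 / 100 * P.α) ^ 2 * #(bohrSet Γ ρ₁) := by ring
      _ ≤ avg (bohrSet Γ ρ₁) (ind A) t ^ 2 * #(bohrSet Γ ρ₁) := by gcongr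
  obtain ⟨Γ', ρ', x, hΓ', hlower, hupper, hreg', hx⟩ := P.exists_increment_of_dense_pair hodd
    (A := {u ∈ bohrSet Γ ρ₁ | t + u ∈ A}) (C := {u ∈ bohrSet Γ ρ₂ | t + u ∈ A}) hρ₁ hρ₂ hρ₂1
    hreg₁ hreg₂ h₂₁ hΓ (filter_subset _ _) (filter_subset _ _)
    (fun y hy y' hy' z hz ↦ eq_of_threeAPFree_of_add_mem hA (mem_filter.1 hy).2
      (mem_filter.1 hy').2 (mem_filter.1 hz).2)
    ht₁ (avg_ind_mul_card A _ t).symm hsize' (by rw [← avg_ind_mul_card]; gcongr)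
  have hρ' : 0 ≤ ρ' := le_trans (by have := P.κ_pos; positivity) hlower
  exact ⟨Γ', ρ', t + x, hΓ', hlower, hupper, hreg',
    hx.trans (avg_ind_filter_add_mem_le (bohrSet_nonempty hρ') _ t x)⟩

/-- Unless `A` is already denser on a translate of a smaller Bohr set of the same rank, it is
dense on translates by a common `t` of Bohr sets of two different scales, and the points of the
smaller one serve as the midpoints of the missing progressions. -/
theorem exists_increment (hodd : Odd (Fintype.card G)) (hA : ThreeAPFree (A : Set G)) (hρ : 0 < ρ)
    (hρ1 : ρ ≤ 1) (hreg : IsRegular P.κ P.m Γ ρ) (hΓ : #Γ + P.n ≤ P.d) (hα : P.α ≤ α) {x₀ : G}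
    (hx₀ : α ≤ avg (bohrSet Γ ρ) (ind A) x₀)
    (hsize : 130 ≤ P.α ^ 2 * #(bohrSet Γ (P.κ / 4 * ρ))) :
    ∃ (Γ' : Finset (AddChar G ℂ)) (ρ' : ℝ) (x : G), #Γ' ≤ #Γ + P.n ∧ (P.κ / 4) ^ 6 * ρ ≤ ρ' ∧
      ρ' ≤ ρ ∧ IsRegular P.κ P.m Γ' ρ' ∧ 101 / 100 * α ≤ avg (bohrSet Γ' ρ') (ind A) x := by
  have hκ := P.κ_pos
  obtain ⟨ρ₁, hρ₁, hκ₁, h₁, hreg₁⟩ := P.exists_isRegular_next (by lia : #Γ ≤ P.d) hρ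
  obtain ⟨ρ₂, hρ₂, hκ₂, h₂₁, hreg₂⟩ := P.exists_isRegular_next (by lia : #Γ ≤ P.d) hρ₁
  have hρ₁ρ : ρ₁ ≤ ρ := by nlinarith [P.κ_le]
  have hρ₂₁ : ρ₂ ≤ ρ₁ := by nlinarith [P.κ_le]
  have hκ₂' : (P.κ / 4) ^ 2 * ρ ≤ ρ₂ := by nlinarith
  have hκ₆ : (P.κ / 4) ^ 6 * ρ ≤ (P.κ / 4) ^ 2 * ρ := by
    gcongr ?_ * ρ
    exact pow_le_pow_of_le_one (by positivity) (by linarith [P.κ_le]) (by norm_num)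
  by_cases! hdense₁ : ∃ x, 101 / 100 * α ≤ avg (bohrSet Γ ρ₁) (ind A) x
  · obtain ⟨x, hx⟩ := hdense₁
    exact ⟨Γ, ρ₁, x, by lia, by linarith, hρ₁ρ, hreg₁, hx⟩
  by_cases! hdense₂ : ∃ x, 101 / 100 * α ≤ avg (bohrSet Γ ρ₂) (ind A) x
  · obtain ⟨x, hx⟩ := hdense₂
    exact ⟨Γ, ρ₂, x, by lia, by linarith, by linarith, hreg₂, hx⟩
  obtain ⟨t, ht₁, ht₂⟩ := hreg.exists_le_avg_and_le_avg (by positivity) hρ.le hρ₁.le hρ₂.le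
    (by linarith) (by linarith) hx₀ (fun x ↦ (hdense₁ x).le) fun x ↦ (hdense₂ x).le
  have hm : 1 / (P.m : ℝ) ≤ α / 200 := by
    rw [div_le_iff₀ (Nat.cast_pos.2 P.m_pos)]
    nlinarith [P.le_m_mul_α, P.m_pos]
  have hsize₁ : 130 ≤ P.α ^ 2 * #(bohrSet Γ ρ₁) :=
    hsize.trans (by gcongr; exact bohrSet_mono hκ₁)
  obtain ⟨Γ', ρ', x, hΓ', hlower, hupper, hreg', hx⟩ :=
    P.exists_increment_of_dense_translates (t := t) hodd hA hρ₁.le hρ₂ (by linarith) hreg₁ hreg₂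
      h₂₁ hΓ (by linarith) (by linarith) hsize₁
  refine ⟨Γ', ρ', x, hΓ', le_trans ?_ hlower, by linarith, hreg', by linarith [P.α_pos]⟩
  calc (P.κ / 4) ^ 6 * ρ = (P.κ / 4) ^ 4 * ((P.κ / 4) ^ 2 * ρ) := by ring
    _ ≤ (P.κ / 4) ^ 4 * ρ₂ := by gcongr

end Increment

section Iterate
variable {G : Type*} [AddCommGroup G] [Fintype G] {Γ : Finset (AddChar G ℂ)} {A : Finset G}
  {ρ : ℝ} {J e : ℕ}

lemma le_sq_mul_card_bohrSet (he : 1 ≤ 2 ^ e * (P.κ / 4))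
    (hG : 130 * 64 ^ (J * P.n * (e * (6 * J + 1) + 1)) ≤ P.α ^ 2 * Fintype.card G)
    (hΓ : #Γ ≤ J * P.n) (hρ : (P.κ / 4) ^ (6 * J) ≤ ρ) :
    130 ≤ P.α ^ 2 * #(bohrSet Γ (P.κ / 4 * ρ)) := by
  have hκ : 0 < P.κ / 4 := by linarith [P.κ_pos]
  have hκρ : 2 ≤ 2 ^ (e * (6 * J + 1) + 1) * (P.κ / 4 * ρ) :=
    calc (2 : ℝ) ≤ 2 * (2 ^ e * (P.κ / 4)) ^ (6 * J + 1) := by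
          linarith [one_le_pow₀ (n := 6 * J + 1) he]
      _ = 2 ^ (e * (6 * J + 1) + 1) * (P.κ / 4 * (P.κ / 4) ^ (6 * J)) := by ring
      _ ≤ 2 ^ (e * (6 * J + 1) + 1) * (P.κ / 4 * ρ) := by gcongr
  have hcard : (Fintype.card G : ℝ) ≤
      #(bohrSet Γ (P.κ / 4 * ρ)) * 64 ^ (#Γ * (e * (6 * J + 1) + 1)) := by
    exact_mod_cast card_le_card_bohrSet_mul (mul_pos hκ (hρ.trans_lt' (by positivity))) hκρ
  refine le_of_mul_le_mul_right ?_
    (by positivity : (0 : ℝ) < 64 ^ (J * P.n * (e * (6 * J + 1) + 1)))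
  calc (130 : ℝ) * 64 ^ (J * P.n * (e * (6 * J + 1) + 1)) ≤ P.α ^ 2 * Fintype.card G := hG
    _ ≤ P.α ^ 2 * (#(bohrSet Γ (P.κ / 4 * ρ)) * 64 ^ (J * P.n * (e * (6 * J + 1) + 1))) := by
      grw [hcard, hΓ]
      norm_num
    _ = P.α ^ 2 * #(bohrSet Γ (P.κ / 4 * ρ)) * 64 ^ (J * P.n * (e * (6 * J + 1) + 1)) := by ring

lemma exists_pow_mul_le_avg (hodd : Odd (Fintype.card G)) (hA : ThreeAPFree (A : Set G))
    (hd : J * P.n ≤ P.d) (he : 1 ≤ 2 ^ e * (P.κ / 4))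
    (hG : 130 * 64 ^ (J * P.n * (e * (6 * J + 1) + 1)) ≤ P.α ^ 2 * Fintype.card G)
    (hα : P.α * Fintype.card G ≤ #A) {j : ℕ} (hj : j ≤ J) :
    ∃ (Γ : Finset (AddChar G ℂ)) (ρ : ℝ) (x : G), #Γ ≤ j * P.n ∧ (P.κ / 4) ^ (6 * j) ≤ ρ ∧
      ρ ≤ 1 ∧ IsRegular P.κ P.m Γ ρ ∧
      (101 / 100) ^ j * P.α ≤ avg (bohrSet Γ ρ) (ind A) x := by
  have hκ : 0 < P.κ / 4 := by linarith [P.κ_pos]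
  have hα₀ := P.α_pos
  induction j with
  | zero =>
    classical
    have huniv (σ : ℝ) : bohrSet (∅ : Finset (AddChar G ℂ)) σ = univ := by ext; simp [mem_bohrSet]
    refine ⟨∅, 1, 0, by simp, by simp, le_rfl, ?_, ?_⟩
    · rw [IsRegular, huniv, huniv, add_mul, one_mul]
      exact le_add_of_nonneg_right (by positivity)
    · have havg := avg_ind_mul_card A univ 0
      simp only [zero_add, filter_mem_eq_inter, univ_inter, card_univ] at havg
      rw [huniv, pow_zero, one_mul]
      exact le_of_mul_le_mul_right (hα.trans_eq havg.symm) (by positivity)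
  | succ j ih =>
    obtain ⟨Γ, ρ, x, hΓ, hρ, hρ1, hreg, hx⟩ := ih (by lia)
    have hjJ : j * P.n + P.n ≤ J * P.n := by
      rw [← Nat.succ_mul]
      exact Nat.mul_le_mul_right _ hj
    have hρJ : (P.κ / 4) ^ (6 * J) ≤ ρ :=
      (pow_le_pow_of_le_one hκ.le (by linarith [P.κ_le]) (by lia)).trans hρ
    have hαj : P.α ≤ (101 / 100) ^ j * P.α :=
      le_mul_of_one_le_left hα₀.le (one_le_pow₀ (by norm_num))
    obtain ⟨Γ', ρ', x', hΓ', hκρ', hρ', hreg', hx'⟩ := P.exists_increment hodd hA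
      (hρ.trans_lt' (by positivity)) hρ1 hreg (by lia) hαj hx
      (P.le_sq_mul_card_bohrSet he hG (by lia) hρJ)
    refine ⟨Γ', ρ', x', by lia, hκρ'.trans' ?_, hρ'.trans hρ1, hreg', hx'.trans' (by ring_nf; rfl)⟩
    calc (P.κ / 4) ^ (6 * (j + 1)) = (P.κ / 4) ^ 6 * (P.κ / 4) ^ (6 * j) := by ring
      _ ≤ (P.κ / 4) ^ 6 * ρ := by gcongr

/-- Densities never exceed `1`, which bounds the number of density increments. -/
theorem pow_mul_le_one (hodd : Odd (Fintype.card G)) (hA : ThreeAPFree (A : Set G))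
    (hd : J * P.n ≤ P.d) (he : 1 ≤ 2 ^ e * (P.κ / 4))
    (hG : 130 * 64 ^ (J * P.n * (e * (6 * J + 1) + 1)) ≤ P.α ^ 2 * Fintype.card G)
    (hα : P.α * Fintype.card G ≤ #A) : (101 / 100) ^ J * P.α ≤ 1 := by
  obtain ⟨Γ, ρ, x, -, hρ, -, -, hx⟩ := P.exists_pow_mul_le_avg hodd hA hd he hG hα le_rfl
  have hκ := P.κ_pos
  exact hx.trans (avg_ind_le_one (bohrSet_nonempty (hρ.trans' (by positivity))) x)

end Iterate

end IncrementParams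

/-! ### Choice of the parameters -/

section Parameters

lemma half_pow_le_half_pow {a b : ℕ} (h : a ≤ b) : (1 / 2 : ℝ) ^ b ≤ (1 / 2) ^ a :=
  pow_le_pow_of_le_one (by norm_num) (by norm_num) h

lemma two_pow_le_half_pow_mul_two_pow {a b c : ℕ} (h : a + b ≤ c) :
    (2 : ℝ) ^ b ≤ (1 / 2) ^ a * 2 ^ c :=
  calc (2 : ℝ) ^ b = (1 / 2) ^ a * 2 ^ (a + b) := by
        rw [pow_add, ← mul_assoc, ← mul_pow]
        norm_num
    _ ≤ (1 / 2) ^ a * 2 ^ c := by gcongr; norm_num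

lemma two_pow_le_exp (t : ℕ) : (2 : ℝ) ^ t ≤ Real.exp t := by
  rw [← Real.exp_one_pow]
  gcongr
  linarith [Real.add_one_le_exp 1]

variable {L s k n d : ℕ}

lemma half_pow_succ_le : (1 / 2 : ℝ) ^ (L + 1) ≤ 98 / 100 * (1 / 2) ^ L := by
  rw [pow_succ]
  linarith [pow_pos (by norm_num : (0 : ℝ) < 1 / 2) L]

lemma four_fifths_pow_le (hL : 1 ≤ L) :
    (4 / 5 : ℝ) ^ (60 * L) ≤ (9 / 10) ^ (60 * L) * (98 / 100 * (1 / 2) ^ L / 2) :=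
  calc (4 / 5 : ℝ) ^ (60 * L) = (9 / 10) ^ (60 * L) * ((8 / 9) ^ 6) ^ (10 * L) := by
        rw [← pow_mul, show 6 * (10 * L) = 60 * L by ring, ← mul_pow]
        norm_num
    _ ≤ (9 / 10) ^ (60 * L) * (1 / 2) ^ (10 * L) := by gcongr; norm_num
    _ ≤ (9 / 10) ^ (60 * L) * (1 / 2) ^ (L + 1 + 1) := by
        gcongr (9 / 10) ^ (60 * L) * ?_
        exact half_pow_le_half_pow (by lia)
    _ = (9 / 10) ^ (60 * L) * ((1 / 2) ^ (L + 1) / 2) := by ring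
    _ ≤ (9 / 10) ^ (60 * L) * (98 / 100 * (1 / 2) ^ L / 2) := by gcongr; exact half_pow_succ_le

lemma half_pow_le_density_pow (hL : 1 ≤ L) (hs : 362 * L ^ 2 ≤ s) :
    (1 / 2 : ℝ) ^ s ≤ (98 / 100 * (1 / 2) ^ L) ^ (3 * (60 * L)) / 4 :=
  calc (1 / 2 : ℝ) ^ s ≤ (1 / 2) ^ ((L + 1) * (3 * (60 * L)) + 2) :=
        half_pow_le_half_pow (hs.trans' (by nlinarith))
    _ = ((1 / 2) ^ (L + 1)) ^ (3 * (60 * L)) / 4 := by ring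
    _ ≤ (98 / 100 * (1 / 2) ^ L) ^ (3 * (60 * L)) / 4 := by gcongr; exact half_pow_succ_le

lemma exp_samples_le (hs : 13 ≤ s) :
    16 * Real.exp (-(((1080000 * s ^ 3 : ℕ) : ℝ) * (1 / (300 * s)) ^ 2 / 4)) ≤
      1 / (300 * s) * (1 / 2) ^ s := by
  have : 0 < (s : ℝ) := by exact_mod_cast (by lia : 0 < s)
  have hexp : ((1080000 * s ^ 3 : ℕ) : ℝ) * (1 / (300 * s)) ^ 2 / 4 = ((3 * s : ℕ) : ℝ) := by
    push_cast
    field_simp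
    norm_num
  have hpow : 4800 * s * 2 ^ s ≤ 2 ^ (3 * s) :=
    calc 4800 * s * 2 ^ s ≤ 2 ^ s * 2 ^ s * 2 ^ s := by
          gcongr
          · exact (Nat.pow_le_pow_right two_pos hs).trans' (by norm_num)
          · exact Nat.lt_two_pow_self.le
      _ = 2 ^ (3 * s) := by ring
  have hle : (4800 : ℝ) * s * 2 ^ s ≤ Real.exp (3 * s : ℕ) :=
    (two_pow_le_exp _).trans' (by exact_mod_cast hpow)
  rw [hexp, Real.exp_neg, one_div_pow, one_div_mul_one_div, ← div_eq_mul_inv,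
    div_le_div_iff₀ (Real.exp_pos _) (by positivity)]
  linarith

lemma two_lt_mul_exp (hs : 5 ≤ s) (hk : 3 ≤ k) :
    2 < 1 / 2 * ((1 / 2 : ℝ) ^ s / 16) ^ k * Real.exp ((64 * s * k : ℕ) / 32) := by
  have hbase : ((1 / 2 : ℝ) ^ s / 16) ^ k = (1 / 2) ^ ((s + 4) * k) := by
    rw [pow_mul, pow_add]
    norm_num [div_eq_mul_inv]
  have hpow := two_pow_le_half_pow_mul_two_pow
    (by nlinarith : (s + 4) * k + 3 ≤ 2 * s * k)
  calc (2 : ℝ) < 1 / 2 * 2 ^ 3 := by norm_num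
    _ ≤ 1 / 2 * ((1 / 2) ^ ((s + 4) * k) * 2 ^ (2 * s * k)) := by gcongr
    _ ≤ 1 / 2 * ((1 / 2) ^ ((s + 4) * k) * Real.exp (2 * s * k : ℕ)) := by
        gcongr
        exact two_pow_le_exp _
    _ = 1 / 2 * ((1 / 2 : ℝ) ^ s / 16) ^ k * Real.exp ((64 * s * k : ℕ) / 32) := by
        rw [hbase]
        push_cast
        ring_nf

lemma half_pow_le_div {a : ℕ} (h : s + 8 ≤ a) : (1 / 2 : ℝ) ^ a ≤ (1 / 2) ^ s / 200 :=
  calc (1 / 2 : ℝ) ^ a ≤ (1 / 2) ^ (s + 8) := half_pow_le_half_pow h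
    _ = (1 / 2) ^ s / 256 := by ring
    _ ≤ (1 / 2) ^ s / 200 := by gcongr; norm_num

lemma two_div_mul_two_pow_le (h : s + 9 ≤ n) :
    2 / ((2 ^ (2 * n) : ℕ) : ℝ) * 2 ^ n ≤ (1 / 2) ^ s / 200 :=
  calc 2 / ((2 ^ (2 * n) : ℕ) : ℝ) * 2 ^ n = 2 * (1 / 2) ^ n := by
        push_cast
        rw [one_div_pow, two_mul n, pow_add]
        field_simp
    _ ≤ 2 * (1 / 2) ^ (s + 9) := by gcongr 2 * ?_; exact half_pow_le_half_pow h
    _ = (1 / 2) ^ (s + 8) := by ring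
    _ ≤ (1 / 2) ^ s / 200 := half_pow_le_div le_rfl

lemma nat_mul_half_pow_le (h : s + 8 ≤ 4 * n) : (n : ℝ) * (1 / 2) ^ (5 * n) ≤ (1 / 2) ^ s / 200 :=
  calc (n : ℝ) * (1 / 2) ^ (5 * n) ≤ 2 ^ n * (1 / 2) ^ (5 * n) := by
        gcongr
        exact_mod_cast Nat.lt_two_pow_self.le
    _ = (1 / 2) ^ (4 * n) := by
        rw [show 5 * n = n + 4 * n by ring, pow_add, ← mul_assoc, ← mul_pow]
        norm_num
    _ ≤ (1 / 2) ^ s / 200 := half_pow_le_div h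

lemma le_two_pow_mul_half_pow (h : L + 8 ≤ 2 * n) :
    200 ≤ ((2 ^ (2 * n) : ℕ) : ℝ) * (1 / 2) ^ L := by
  push_cast
  rw [mul_comm]
  exact (two_pow_le_half_pow_mul_two_pow h).trans' (by norm_num)

lemma rank_mul_half_pow_le (hn : 5 ≤ n) (hd : d ≤ n * n) :
    4 * ((6 * d * 2 ^ (2 * n) + 1 : ℕ) : ℝ) * (1 / 2) ^ (5 * n) ≤ 1 := by
  have hd' : d ≤ 2 ^ (2 * n) :=
    calc d ≤ n * n := hd
      _ ≤ 2 ^ n * 2 ^ n := Nat.mul_le_mul Nat.lt_two_pow_self.le Nat.lt_two_pow_self.le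
      _ = 2 ^ (2 * n) := by ring
  have hpow : 4 * (6 * d * 2 ^ (2 * n) + 1) ≤ 2 ^ (5 * n) :=
    calc 4 * (6 * d * 2 ^ (2 * n) + 1)
        ≤ 4 * (6 * 2 ^ (2 * n) * 2 ^ (2 * n) + 2 ^ (2 * n) * 2 ^ (2 * n)) := by
          gcongr
          exact Nat.one_le_iff_ne_zero.2 (by positivity)
      _ = 28 * 2 ^ (4 * n) := by ring
      _ ≤ 2 ^ n * 2 ^ (4 * n) := by
          gcongr
          exact (Nat.pow_le_pow_right two_pos hn).trans' (by norm_num)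
      _ = 2 ^ (5 * n) := by ring
  rw [one_div_pow, mul_one_div, div_le_one (by positivity)]
  exact_mod_cast hpow

/-- The parameters for density `2⁻ᴸ`, in terms of the exponent `s = O(L²)` of the density `2⁻ˢ` of
the sifted sets. The number `n` of new characters has order `s⁴`. -/
noncomputable def incrementParams (L s : ℕ) (hL : 1 ≤ L) (hs : 362 * L ^ 2 ≤ s) :
    IncrementParams :=
  have hLs : 362 * L ≤ s := hs.trans' (by nlinarith)
  have hs₀ : (1 : ℝ) ≤ s := by exact_mod_cast (by lia : 1 ≤ s)
  have hsk : s ≤ 1080000 * s ^ 3 := by nlinarith [Nat.le_self_pow (n := 3) (by simp) s]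
  have hsn : 362 * s ≤ 64 * s * (1080000 * s ^ 3) := by nlinarith
  { α := (1 / 2) ^ L
    τ := (1 / 2) ^ s
    ε := 1 / (300 * s)
    κ := (1 / 2) ^ (5 * (64 * s * (1080000 * s ^ 3)))
    d := 100 * L * (64 * s * (1080000 * s ^ 3))
    p := 60 * L
    k := 1080000 * s ^ 3
    r := s
    n := 64 * s * (1080000 * s ^ 3)
    m := 2 ^ (2 * (64 * s * (1080000 * s ^ 3)))
    α_pos := by positivity
    τ_pos := by positivity
    ε_pos := by positivity
    κ_pos := by positivity
    k_pos := by lia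
    m_pos := by positivity
    τ_le_one := pow_le_one₀ (by norm_num) (by norm_num)
    ε_le_one := by
      rw [div_le_one (by positivity)]
      linarith
    even_p := ⟨30 * L, by ring⟩
    le_p := by lia
    pow_p_le := four_fifths_pow_le hL
    τ_le := half_pow_le_density_pow hL hs
    exp_k_le := exp_samples_le (by lia)
    r_mul_ε_le := (mul_one_div_cancel (by positivity)).le
    half_pow_r_le := by linarith [half_pow_le_div (by lia : s + 8 ≤ 2 * s)]
    lt_exp_n := two_lt_mul_exp (by lia) (by lia)
    two_pow_n_le := two_div_mul_two_pow_le (by lia)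
    n_mul_κ_le := nat_mul_half_pow_le (by lia)
    le_m_mul_α := le_two_pow_mul_half_pow (by lia)
    d_mul_κ_le := rank_mul_half_pow_le (by lia) (Nat.mul_le_mul_right _ (by lia)) }

lemma size_exponent_le {J : ℕ} (hJ : 100 ≤ J) (hn : 1 ≤ n) (hL : L ≤ J) :
    8 + 6 * (J * n * (6 * n * (6 * J + 1) + 1)) + 2 * L ≤ 260 * (J * n) ^ 2 := by
  have hJn : J ≤ J * n := Nat.le_mul_of_pos_right _ hn
  nlinarith [Nat.mul_le_mul_right (J * n * n) hJ, Nat.mul_le_mul_right (J * n) (hJ.trans hJn)]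

lemma mul_pow_le_half_pow_sq_mul {J N : ℕ} (hJ : 100 ≤ J) (hn : 1 ≤ n) (hL : L ≤ J)
    (hN : 2 ^ (260 * (J * n) ^ 2) ≤ N) :
    (130 : ℝ) * 64 ^ (J * n * (6 * n * (6 * J + 1) + 1)) ≤ ((1 / 2) ^ L) ^ 2 * N := by
  have hexp := size_exponent_le hJ hn hL
  set a := J * n * (6 * n * (6 * J + 1) + 1)
  calc (130 : ℝ) * 64 ^ a ≤ 2 ^ 8 * (2 ^ 6) ^ a := by norm_num
    _ = 2 ^ (8 + 6 * a) := by rw [← pow_mul, pow_add]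
    _ ≤ (1 / 2) ^ (2 * L) * 2 ^ (260 * (J * n) ^ 2) :=
        two_pow_le_half_pow_mul_two_pow (by lia)
    _ ≤ (1 / 2) ^ (2 * L) * N := by gcongr; exact_mod_cast hN
    _ = ((1 / 2) ^ L) ^ 2 * N := by rw [mul_comm 2, pow_mul]

lemma one_lt_pow_mul_half_pow (hL : 1 ≤ L) : 1 < (101 / 100 : ℝ) ^ (100 * L) * (1 / 2) ^ L := by
  rw [pow_mul, ← mul_pow]
  exact one_lt_pow₀ (by norm_num) (by lia)

end Parameters

section Group
variable {G : Type*} [AddCommGroup G] [Fintype G] {A : Finset G} {L : ℕ}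

/-- The constant of the density theorem for groups, chosen so that
`groupConstant * L ^ 18 = 260 * (J * n) ^ 2`, where `J = 100 * L` is the number of density
increments and `n` the number of characters added by each of them. -/
def groupConstant : ℕ := 260 * (100 * (64 * 1080000 * 362 ^ 4)) ^ 2

theorem card_le_half_pow_mul_card (hodd : Odd (Fintype.card G))
    (hG : 2 ^ (groupConstant * L ^ 18) ≤ Fintype.card G) (hA : ThreeAPFree (A : Set G)) :
    (#A : ℝ) ≤ (1 / 2) ^ L * Fintype.card G := by
  obtain rfl | hL : L = 0 ∨ 1 ≤ L := by lia
  · simpa using A.card_le_univ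
  by_contra! hlt
  let P := incrementParams L (362 * L ^ 2) hL le_rfl
  have hn : 5 ≤ P.n := by
    change 5 ≤ 64 * (362 * L ^ 2) * (1080000 * (362 * L ^ 2) ^ 3)
    nlinarith [Nat.one_le_pow 8 L hL]
  have hconst : groupConstant * L ^ 18 = 260 * (100 * L * P.n) ^ 2 := by
    simp only [groupConstant, P, incrementParams]
    ring
  have hκ : 1 ≤ 2 ^ (6 * P.n) * (P.κ / 4) := by
    have := two_pow_le_half_pow_mul_two_pow (by lia : 5 * P.n + 2 ≤ 6 * P.n)
    change 1 ≤ 2 ^ (6 * P.n) * ((1 / 2) ^ (5 * P.n) / 4)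
    linarith
  have hdensity := P.pow_mul_le_one (J := 100 * L) hodd hA le_rfl hκ
    (mul_pow_le_half_pow_sq_mul (by lia) (by lia) (by lia) (hconst ▸ hG)) hlt.le
  exact hdensity.not_gt (one_lt_pow_mul_half_pow hL)

end Group

/-! ### Progression-free sets of natural numbers -/

section Naturals

lemma rothNumberNat_le_half_pow_mul {N L : ℕ} (h : 2 ^ (groupConstant * L ^ 18) ≤ 2 * N + 1) :
    (rothNumberNat N : ℝ) ≤ (1 / 2) ^ L * (2 * N + 1) := by
  obtain ⟨A, -, hcard, hA⟩ := addRothNumber_spec (Iio (⟨N, by lia⟩ : Fin (2 * N + 1)))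
  rw [Fin.addRothNumber_eq_rothNumberNat le_rfl] at hcard
  have hodd : Odd (Fintype.card (Fin (2 * N + 1))) := by simp
  simpa [← hcard] using card_le_half_pow_mul_card (L := L) hodd (by simpa using h) hA

lemma half_pow_floor_le {y : ℝ} : (1 / 2 : ℝ) ^ ⌊y⌋₊ ≤ 2 * Real.exp (-(Real.log 2 * y)) := by
  have hlog := Real.log_pos one_lt_two
  have hpow : (1 / 2 : ℝ) ^ ⌊y⌋₊ = Real.exp (-(Real.log 2 * ⌊y⌋₊)) := by
    rw [Real.exp_neg, mul_comm, Real.exp_nat_mul, Real.exp_log two_pos, one_div_pow, one_div]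
  calc (1 / 2 : ℝ) ^ ⌊y⌋₊ ≤ Real.exp (Real.log 2 + -(Real.log 2 * y)) := by
        rw [hpow, Real.exp_le_exp]
        nlinarith [Nat.lt_floor_add_one y]
    _ = 2 * Real.exp (-(Real.log 2 * y)) := by rw [Real.exp_add, Real.exp_log two_pos]

/-- The Kelley–Meka bound; the exponent `1 / 18` reflects `log N ≍ (J * n) ^ 2` with `J ≍ L`
increments and `n ≍ L ^ 8` new characters in each, at density `2⁻ᴸ`. -/
theorem exists_rothNumberNat_le_mul_exp :
    ∃ c > 0, ∀ N : ℕ,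
      (rothNumberNat N : ℝ) ≤ 6 * N * Real.exp (-(c * Real.log N ^ (1 / 18 : ℝ))) := by
  have hK : (0 : ℝ) < groupConstant := by norm_num [groupConstant]
  have := Real.log_pos one_lt_two
  refine ⟨Real.log 2 * (1 / groupConstant) ^ (1 / 18 : ℝ), by positivity, fun N ↦ ?_⟩
  obtain rfl | hN := N.eq_zero_or_pos
  · simp
  have hN' : (1 : ℝ) ≤ N := by exact_mod_cast hN
  have hlogN := Real.log_nonneg hN'
  set y := (1 / groupConstant * Real.log N) ^ (1 / 18 : ℝ) with hy
  have hL : groupConstant * (⌊y⌋₊ : ℝ) ^ 18 ≤ Real.log N :=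
    calc groupConstant * (⌊y⌋₊ : ℝ) ^ 18 ≤ groupConstant * y ^ 18 := by
          gcongr
          exact Nat.floor_le (by positivity)
      _ = Real.log N := by
          rw [hy, ← Real.rpow_mul_natCast (by positivity)]
          norm_num
          field_simp
  have hsize : (2 : ℝ) ^ (groupConstant * ⌊y⌋₊ ^ 18) ≤ N :=
    calc (2 : ℝ) ^ (groupConstant * ⌊y⌋₊ ^ 18)
        ≤ Real.exp (groupConstant * ⌊y⌋₊ ^ 18 : ℕ) := two_pow_le_exp _
      _ ≤ Real.exp (Real.log N) := Real.exp_le_exp.2 (by exact_mod_cast hL)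
      _ = N := Real.exp_log (by linarith)
  have hsize' : 2 ^ (groupConstant * ⌊y⌋₊ ^ 18) ≤ N := by exact_mod_cast hsize
  calc (rothNumberNat N : ℝ) ≤ (1 / 2) ^ ⌊y⌋₊ * (2 * N + 1) :=
        rothNumberNat_le_half_pow_mul (by lia)
    _ ≤ 2 * Real.exp (-(Real.log 2 * y)) * (3 * N) := by
        gcongr
        · exact half_pow_floor_le
        · linarith
    _ = _ := by
        rw [hy, Real.mul_rpow (by positivity) hlogN]
        ring_nf

end Naturals

section Primes

lemma exists_pow_le_mul_exp_rpow {c : ℝ} (hc : 0 < c) {q : ℕ} (hq : q ≠ 0) (k : ℕ) :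
    ∃ M > 0, ∀ x : ℝ, 0 ≤ x → x ^ k ≤ M * Real.exp (c * x ^ (1 / q : ℝ)) := by
  refine ⟨(q * k).factorial / c ^ (q * k), by positivity, fun x hx ↦ ?_⟩
  have hexp := Real.pow_div_factorial_le_exp (c * x ^ (1 / q : ℝ)) (by positivity) (q * k)
  have hpow : (x ^ (1 / q : ℝ)) ^ (q * k) = x ^ k := by
    rw [pow_mul, one_div, Real.rpow_inv_natCast_pow hx hq]
  rw [mul_pow, hpow, div_le_iff₀ (by positivity)] at hexp
  rw [div_mul_eq_mul_div, le_div_iff₀ (by positivity)]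
  linarith

lemma le_primeCounting_mul_log {N : ℕ} (hN : 3 ≤ N) :
    (N : ℝ) ≤ 6 * (Nat.primeCounting N * Real.log N) := by
  have hN' : (3 : ℝ) ≤ N := by exact_mod_cast hN
  have hpi := (div_le_iff₀ (Real.log_pos (by linarith))).1 (Chebyshev.pi_ge N)
  have htangent : Real.log (N + 1) ≤ (N + 1) / 8 - 1 + 3 * Real.log 2 :=
    calc Real.log (N + 1) = Real.log ((N + 1) / 8) + Real.log (2 ^ 3) := by
          rw [← Real.log_mul (by positivity) (by positivity)]
          congr 1
          ring
      _ ≤ (N + 1) / 8 - 1 + 3 * Real.log 2 := by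
          rw [Real.log_pow]
          push_cast
          gcongr
          exact Real.log_le_sub_one_of_pos (by positivity)
  nlinarith [Real.log_two_gt_d9, Real.log_two_lt_d9]

end Primes

end KelleyMeka

open KelleyMeka in
/-- The bound beats every power of `log N`, in particular the density `1 / log N` of the primes. -/
theorem roth_in_primes_general (c : ℝ) :
    ∃ C : ℝ, 0 < C ∧ ∀ N : ℕ, 3 ≤ N → ∀ A ⊆ Icc 1 N, ThreeAPFree (A : Set ℕ) →
      (#A : ℝ) ≤ C * Nat.primeCounting N / Real.log N ^ c := by
  obtain ⟨b, hb, hroth⟩ := exists_rothNumberNat_le_mul_exp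
  obtain ⟨k, hk⟩ := exists_nat_ge c
  obtain ⟨M, hM, hexp⟩ := exists_pow_le_mul_exp_rpow hb (by simp : 18 ≠ 0) (k + 1)
  refine ⟨36 * M, by positivity, fun N hN A hAN hA ↦ ?_⟩
  have hlog : 1 ≤ Real.log N := by
    rw [Real.le_log_iff_exp_le (by positivity)]
    have : (3 : ℝ) ≤ N := by exact_mod_cast hN
    linarith [Real.exp_one_lt_three]
  set x := Real.log N
  set E := Real.exp (b * x ^ (1 / 18 : ℝ))
  have hcard : (#A : ℝ) ≤ 6 * N * E⁻¹ := by
    rw [← Real.exp_neg]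
    refine (hroth N).trans' (Nat.cast_le.2 ?_)
    simpa using addRothNumber_Ico 1 (N + 1) ▸ hA.le_addRothNumber (t := Ico 1 (N + 1)) hAN
  have hpow : x ^ c * x ≤ M * E :=
    calc x ^ c * x ≤ x ^ (k : ℝ) * x := by gcongr
      _ = x ^ (k + 1) := by rw [Real.rpow_natCast, pow_succ]
      _ ≤ M * E := mod_cast hexp x (by linarith)
  rw [le_div_iff₀ (by positivity)]
  calc #A * x ^ c ≤ 6 * (6 * (Nat.primeCounting N * x)) * E⁻¹ * x ^ c := by
        grw [hcard, le_primeCounting_mul_log hN]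
    _ = 36 * Nat.primeCounting N * E⁻¹ * (x ^ c * x) := by ring
    _ ≤ 36 * Nat.primeCounting N * E⁻¹ * (M * E) := by gcongr
    _ = 36 * M * Nat.primeCounting N * (E⁻¹ * E) := by ring
    _ = 36 * M * Nat.primeCounting N := by rw [inv_mul_cancel₀ (Real.exp_ne_zero _), mul_one]

/-- **Progression-free sets of primes are sparse.**
There are absolute constants `c, C > 0` such that any set `A` of primes in `{1, …, N}`
with no non-trivial three-term arithmetic progression satisfies
`|A| ≤ C · π(N) / (log N)^c`, where `π(N)` is the number of primes at most `N`. -/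
theorem roth_in_primes :
    ∃ c C : ℝ, 0 < c ∧ 0 < C ∧
      ∀ N : ℕ, 3 ≤ N → ∀ A : Finset ℕ,
        (∀ a ∈ A, a.Prime) →
        (∀ a ∈ A, 1 ≤ a ∧ a ≤ N) →
        (∀ x ∈ A, ∀ y ∈ A, ∀ z ∈ A, x + y = 2 * z → x = y) →
        (A.card : ℝ) ≤ C * (Nat.primeCounting N : ℝ) / Real.log N ^ c := by
  obtain ⟨C, hC, hbound⟩ := roth_in_primes_general 1
  exact ⟨1, C, one_pos, hC, fun N hN A _ hAN hA ↦ hbound N hN A (fun a ha ↦ mem_Icc.2 (hAN a ha))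
    fun x hx z hz y hy h ↦ by linarith [hA x hx y hy z hz (by lia)]⟩
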